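/- Let G be a finitely generated co-Hopfian virtually free group with Out(G) finite. Then G is ∃-homogeneous: for every n and any two n-tuples u⃗ and v⃗ of elements of G having the same existential type, there exists an automorphism of G mapping u⃗ to v⃗. -/

import Mathlib

open FirstOrder Language

/-- Function symbols of the first-order language of groups:
a binary multiplication, a unary inverse and a constant for the identity. -/
inductive GroupFunc : ℕ → Type
  | mul : GroupFunc 2
  | inv : GroupFunc 1
  | one : GroupFunc 0

/-- The first-order language of groups. -/
def groupLang : FirstOrder.Language :=
  { Functions := GroupFunc
    Relations := fun _ => Empty }

/-- Every group is a structure for the language of groups in the natural way. -/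
instance groupLangStructure (G : Type*) [Group G] : groupLang.Structure G where
  funMap {n} f v :=
    match f with
    | .mul => v 0 * v 1
    | .inv => (v 0)⁻¹
    | .one => 1
  RelMap {n} r _ := r.elim

/-- Existential formulas: iterated existential quantifications of a
quantifier-free formula. -/
inductive IsExistentialQF {α : Type*} : ∀ {n : ℕ}, groupLang.BoundedFormula α n → Prop
  | of_isQF {n : ℕ} {φ : groupLang.BoundedFormula α n} (h : φ.IsQF) : IsExistentialQF φ
  | ex {n : ℕ} {φ : groupLang.BoundedFormula α (n + 1)} (h : IsExistentialQF φ) :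
      IsExistentialQF φ.ex

/-- Universal formulas: iterated universal quantifications of a
quantifier-free formula. -/
inductive IsUniversalQF {α : Type*} : ∀ {n : ℕ}, groupLang.BoundedFormula α n → Prop
  | of_isQF {n : ℕ} {φ : groupLang.BoundedFormula α n} (h : φ.IsQF) : IsUniversalQF φ
  | all {n : ℕ} {φ : groupLang.BoundedFormula α (n + 1)} (h : IsUniversalQF φ) :
      IsUniversalQF φ.all

/-- ∀∃-formulas: iterated universal quantifications of an existential formula. -/
inductive IsAE {α : Type*} : ∀ {n : ℕ}, groupLang.BoundedFormula α n → Prop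
  | of_existential {n : ℕ} {φ : groupLang.BoundedFormula α n} (h : IsExistentialQF φ) : IsAE φ
  | all {n : ℕ} {φ : groupLang.BoundedFormula α (n + 1)} (h : IsAE φ) : IsAE φ.all

/-- A group is virtually free if it has a free subgroup of finite index. -/
def VirtuallyFree (G : Type*) [Group G] : Prop :=
  ∃ H : Subgroup G, H.FiniteIndex ∧ Nonempty (IsFreeGroup H)

/-- A group is co-Hopfian if every injective endomorphism is surjective. -/
def CoHopfian (G : Type*) [Group G] : Prop :=
  ∀ φ : G →* G, Function.Injective φ → Function.Surjective φ

/-- Two homomorphisms `φ, φ' : G → G'` are equivalent if they coincide up to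
conjugation on every finite subgroup of `G`. -/
def HomEquiv {G G' : Type*} [Group G] [Group G'] (φ φ' : G →* G') : Prop :=
  ∀ H : Subgroup G, (H : Set G).Finite →
    ∃ g' : G', ∀ h ∈ H, φ' h = g' * φ h * g'⁻¹

/-- Two groups are ∀∃-equivalent if they satisfy the same ∀∃-sentences. -/
def AEEquivalent (G : Type*) (G' : Type*) [Group G] [Group G'] : Prop :=
  ∀ φ : groupLang.Sentence, IsAE φ → (G ⊨ φ ↔ G' ⊨ φ)

/-- Two groups are ∃-equivalent if they satisfy the same existential sentences. -/
def ExistentiallyEquivalent (G : Type*) (G' : Type*) [Group G] [Group G'] : Prop :=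
  ∀ φ : groupLang.Sentence, IsExistentialQF φ → (G ⊨ φ ↔ G' ⊨ φ)

/-- An endomorphism is rigid-testing: `G` is rigid if every endomorphism
equivalent to the identity is an automorphism. -/
def Rigid (G : Type*) [Group G] : Prop :=
  ∀ φ : G →* G, HomEquiv φ (MonoidHom.id G) → Function.Bijective φ

/-- `Out G` is finite, expressed as: the inner automorphisms form a finite index
subgroup of `Aut G`. -/
def OutFinite (G : Type*) [Group G] : Prop :=
  (MulAut.conj : G →* MulAut G).range.FiniteIndex

/-- Iterated composition of an endomorphism. -/
def homPow {G : Type*} [Group G] (φ : G →* G) : ℕ → (G →* G)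
  | 0 => MonoidHom.id G
  | n + 1 => φ.comp (homPow φ n)

/-- An endomorphism `φ` of `G` is class-permuting if some positive power of `φ`
is equivalent to the identity of `G`. -/
def ClassPermuting {G : Type*} [Group G] (φ : G →* G) : Prop :=
  ∃ n : ℕ, 1 ≤ n ∧ HomEquiv (homPow φ n) (MonoidHom.id G)

/-- A maximal finite subgroup: a finite subgroup maximal with respect to
inclusion among finite subgroups. -/
def MaximalFiniteSubgroup {G : Type*} [Group G] (A : Subgroup G) : Prop :=
  (A : Set G).Finite ∧ ∀ B : Subgroup G, (B : Set G).Finite → A ≤ B → A = B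

/-- Two subgroups are conjugate. -/
def SubgroupConj {G : Type*} [Group G] (A B : Subgroup G) : Prop :=
  ∃ g : G, B = A.map (MulAut.conj g).toMonoidHom

/-- A group is strongly co-Hopfian if there is a finite subset `F` of
`G \ {1}` such that every endomorphism whose kernel misses `F` is an
automorphism. -/
def StronglyCoHopfian (G : Type*) [Group G] : Prop :=
  ∃ F : Finset G, (1 : G) ∉ F ∧
    ∀ φ : G →* G, (∀ f ∈ F, φ f ≠ 1) → Function.Bijective φ

/-- A group is finitely presented. -/
def GroupFinitelyPresented (G : Type*) [Group G] : Prop :=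
  ∃ (n : ℕ) (rels : Finset (FreeGroup (Fin n))),
    Nonempty (PresentedGroup (rels : Set (FreeGroup (Fin n))) ≃* G)


section

open Pointwise

/-- A discrete pocset with a group action without inversions. -/
structure Poc (G E : Type*) [Group G] [PartialOrder E] [MulAction G E] where
  c : E → E
  cc : ∀ a, c (c a) = a
  anti : ∀ {a b}, a ≤ b → c b ≤ c a
  nested : ∀ a b, a ≤ b ∨ b ≤ a ∨ a ≤ c b ∨ c a ≤ b
  nle : ∀ a, ¬ a ≤ c a
  fin : ∀ a b : E, (Set.Icc a b).Finite
  mono : ∀ (g : G) {a b : E}, a ≤ b → g • a ≤ g • b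
  smul_c : ∀ (g : G) a, g • c a = c (g • a)
  noinv : ∀ (g : G) a, g • a ≠ c a

namespace Poc

variable {G E : Type*} [Group G] [PartialOrder E] [MulAction G E] (T : Poc G E)

lemma nle' (a : E) : ¬ T.c a ≤ a := fun h => T.nle (T.c a) (by rwa [T.cc])

lemma ne_c (a : E) : a ≠ T.c a := fun h => T.nle a h.le

lemma c_le {a b : E} (h : T.c a ≤ b) : T.c b ≤ a := by
  have := T.anti h; rwa [T.cc] at this

lemma le_c {a b : E} (h : a ≤ T.c b) : b ≤ T.c a := by
  have := T.anti h; rwa [T.cc] at this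

lemma c_le_c {a b : E} : T.c a ≤ T.c b ↔ b ≤ a :=
  ⟨fun h => by have := T.anti h; rwa [T.cc, T.cc] at this, fun h => T.anti h⟩

lemma c_inj {a b : E} : T.c a = T.c b ↔ a = b :=
  ⟨fun h => by rw [← T.cc a, h, T.cc], fun h => by rw [h]⟩

lemma c_lt_c {a b : E} : T.c a < T.c b ↔ b < a := by
  rw [lt_iff_le_and_ne, lt_iff_le_and_ne, T.c_le_c, ne_eq, ne_eq, T.c_inj, eq_comm]

lemma c_lt {a b : E} : T.c a < b ↔ T.c b < a := by
  conv_lhs => rw [← T.cc b]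
  exact T.c_lt_c

lemma lt_c {a b : E} : a < T.c b ↔ b < T.c a := by
  conv_lhs => rw [← T.cc a]
  exact T.c_lt_c

lemma eq_c {a b : E} : a = T.c b ↔ T.c a = b := by
  constructor
  · rintro rfl; exact T.cc b
  · rintro rfl; exact (T.cc a).symm

lemma excl {a b : E} (h : a ≤ b) (h' : a ≤ T.c b) : False :=
  T.nle a (h.trans (T.le_c h'))

lemma excl' {a b : E} (h : a ≤ b) (h' : T.c a ≤ b) : False :=
  T.nle' b ((T.c_le h').trans h)


lemma smul_le (T : Poc G E) {g : G} {a b : E} : g • a ≤ g • b ↔ a ≤ b :=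
  ⟨fun h => by have := T.mono g⁻¹ h; rwa [inv_smul_smul, inv_smul_smul] at this, T.mono g⟩


lemma smul_lt (T : Poc G E) {g : G} {a b : E} : g • a < g • b ↔ a < b := by
  rw [lt_iff_le_and_ne, lt_iff_le_and_ne, T.smul_le, ne_eq, ne_eq, smul_left_cancel_iff]

/-- The endpoint of `a` lying in `a`. -/
def xi (a : E) : Set E := {b | a ≤ b ∨ T.c b < a}

/-- Orientations. -/
def IsOr (x : Set E) : Prop := (∀ a b, a ∈ x → a ≤ b → b ∈ x) ∧ ∀ b, T.c b ∈ x ↔ b ∉ x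

lemma mem_xi {a b : E} : b ∈ T.xi a ↔ a ≤ b ∨ T.c b < a := Iff.rfl

lemma xi_or (a : E) : T.IsOr (T.xi a) := by
  refine ⟨fun b d hb hd => ?_, fun b => ?_⟩
  · rcases hb with h | h
    · exact Or.inl (h.trans hd)
    · exact Or.inr ((T.anti hd).trans_lt h)
  · simp only [mem_xi, T.cc, not_or]
    constructor
    · rintro (h | h)
      · exact ⟨fun h' => T.excl h' h, fun h' => absurd h (not_le_of_gt h')⟩
      · refine ⟨fun h' => absurd h (not_lt_of_ge h'), fun h' => ?_⟩
        exact T.excl' h.le h'.le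
    · rintro ⟨h1, h2⟩
      rcases T.nested a b with h | h | h | h
      · exact absurd h h1
      · right; exact lt_of_le_of_ne h (fun e => h1 e.ge)
      · left; exact h
      · left
        have := T.c_le h
        rcases this.lt_or_eq with h | h
        · exact absurd h h2
        · exact h.ge

lemma self_mem (a : E) : a ∈ T.xi a := Or.inl le_rfl

lemma IsOr.not_mem {T : Poc G E} {x : Set E} (hx : T.IsOr x) {b : E} : b ∉ x ↔ T.c b ∈ x := (hx.2 b).symm

lemma IsOr.c_not_mem {T : Poc G E} {x : Set E} (hx : T.IsOr x) {b : E} : T.c b ∉ x ↔ b ∈ x := by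
  rw [hx.2 b, not_not]

lemma IsOr.up {T : Poc G E} {x : Set E} (hx : T.IsOr x) {a b : E} (h : a ∈ x) (hab : a ≤ b) : b ∈ x := hx.1 a b h hab

lemma self_not_mem (a : E) : a ∉ T.xi (T.c a) := by
  rw [(T.xi_or _).not_mem]; exact T.self_mem _

lemma cross {a b : E} (h1 : a ∉ T.xi (T.c b)) (h2 : a ∈ T.xi b) : a = b := by
  rw [(T.xi_or _).not_mem, mem_xi, T.cc, T.c_le_c] at h1
  rcases h1 with h1 | h1 <;> rcases h2 with h2 | h2
  · exact le_antisymm h1 h2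
  · exact (T.excl' h1 h2.le).elim
  · exact (T.excl h2 (T.le_c h1.le)).elim
  · exact absurd (h2.trans (T.lt_c.1 h1)) (lt_irrefl _)

lemma IsOr.eq_of_subset {T : Poc G E} {x y : Set E} (hx : T.IsOr x) (hy : T.IsOr y) (h : x ⊆ y) : x = y := by
  refine h.antisymm fun b hb => ?_
  by_contra hbx
  rw [hx.not_mem] at hbx
  exact (hy.2 b).1 (h hbx) hb

/-- Vertices. -/
def IsV (x : Set E) : Prop := ∃ a, x = T.xi a

lemma xi_v (a : E) : T.IsV (T.xi a) := ⟨a, rfl⟩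

lemma IsV.or {T : Poc G E} {x : Set E} (hx : T.IsV x) : T.IsOr x := by
  obtain ⟨a, rfl⟩ := hx; exact T.xi_or a

lemma diff_fin {x y : Set E} (hx : T.IsV x) (hy : T.IsV y) : (y \ x).Finite := by
  obtain ⟨b, rfl⟩ := hx
  obtain ⟨a, rfl⟩ := hy
  have : T.xi a \ T.xi b ⊆ Set.Icc a (T.c b) ∪ Set.Icc a b ∪ T.c '' (Set.Icc b a) ∪ Set.Icc (T.c a) b := by
    rintro d ⟨h1, h2⟩
    rw [(T.xi_or _).not_mem, mem_xi, T.cc] at h2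
    rcases h1 with h1 | h1 <;> rcases h2 with h2 | h2
    · exact Or.inl (Or.inl (Or.inl ⟨h1, T.le_c h2⟩))
    · exact Or.inl (Or.inl (Or.inr ⟨h1, h2.le⟩))
    · exact Or.inl (Or.inr ⟨T.c d, ⟨h2, h1.le⟩, T.cc d⟩)
    · exact Or.inr ⟨T.c_le h1.le, h2.le⟩
  exact Set.Finite.subset ((((T.fin _ _).union (T.fin _ _)).union ((T.fin _ _).image _)).union (T.fin _ _)) this

lemma step {x y : Set E} (hx : T.IsOr x) (hy : T.IsOr y) (hf : (y \ x).Finite) (hne : x ≠ y) :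
    ∃ d, d ∈ y ∧ d ∉ x ∧ T.xi (T.c d) = x ∧ y \ T.xi d ⊂ y \ x := by
  have hn : (y \ x).Nonempty := by
    rw [Set.nonempty_iff_ne_empty]
    intro h
    rw [Set.sdiff_eq_empty] at h
    exact hne (hy.eq_of_subset hx h).symm
  obtain ⟨d, hd⟩ := hf.exists_maximal hn
  have hdy : d ∈ y := hd.1.1
  have hdx : d ∉ x := hd.1.2
  have hxi : T.xi (T.c d) = x := by
    refine (T.xi_or _).eq_of_subset hx ?_
    intro b hb
    rw [mem_xi, T.c_lt_c] at hb
    rcases hb with hb | hb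
    · exact hx.up (hx.not_mem.1 hdx) hb
    · by_contra hbx
      exact absurd (hd.2 ⟨hy.up hdy hb.le, hbx⟩ hb.le) (not_le_of_gt hb)
  refine ⟨d, hdy, hdx, hxi, ?_⟩
  rw [Set.ssubset_iff_of_subset]
  · exact ⟨d, hd.1, fun h => h.2 (T.self_mem d)⟩
  · rintro b ⟨hb, hbd⟩
    refine ⟨hb, fun hbx => ?_⟩
    rw [← hxi] at hbx
    have := T.cross (a := b) (b := T.c d) (by rwa [T.cc]) hbx
    subst this
    exact hy.not_mem.2 hb hdy

lemma path_ind {x y : Set E} (hx : T.IsOr x) (hy : T.IsOr y) (hf : (y \ x).Finite) (p : Set E → Prop)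
    (h0 : p x) (hs : ∀ d, d ∈ y → d ∉ x → p (T.xi (T.c d)) → p (T.xi d)) : p y := by
  suffices H : ∀ n, ∀ z, T.IsOr z → (y \ z).Finite → y \ z ⊆ y \ x → (y \ z).ncard ≤ n → p z → p y from
    H _ x hx hf le_rfl le_rfl h0
  intro n
  induction n with
  | zero =>
    intro z hz hzf hzx hn hp
    have : y \ z = ∅ := by rwa [Nat.le_zero, Set.ncard_eq_zero hzf] at hn
    rw [Set.sdiff_eq_empty] at this
    rwa [hy.eq_of_subset hz this]
  | succ n ih =>
    intro z hz hzf hzx hn hp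
    by_cases hzy : z = y
    · rwa [← hzy]
    obtain ⟨d, hdy, hdz, hxi, hss⟩ := T.step hz hy hzf hzy
    refine ih (T.xi d) (T.xi_or d) (hzf.subset hss.le) (hss.le.trans hzx) ?_ ?_
    · have := Set.ncard_lt_ncard hss hzf; omega
    · exact hs d hdy (hzx ⟨hdy, hdz⟩).2 (by rwa [hxi])

lemma isV_of_fin {x y : Set E} (hx : T.IsV x) (hy : T.IsOr y) (hf : (y \ x).Finite) : T.IsV y :=
  T.path_ind hx.or hy hf T.IsV hx (fun d _ _ _ => T.xi_v d)

lemma xi_eq {a b : E} (h : T.xi a = T.xi b) (hne : a ≠ b) : T.c a < b := by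
  have h1 : a ∈ T.xi b := h ▸ T.self_mem a
  have h2 : b ∈ T.xi a := h ▸ T.self_mem b
  rcases h1 with h1 | h1 <;> rcases h2 with h2 | h2
  · exact absurd (le_antisymm h2 h1) hne
  · exact T.c_lt.1 h2
  · exact h1
  · exact h1

lemma xi_eq_of_covby {a b : E} (h : b < a) (hn : ∀ d, b < d → ¬ d < a) : T.xi (T.c b) = T.xi a := by
  refine (T.xi_or _).eq_of_subset (T.xi_or _) ?_
  intro d hd
  rw [mem_xi, T.c_lt_c] at hd
  rw [mem_xi]
  rcases hd with hd | hd
  · right; exact (T.c_le hd).trans_lt h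
  · rcases T.nested a d with h1 | h1 | h1 | h1
    · exact Or.inl h1
    · rcases h1.lt_or_eq with h2 | h2
      · exact absurd h2 (hn d hd)
      · exact Or.inl h2.ge
    · exact (T.excl h.le (hd.le.trans (T.le_c h1))).elim
    · right
      rcases (T.c_le h1).lt_or_eq with h2 | h2
      · exact h2
      · exfalso
        rw [← h2] at h
        exact T.excl hd.le h.le

lemma smul_xi (g : G) (a : E) : g • T.xi a = T.xi (g • a) := by
  ext b
  rw [Set.mem_smul_set_iff_inv_smul_mem, mem_xi, mem_xi, ← T.smul_c, ← T.smul_le (g := g), ← T.smul_lt (g := g)]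
  simp

lemma IsV.smul {T : Poc G E} {x : Set E} (hx : T.IsV x) (g : G) : T.IsV (g • x) := by
  obtain ⟨a, rfl⟩ := hx
  exact ⟨g • a, T.smul_xi g a⟩

lemma IsOr.smul {T : Poc G E} {x : Set E} (hx : T.IsOr x) (g : G) : T.IsOr (g • x) := by
  constructor
  · intro a b ha hab
    rw [Set.mem_smul_set_iff_inv_smul_mem] at *
    exact hx.up ha (T.mono _ hab)
  · intro b
    rw [Set.mem_smul_set_iff_inv_smul_mem, Set.mem_smul_set_iff_inv_smul_mem, T.smul_c, hx.2]

end Poc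

end

section

open Pointwise

namespace Poc

variable {G E : Type*} [Group G] [PartialOrder E] [MulAction G E] (T : Poc G E)

/-- Values of a cocycle along paths from `v0`. -/
inductive Rch (τ : E → G) (v0 : Set E) : Set E → G → Prop
  | base : Rch τ v0 v0 1
  | step (a : E) (p : G) (h : a ∉ v0) (hp : Rch τ v0 (T.xi (T.c a)) p) : Rch τ v0 (T.xi a) (p * τ a)

lemma rch_exists (τ : E → G) {v0 : Set E} (h0 : T.IsV v0) {x : Set E} (hx : T.IsV x) : ∃ p, T.Rch τ v0 x p := by
  refine T.path_ind h0.or hx.or (T.diff_fin h0 hx) (fun x => ∃ p, T.Rch τ v0 x p) ⟨1, Rch.base⟩ ?_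
  rintro d _ hd ⟨p, hp⟩
  exact ⟨_, Rch.step d p hd hp⟩

lemma rch_unique (τ : E → G) {v0 : Set E} (h0 : T.IsV v0) {x : Set E} {p q : G} (hp : T.Rch τ v0 x p)
    (hq : T.Rch τ v0 x q) : p = q := by
  induction hp generalizing q with
  | base =>
    generalize hy : v0 = y at hq
    cases hq with
    | base => rfl
    | step a p h hp => exact absurd (T.self_mem a) h
  | step a p h hp ih =>
    generalize hy : T.xi a = y at hq
    cases hq with
    | base => exact absurd (by rw [← hy]; exact T.self_mem a) h
    | step b p' h' hp' =>
      by_cases hab : a = b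
      · subst hab
        rw [ih hp']
      · have := T.xi_eq hy hab
        exact absurd (h0.or.up (h0.or.not_mem.1 h) this.le) h'

open Classical in
/-- The cocycle. -/
noncomputable def P (τ : E → G) (v0 x : Set E) : G := if h : ∃ p, T.Rch τ v0 x p then h.choose else 1

lemma P_eq (τ : E → G) {v0 : Set E} (h0 : T.IsV v0) {x : Set E} {p : G} (hp : T.Rch τ v0 x p) : T.P τ v0 x = p := by
  have h : ∃ p, T.Rch τ v0 x p := ⟨p, hp⟩
  unfold P
  rw [dif_pos h]
  exact T.rch_unique τ h0 h.choose_spec hp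

/-- equivariant cocycle data -/
structure Coc (τ : E → G) : Prop where
  inv : ∀ b, τ (T.c b) = (τ b)⁻¹
  eqv : ∀ (g : G) b, τ (g • b) = g * τ b * g⁻¹

lemma P_base (τ : E → G) {v0 : Set E} (h0 : T.IsV v0) : T.P τ v0 v0 = 1 := T.P_eq τ h0 Rch.base

lemma P_step {τ : E → G} (hτ : ∀ b, τ (T.c b) = (τ b)⁻¹) {v0 : Set E} (h0 : T.IsV v0) (a : E) :
    T.P τ v0 (T.xi a) = T.P τ v0 (T.xi (T.c a)) * τ a := by
  have key : ∀ a, a ∉ v0 → T.P τ v0 (T.xi a) = T.P τ v0 (T.xi (T.c a)) * τ a := by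
    intro a h
    obtain ⟨p, hp⟩ := T.rch_exists τ h0 (T.xi_v (T.c a))
    rw [T.P_eq τ h0 hp, T.P_eq τ h0 (Rch.step a p h hp)]
  by_cases h : a ∈ v0
  · have := key (T.c a) (h0.or.c_not_mem.2 h)
    rw [T.cc, hτ] at this
    rw [this]; group
  · exact key a h

/-- if no nontrivial edge separates then P agrees -/
lemma P_const {τ : E → G} (hτ : ∀ b, τ (T.c b) = (τ b)⁻¹) {v0 : Set E} (h0 : T.IsV v0) {x y : Set E}
    (hx : T.IsV x) (hy : T.IsV y) (h : ∀ d, d ∈ y → d ∉ x → τ d = 1) : T.P τ v0 x = T.P τ v0 y := by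
  refine T.path_ind hx.or hy.or (T.diff_fin hx hy) (fun z => T.P τ v0 x = T.P τ v0 z) rfl ?_
  intro d h1 h2 h3
  rw [T.P_step hτ h0 d, h d h1 h2, mul_one, h3]

variable {T}

lemma Coc.P_smul {τ : E → G} (hτ : T.Coc τ) {v0 : Set E} (h0 : T.IsV v0) (g : G) {x : Set E} (hx : T.IsV x) :
    T.P τ v0 (g • x) = T.P τ v0 (g • v0) * (g * T.P τ v0 x * g⁻¹) := by
  refine T.path_ind h0.or hx.or (T.diff_fin h0 hx)
    (fun x => T.P τ v0 (g • x) = T.P τ v0 (g • v0) * (g * T.P τ v0 x * g⁻¹)) ?_ ?_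
  · rw [T.P_base τ h0]; group
  · intro d _ _ h
    rw [T.smul_xi, T.P_step hτ.inv h0, ← T.smul_c, ← T.smul_xi, h, hτ.eqv, T.P_step hτ.inv h0 d]
    group

/-- the twist endomorphism -/
noncomputable def Coc.phi {τ : E → G} (hτ : T.Coc τ) {v0 : Set E} (h0 : T.IsV v0) : G →* G where
  toFun g := T.P τ v0 (g • v0) * g
  map_one' := by rw [one_smul, T.P_base τ h0, one_mul]
  map_mul' g h := by
    rw [mul_smul, hτ.P_smul h0 g (h0.smul h)]; group

lemma Coc.phi_apply {τ : E → G} (hτ : T.Coc τ) {v0 : Set E} (h0 : T.IsV v0) (g : G) :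
   hτ.phi h0 g = T.P τ v0 (g • v0) * g := rfl

lemma Coc.F_smul {τ : E → G} (hτ : T.Coc τ) {v0 : Set E} (h0 : T.IsV v0) (g : G) {x : Set E} (hx : T.IsV x) :
    T.P τ v0 (g • x) • (g • x) = hτ.phi h0 g • (T.P τ v0 x • x) := by
  rw [hτ.P_smul h0 g hx, hτ.phi_apply, smul_smul, smul_smul]
  congr 1; group

variable (T)

open Classical in
/-- the twist cocycle by `z` along the orbit of `a0`. -/
noncomputable def tau (a0 : E) (z : G) (d : E) : G :=
  if h : ∃ g : G, g • a0 = d then h.choose * z * h.choose⁻¹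
  else if h : ∃ g : G, g • T.c a0 = d then h.choose * z⁻¹ * h.choose⁻¹ else 1

lemma tau_one {a0 : E} {z : G} {d : E} (h1 : ∀ g : G, g • a0 ≠ d) (h2 : ∀ g : G, g • T.c a0 ≠ d) :
    T.tau a0 z d = 1 := by
  unfold tau
  rw [dif_neg (by push Not; exact h1), dif_neg (by push Not; exact h2)]

lemma conj_aux {b : E} {z g h : G} (hz : ∀ k : G, k • b = b → k * z = z * k) (e : g • b = h • b) :
    g * z * g⁻¹ = h * z * h⁻¹ := by
  have h1 : (h⁻¹ * g) • b = b := by rw [mul_smul, e, inv_smul_smul]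
  have := hz _ h1
  calc g * z * g⁻¹ = h * (h⁻¹ * g * z) * g⁻¹ := by group
    _ = h * (z * (h⁻¹ * g)) * g⁻¹ := by rw [this]
    _ = _ := by group

lemma tau_smul {a0 : E} {z : G} (hz : ∀ k : G, k • a0 = a0 → k * z = z * k) (g : G) :
    T.tau a0 z (g • a0) = g * z * g⁻¹ := by
  have h : ∃ k : G, k • a0 = g • a0 := ⟨g, rfl⟩
  unfold tau
  rw [dif_pos h]
  exact conj_aux hz h.choose_spec

lemma tau_smul_c {a0 : E} {z : G} (hz : ∀ k : G, k • a0 = a0 → k * z = z * k) (g : G) :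
    T.tau a0 z (g • T.c a0) = g * z⁻¹ * g⁻¹ := by
  have h : ∃ k : G, k • T.c a0 = g • T.c a0 := ⟨g, rfl⟩
  have hn : ¬ ∃ k : G, k • a0 = g • T.c a0 := by
    rintro ⟨k, hk⟩
    apply T.noinv (g⁻¹ * k) a0
    rw [mul_smul, hk, inv_smul_smul]
  unfold tau
  rw [dif_neg hn, dif_pos h]
  refine conj_aux ?_ h.choose_spec
  intro k hk
  have : k • a0 = a0 := by rwa [T.smul_c, T.c_inj] at hk
  have := hz k this
  rw [eq_inv_mul_iff_mul_eq, ← mul_assoc, ← this, mul_inv_cancel_right]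

lemma tau_coc {a0 : E} {z : G} (hz : ∀ k : G, k • a0 = a0 → k * z = z * k) : T.Coc (T.tau a0 z) := by
  constructor
  · intro b
    by_cases h1 : ∃ g : G, g • a0 = b
    · obtain ⟨g, rfl⟩ := h1
      rw [← T.smul_c, T.tau_smul hz, T.tau_smul_c hz]; group
    · by_cases h2 : ∃ g : G, g • T.c a0 = b
      · obtain ⟨g, rfl⟩ := h2
        rw [← T.smul_c, T.cc, T.tau_smul hz, T.tau_smul_c hz]; group
      · push Not at h1 h2
        rw [T.tau_one h1 h2, T.tau_one, inv_one]
        · intro g hg; apply h2 g; rw [T.smul_c, hg, T.cc]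
        · intro g hg; apply h1 g; rwa [T.smul_c, T.c_inj] at hg
  · intro k b
    by_cases h1 : ∃ g : G, g • a0 = b
    · obtain ⟨g, rfl⟩ := h1
      rw [smul_smul, T.tau_smul hz, T.tau_smul hz]; group
    · by_cases h2 : ∃ g : G, g • T.c a0 = b
      · obtain ⟨g, rfl⟩ := h2
        rw [smul_smul, T.tau_smul_c hz, T.tau_smul_c hz]; group
      · push Not at h1 h2
        rw [T.tau_one h1 h2, T.tau_one]
        · group
        · intro g hg; apply h1 (k⁻¹ * g); rw [mul_smul, hg, inv_smul_smul]
        · intro g hg; apply h2 (k⁻¹ * g); rw [mul_smul, hg, inv_smul_smul]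

lemma tau_le {a0 : E} {z : G} (hz : ∀ k : G, k • a0 = a0 → k * z = z * k) (hlt : z • a0 < a0) (d : E) :
    T.tau a0 z d • d ≤ d := by
  by_cases h1 : ∃ g : G, g • a0 = d
  · obtain ⟨g, rfl⟩ := h1
    rw [T.tau_smul hz, smul_smul, inv_mul_cancel_right, mul_smul, T.smul_le]
    exact hlt.le
  · by_cases h2 : ∃ g : G, g • T.c a0 = d
    · obtain ⟨g, rfl⟩ := h2
      rw [T.tau_smul_c hz, smul_smul, inv_mul_cancel_right, mul_smul, T.smul_le, T.smul_c, T.c_le_c,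
        ← T.smul_le (g := z), smul_inv_smul]
      exact hlt.le
    · push Not at h1 h2
      rw [T.tau_one h1 h2, one_smul]

/-- Expansion claim. -/
lemma expand {τ : E → G} (hτ : T.Coc τ) (hle : ∀ d, τ d • d ≤ d) {v0 : Set E} (h0 : T.IsV v0)
    {u : Set E} (hu : T.IsV u) (d : E) (hd : d ∈ u) :
    T.P τ v0 (T.xi d) • d ∈ T.P τ v0 u • u := by
  suffices H : ∀ n, ∀ d, d ∈ u → (u \ T.xi d).ncard ≤ n → T.P τ v0 (T.xi d) • d ∈ T.P τ v0 u • u from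
    H _ d hd le_rfl
  intro n
  have base : ∀ d, d ∈ u → T.xi d = u → T.P τ v0 (T.xi d) • d ∈ T.P τ v0 u • u := by
    intro d hd h
    rw [h]; exact Set.smul_mem_smul_set hd
  induction n with
  | zero =>
    intro d hd hn
    have hf := T.diff_fin (T.xi_v d) hu
    have : u \ T.xi d = ∅ := by rwa [Nat.le_zero, Set.ncard_eq_zero hf] at hn
    rw [Set.sdiff_eq_empty] at this
    exact base d hd (hu.or.eq_of_subset (T.xi_or d) this).symm
  | succ n ih =>
    intro d hd hn
    by_cases h : T.xi d = u
    · exact base d hd h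
    have hf := T.diff_fin (T.xi_v d) hu
    obtain ⟨d', h1, h2, h3, h4⟩ := T.step (T.xi_or d) hu.or hf h
    have hlt : d' < d := by
      rw [(T.xi_or d).not_mem, mem_xi, T.cc] at h2
      rcases h2 with h2 | h2
      · exact absurd h1 (hu.or.not_mem.2 (hu.or.up hd h2))
      · exact h2
    have key := ih d' h1 (by have := Set.ncard_lt_ncard h4 hf; omega)
    rw [T.P_step hτ.inv h0 d', h3, mul_smul] at key
    exact (hu.or.smul _).up key (T.mono _ ((hle d').trans hlt.le))

/-- The `α`-lemma. -/
theorem alpha (T : Poc G E) (hco : ∀ φ : G →* G, Function.Injective φ → Function.Surjective φ) {a0 : E} {z : G}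
    (hz : ∀ k : G, k • a0 = a0 → k * z = z * k) : ¬ z • a0 < a0 := by
  intro hlt
  have hτ := T.tau_coc hz
  have hle := T.tau_le hz hlt
  set τ := T.tau a0 z with hτdef
  set v0 := T.xi (T.c a0) with hv0
  have h0 : T.IsV v0 := T.xi_v _
  have hinj : ∀ x y, T.IsV x → T.IsV y → T.P τ v0 x • x = T.P τ v0 y • y → x = y := by
    intro x y hx hy hxy
    by_contra hne
    obtain ⟨d, h1, h2, -⟩ := T.step hx.or hy.or (T.diff_fin hx hy) hne
    have k1 := T.expand hτ hle h0 hy d h1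
    have k2 := T.expand hτ hle h0 hx (T.c d) (hx.or.not_mem.1 h2)
    rw [hxy] at k2
    rw [T.P_step hτ.inv h0 d, mul_smul] at k1
    have k3 := (hy.or.smul _).up k1 (T.mono _ (hle d))
    rw [T.smul_c] at k2
    exact (hy.or.smul _).not_mem.2 k2 k3
  have hv0fix : ∀ g : G, g • v0 = v0 → hτ.phi h0 g = g := by
    intro g hg
    rw [hτ.phi_apply, hg, T.P_base τ h0, one_mul]
  have hφi : Function.Injective (hτ.phi h0) := by
    rw [injective_iff_map_eq_one]
    intro g hg
    have := hτ.F_smul h0 g h0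
    rw [hg, one_smul] at this
    have := hinj _ _ (h0.smul g) h0 this
    rw [← hv0fix g this, hg]
  obtain ⟨g, hg⟩ := hco _ hφi z
  have hP1 : T.P τ v0 (T.xi a0) = z := by
    rw [T.P_step hτ.inv h0 a0, ← hv0, T.P_base τ h0, one_mul]
    have := T.tau_smul hz 1
    rwa [one_smul, one_mul, inv_one, mul_one] at this
  have hA : ∀ u, T.IsV u → a0 ∈ u → z • a0 ∈ T.P τ v0 u • u := by
    intro u hu h
    have := T.expand hτ hle h0 hu a0 h
    rwa [hP1] at this
  have hB : ∀ u, T.IsV u → a0 ∉ u → a0 ∉ T.P τ v0 u • u := by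
    intro u hu h
    have := T.expand hτ hle h0 hu (T.c a0) (hu.or.not_mem.1 h)
    rw [← hv0, T.P_base τ h0, one_smul] at this
    exact (hu.or.smul _).not_mem.2 this
  have hiff : ∀ u, T.IsV u → (a0 ∈ g • u ↔ a0 ∈ u) := by
    intro u hu
    have hF := hτ.F_smul h0 g hu
    rw [hg] at hF
    constructor
    · intro h
      have := hA _ (hu.smul g) h
      rw [hF, Set.smul_mem_smul_set_iff] at this
      by_contra hn
      exact hB u hu hn this
    · intro h
      by_contra hn
      have h1 := hB _ (hu.smul g) hn
      have h2 := hA u hu h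
      apply h1
      rw [hF, Set.mem_smul_set_iff_inv_smul_mem]
      refine (hu.or.smul _).up h2 (hlt.le.trans ?_)
      rw [← T.smul_le (g := z), smul_inv_smul]; exact hlt.le
  have hfix : g⁻¹ • a0 = a0 := by
    apply T.cross
    · rw [← Set.mem_smul_set_iff_inv_smul_mem, hiff _ h0]; exact T.self_not_mem a0
    · rw [← Set.mem_smul_set_iff_inv_smul_mem, hiff _ (T.xi_v _)]; exact T.self_mem a0
  have hga : g • a0 = a0 := by rw [← hfix, smul_inv_smul, hfix]
  have : g • v0 = v0 := by rw [hv0, T.smul_xi, T.smul_c, hga]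
  have := hv0fix g this
  rw [hg] at this
  subst this
  rw [hga] at hlt
  exact lt_irrefl _ hlt

end Poc

end

section

open Pointwise

namespace Poc

variable {G E : Type*} [Group G] [PartialOrder E] [MulAction G E] (T : Poc G E)

/-- Further hypotheses on the action. -/
structure Good : Prop where
  stab : ∀ a : E, (MulAction.stabilizer G a : Set G).Finite
  orb : ∃ S : Finset E, ∀ a, ∃ g : G, ∃ s ∈ S, a = g • s
  compl : ∀ h : G, ¬ IsOfFinOrder h → ∃ b : E, ∃ n : ℕ, 1 ≤ n ∧ h ^ n • b < b
  minl : ∀ a, ∃ (t : G) (b : E) (n : ℕ), 1 ≤ n ∧ t ^ n • b < b ∧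
    ∀ b', (∃ N : ℕ, 1 ≤ N ∧ (t ^ N • b' < b' ∨ b' < t ^ N • b')) → ∃ g : G, b' = g • a ∨ b' = g • T.c a
  tf : ∃ H : Subgroup G, H.FiniteIndex ∧ ∀ h ∈ H, h ≠ 1 → ¬ IsOfFinOrder h

lemma strictAnti (T : Poc G E) {h : G} {b : E} (hb : h • b < b) : StrictAnti (fun n : ℕ => h ^ n • b) := by
  refine strictAnti_nat_of_succ_lt fun n => ?_
  rw [pow_succ, mul_smul, T.smul_lt]; exact hb

lemma strictMono (T : Poc G E) {h : G} {b : E} (hb : h • b < b) : StrictMono (fun n : ℕ => h⁻¹ ^ n • b) := by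
  refine strictMono_nat_of_lt_succ fun n => ?_
  rw [pow_succ, mul_smul, T.smul_lt, ← T.smul_lt (g := h), smul_inv_smul]; exact hb

lemma no_low (T : Poc G E) {h : G} {b x : E} (hb : h • b < b) (hx : ∀ n : ℕ, x ≤ h ^ n • b) : False := by
  refine Set.infinite_of_injective_forall_mem (T.strictAnti hb).injective (s := Set.Icc x b) ?_ (T.fin x b)
  intro n
  refine ⟨hx n, ?_⟩
  have := (T.strictAnti hb).antitone (Nat.zero_le n)
  simpa using this

lemma no_up (T : Poc G E) {h : G} {b x : E} (hb : h • b < b) (hx : ∀ n : ℕ, h⁻¹ ^ n • b ≤ x) : False := by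
  refine Set.infinite_of_injective_forall_mem (T.strictMono hb).injective (s := Set.Icc b x) ?_ (T.fin b x)
  intro n
  refine ⟨?_, hx n⟩
  have := (T.strictMono hb).monotone (Nat.zero_le n)
  simpa using this

lemma pow_le (T : Poc G E) {h : G} {b : E} (hb : h • b < b) (n : ℕ) : h ^ n • b ≤ b := by
  have := (T.strictAnti hb).antitone (Nat.zero_le n)
  simpa using this

lemma pow_lt (T : Poc G E) {h : G} {b : E} (hb : h • b < b) {n : ℕ} (hn : 1 ≤ n) : h ^ n • b < b := by
  have := (T.strictAnti hb) (show 0 < n by omega)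
  simpa using this

lemma inv_c_lt {h : G} {b : E} (hb : h • b < b) : h⁻¹ • T.c b < T.c b := by
  rw [T.smul_c, T.c_lt_c, ← T.smul_lt (g := h), smul_inv_smul]; exact hb

/-- Edges translated by a commuting element are comparable with the original edge. -/
lemma comm_comp (T : Poc G E) {h g : G} {b : E} (hb : h • b < b) (hg : g * h = h * g) : g • b ≤ b ∨ b ≤ g • b := by
  have hgb : h • (g • b) < g • b := by
    rw [smul_smul, ← hg, mul_smul, T.smul_lt]; exact hb
  rcases T.nested (g • b) b with h1 | h1 | h1 | h1
  · exact Or.inl h1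
  · exact Or.inr h1
  · exfalso
    refine T.no_up hgb (x := T.c b) fun n => ?_
    have h2 := T.mono (h⁻¹ ^ n) h1
    refine h2.trans ?_
    exact T.pow_le (T.inv_c_lt hb) n
  · exfalso
    refine T.no_low hb (x := T.c (g • b)) fun n => ?_
    have h2 := T.mono (h ^ n) h1
    refine le_trans ?_ h2
    rw [T.smul_c, T.c_le_c]
    exact T.pow_le hgb n

lemma eq_of_le_of_fin (T : Poc G E) {g : G} {b : E} (hf : IsOfFinOrder g) (h : g • b ≤ b) : g • b = b := by
  by_contra hne
  obtain ⟨n, hn, hgn⟩ := isOfFinOrder_iff_pow_eq_one.1 hf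
  have := T.pow_lt (lt_of_le_of_ne h hne) (n := n) hn
  rw [hgn, one_smul] at this
  exact lt_irrefl _ this

lemma eq_of_ge_of_fin (T : Poc G E) {g : G} {b : E} (hf : IsOfFinOrder g) (h : b ≤ g • b) : g • b = b := by
  have : g⁻¹ • b = b := T.eq_of_le_of_fin hf.inv (by rw [← T.smul_le (g := g), smul_inv_smul]; exact h)
  rw [← this, smul_inv_smul, this]

lemma comm_fix (T : Poc G E) {h g : G} {b : E} (hb : h • b < b) (hg : g * h = h * g) (hf : IsOfFinOrder g) : g • b = b := by
  rcases T.comm_comp hb hg with h1 | h1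
  · exact T.eq_of_le_of_fin hf h1
  · exact T.eq_of_ge_of_fin hf h1

/-- The end of `h` (with axis through `b`) lies in `d`. -/
def En (h : G) (b d : E) : Prop := ∃ k : ℕ, h ^ k • b ≤ d

lemma En.mono {h : G} {b d d' : E} (H : En h b d) (hd : d ≤ d') : En h b d' := by
  obtain ⟨k, hk⟩ := H; exact ⟨k, hk.trans hd⟩

variable {T}

lemma En.later (T : Poc G E) {h : G} {b d : E} (hb : h • b < b) {k m : ℕ} (H : h ^ k • b ≤ d) (hkm : k ≤ m) :
    h ^ m • b ≤ d := ((T.strictAnti hb).antitone hkm).trans H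

variable (T)

lemma en_excl {h : G} {b d : E} (hb : h • b < b) (h1 : En h b d) (h2 : En h b (T.c d)) : False := by
  obtain ⟨k, hk⟩ := h1
  obtain ⟨l, hl⟩ := h2
  exact T.excl (En.later T hb hk (le_max_left k l)) (En.later T hb hl (le_max_right k l))

lemma en_or {h : G} {b : E} (hb : h • b < b) (d : E) : En h b d ∨ En h b (T.c d) := by
  by_contra hn
  push Not at hn
  obtain ⟨h1, h2⟩ := hn
  have key : ∀ k : ℕ, d ≤ h ^ k • b ∨ T.c d ≤ h ^ k • b := by
    intro k
    rcases T.nested d (h ^ k • b) with h | h | h | h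
    · exact Or.inl h
    · exact absurd ⟨k, h⟩ h1
    · exact absurd ⟨k, T.le_c h⟩ h2
    · exact Or.inr h
  by_cases h3 : ∀ k : ℕ, d ≤ h ^ k • b
  · exact T.no_low hb h3
  · push Not at h3
    obtain ⟨k, hk⟩ := h3
    refine T.no_low hb (x := T.c d) fun n => ?_
    have : T.c d ≤ h ^ (max n k) • b := by
      rcases key (max n k) with h4 | h4
      · exact absurd (h4.trans ((T.strictAnti hb).antitone (le_max_right n k))) hk
      · exact h4
    exact this.trans ((T.strictAnti hb).antitone (le_max_left n k))

lemma en_smul (T : Poc G E) {h : G} {b d : E} (hb : h • b < b) : En h b (h • d) ↔ En h b d := by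
  constructor
  · rintro ⟨k, hk⟩
    refine ⟨k, ?_⟩
    have := En.later T hb hk (Nat.le_succ k)
    rwa [pow_succ', mul_smul, T.smul_le] at this
  · rintro ⟨k, hk⟩
    exact ⟨k + 1, by rw [pow_succ', mul_smul]; exact T.mono h hk⟩

/-- an edge separating the two ends is on the axis -/
lemma axis {h : G} {b d : E} (hb : h • b < b) (h1 : En h b d) (h2 : En h⁻¹ (T.c b) (T.c d)) :
    ∃ N : ℕ, 1 ≤ N ∧ h ^ N • d < d := by
  obtain ⟨k, hk⟩ := h1
  obtain ⟨l, hl⟩ := h2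
  rw [T.smul_c, T.c_le_c] at hl
  refine ⟨k + 1 + l, by omega, ?_⟩
  calc h ^ (k + 1 + l) • d ≤ h ^ (k + 1 + l) • (h⁻¹ ^ l • b) := T.mono _ hl
    _ = h ^ (k + 1) • b := by rw [smul_smul, pow_add h (k + 1) l, inv_pow, mul_inv_cancel_right]
    _ < h ^ k • b := T.strictAnti hb (Nat.lt_succ_self k)
    _ ≤ d := hk

lemma pow_comm_centr {K : Set G} {h : G} (hz : ∀ k ∈ K, k * h = h * k) (N : ℕ) : ∀ k ∈ K, k * h ^ N = h ^ N * k := by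
  intro k hk
  exact ((show Commute k h from hz k hk).pow_right N)

lemma stab_c (g : G) (a : E) : g • T.c a = T.c a ↔ g • a = a := by rw [T.smul_c, T.c_inj]

lemma conj_stab_card (x : G) (a : E) (k : G) : k • (x • a) = x • a ↔ (x⁻¹ * k * x) • a = a := by
  rw [mul_smul, mul_smul, inv_smul_eq_iff]

lemma surjOn_of_fin {α : Type*} {S : Set α} (hf : S.Finite) {f : α → α} (hm : Set.MapsTo f S S)
    (hi : Set.InjOn f S) : Set.SurjOn f S S := by
  have : f '' S = S := Set.eq_of_subset_of_ncard_le hm.image_subset (by rw [Set.ncard_image_of_injOn hi]) hf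
  exact this.ge

/-- If `G_a` is contained in the stabilizer of a translate of `a`, they are equal. -/
lemma stab_eq {a : E} (hf : (MulAction.stabilizer G a : Set G).Finite) {x : G}
    (h : ∀ g : G, g • a = a → g • (x • a) = x • a) : ∀ g : G, g • (x • a) = x • a → g • a = a := by
  intro g hg
  set S : Set G := (MulAction.stabilizer G a : Set G) with hS
  have hmap : Set.MapsTo (fun k => x⁻¹ * k * x) S S := by
    intro k hk
    exact (conj_stab_card x a k).1 (h k hk)
  have hinj : Set.InjOn (fun k => x⁻¹ * k * x) S := by
    intro k _ l _ hkl
    simpa using hkl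
  have hsurj := surjOn_of_fin hf hmap hinj
  obtain ⟨k, hk, hke⟩ := hsurj (show x⁻¹ * g * x ∈ S from (conj_stab_card x a g).1 hg)
  have : k = g := by simpa using hke
  rw [← this]; exact hk

/-- `d` is a translate of `a` or `c a`. -/
def PM (a d : E) : Prop := ∃ g : G, d = g • a ∨ d = g • T.c a

lemma PM.smul {T : Poc G E} {a d : E} (h : T.PM a d) (g : G) : T.PM a (g • d) := by
  obtain ⟨k, rfl | rfl⟩ := h
  · exact ⟨g * k, Or.inl (by rw [mul_smul])⟩
  · exact ⟨g * k, Or.inr (by rw [mul_smul])⟩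

lemma PM.c {T : Poc G E} {a d : E} (h : T.PM a d) : T.PM a (T.c d) := by
  obtain ⟨k, rfl | rfl⟩ := h
  · exact ⟨k, Or.inr (by rw [T.smul_c])⟩
  · exact ⟨k, Or.inl (by rw [← T.smul_c, T.cc])⟩

lemma PM.refl (a : E) : T.PM a a := ⟨1, Or.inl (one_smul _ _).symm⟩

lemma PM.trans {T : Poc G E} {a b d : E} (h : T.PM a b) (h' : T.PM b d) : T.PM a d := by
  obtain ⟨k, rfl | rfl⟩ := h'
  · exact h.smul k
  · exact h.c.smul k

lemma PM.symm {T : Poc G E} {a b : E} (h : T.PM a b) : T.PM b a := by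
  obtain ⟨k, rfl | rfl⟩ := h
  · exact ⟨k⁻¹, Or.inl (by rw [inv_smul_smul])⟩
  · exact ⟨k⁻¹, Or.inr (by rw [← T.smul_c, inv_smul_smul, T.cc])⟩

lemma stab_eq_pm {a d : E} (hf : (MulAction.stabilizer G a : Set G).Finite) (hd : T.PM a d)
    (h : ∀ g : G, g • a = a → g • d = d) : ∀ g : G, g • d = d → g • a = a := by
  obtain ⟨x, rfl | rfl⟩ := hd
  · exact stab_eq hf h
  · simp only [T.smul_c, T.c_inj] at h ⊢
    exact stab_eq hf h

lemma tau_eq_one {a d : E} (z : G) (h : ¬ T.PM a d) : T.tau a z d = 1 := by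
  apply T.tau_one
  · intro g hg; exact h ⟨g, Or.inl hg.symm⟩
  · intro g hg; exact h ⟨g, Or.inr hg.symm⟩

end Poc

end

section

open Pointwise

namespace Poc

variable {G E : Type*} [Group G] [PartialOrder E] [MulAction G E] (T : Poc G E)

lemma fin_order_of_mem {K : Subgroup G} (hf : (K : Set G).Finite) {k : G} (hk : k ∈ K) : IsOfFinOrder k := by
  have : Finite K := hf
  have := isOfFinOrder_of_finite (⟨k, hk⟩ : K)
  exact K.subtype.isOfFinOrder this

/-- commensurability of commuting elements -/
lemma root (T : Poc G E) {h g : G} {b : E} (hb : h • b < b) (hg : g * h = h * g)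
    (hf : (MulAction.stabilizer G b : Set G).Finite) : ∃ N : ℕ, 1 ≤ N ∧ ∃ j : ℤ, g ^ N = h ^ j := by
  have hgh : Commute g h := hg
  have key : ∀ i : ℕ, ∃ j : ℤ, h ^ j • g ^ i • b ∈ Set.Icc (h • b) b := by
    intro i
    have hcomm : ∀ j : ℤ, h ^ j • g ^ i • b ≤ b ∨ b ≤ h ^ j • g ^ i • b := by
      intro j
      rw [smul_smul]
      refine T.comm_comp hb ?_
      exact ((Commute.refl h).zpow_left j).mul_left (hgh.pow_left i)
    have hb' : h • (g ^ i • b) < g ^ i • b := by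
      rw [smul_smul, ← (hgh.pow_left i).eq, mul_smul, T.smul_lt]; exact hb
    have h1 : ∃ j : ℤ, h ^ j • g ^ i • b ≤ b := by
      by_contra hn
      push Not at hn
      refine T.no_low hb' (x := b) fun n => ?_
      rcases hcomm n with h2 | h2
      · exact absurd h2 (hn n)
      · exact_mod_cast h2
    have h2 : ∃ B : ℤ, ∀ j : ℤ, h ^ j • g ^ i • b ≤ b → B ≤ j := by
      by_contra hn
      push Not at hn
      refine T.no_up hb' (x := b) fun n => ?_
      obtain ⟨j, hj, hjn⟩ := hn (-(n : ℤ))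
      refine le_trans ?_ hj
      obtain ⟨m, hm⟩ : ∃ m : ℕ, (m : ℤ) = -(n : ℤ) - j := ⟨((-(n : ℤ) - j)).toNat, by omega⟩
      have h3 := (T.strictMono hb').monotone (show n ≤ n + m by omega)
      have e : h ^ j = h⁻¹ ^ (n + m) := by
        rw [inv_pow, ← zpow_natCast, ← zpow_neg]; congr 1; push_cast; omega
      rw [e]; exact h3
    obtain ⟨B, hB⟩ := h2
    obtain ⟨j, hj, hjl⟩ := Int.exists_least_of_bdd (P := fun j : ℤ => h ^ j • g ^ i • b ≤ b) ⟨B, hB⟩ h1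
    refine ⟨j, ?_, hj⟩
    rcases hcomm (j - 1) with h3 | h3
    · have := hjl _ h3; omega
    · have := T.mono h h3
      rw [smul_smul h, ← zpow_one_add, add_sub_cancel] at this
      exact this
  choose j hj using key
  obtain ⟨i, -, i', -, hii, he⟩ := Set.infinite_univ.exists_ne_map_eq_of_mapsTo
    (f := fun i : ℕ => h ^ j i • g ^ i • b) (t := Set.Icc (h • b) b) (fun i _ => hj i) (T.fin _ _)
  have main : ∀ i i' : ℕ, i < i' → h ^ j i • g ^ i • b = h ^ j i' • g ^ i' • b →
      ∃ N : ℕ, 1 ≤ N ∧ ∃ j : ℤ, g ^ N = h ^ j := by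
    intro i i' hii he
    have hs : (g ^ (i' - i) * h ^ (j i' - j i)) • b = b := by
      have e1 : g ^ i' = g ^ i * g ^ (i' - i) := by rw [← pow_add]; congr 1; omega
      have e2 : h ^ j i' = h ^ j i * h ^ (j i' - j i) := by rw [← zpow_add]; congr 1; omega
      have c1 : Commute (h ^ (j i' - j i)) (g ^ i) := (hgh.symm.zpow_left _).pow_right i
      have c2 : Commute (h ^ (j i' - j i)) (g ^ (i' - i)) := (hgh.symm.zpow_left _).pow_right _
      rw [e1, e2, smul_smul, smul_smul] at he
      have e3 : h ^ j i * h ^ (j i' - j i) * (g ^ i * g ^ (i' - i))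
          = (h ^ j i * g ^ i) * (g ^ (i' - i) * h ^ (j i' - j i)) := by
        rw [mul_assoc, ← mul_assoc (h ^ (j i' - j i)), c1.eq, mul_assoc (g ^ i), c2.eq]
        group
      rw [e3, mul_smul _ (g ^ (i' - i) * h ^ (j i' - j i)), smul_left_cancel_iff] at he
      exact he.symm
    obtain ⟨r, hr, hrr⟩ := isOfFinOrder_iff_pow_eq_one.1 (fin_order_of_mem hf (show _ ∈ MulAction.stabilizer G b from hs))
    have c2 : Commute (g ^ (i' - i)) (h ^ (j i' - j i)) := (hgh.zpow_right _).pow_left _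
    rw [c2.mul_pow, ← pow_mul, ← zpow_natCast, ← zpow_natCast, ← zpow_mul] at hrr
    refine ⟨(i' - i) * r, ?_, -((j i' - j i) * r), ?_⟩
    · have : 1 ≤ i' - i := by omega
      exact Nat.mul_pos this hr
    · rw [zpow_neg, ← zpow_natCast]
      exact eq_inv_of_mul_eq_one_left hrr
  rcases lt_or_gt_of_ne hii with h1 | h1
  · exact main i i' h1 he
  · exact main i' i h1 he.symm

/-- Elements fixing a vertex have finite order. -/
lemma fin_order_of_vertex (hG : T.Good) {x : Set E} (hx : T.IsV x) {t : G} (ht : t • x = x) : IsOfFinOrder t := by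
  by_contra hn
  obtain ⟨b, n, hn1, hb⟩ := hG.compl t hn
  have main : ∀ (s : G) (b : E), s • x = x → s • b < b → b ∈ x → False := by
    intro s b hs hb hbx
    obtain ⟨e, rfl⟩ := hx
    have hmem : ∀ i : ℕ, s ^ i • b ∈ T.xi e := by
      intro i
      have : s ^ i • T.xi e = T.xi e := by
        have : s ∈ MulAction.stabilizer G (T.xi e) := hs
        exact pow_mem this i
      rw [← this]; exact Set.smul_mem_smul_set hbx
    refine Set.infinite_of_injective_forall_mem (T.strictAnti hb).injective
      (s := Set.Icc e b ∪ T.c '' (Set.Icc (T.c b) e)) ?_ ((T.fin _ _).union ((T.fin _ _).image _))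
    intro i
    rcases hmem i with h | h
    · exact Or.inl ⟨h, T.pow_le hb i⟩
    · exact Or.inr ⟨T.c (s ^ i • b), ⟨T.c_le_c.2 (T.pow_le hb i), h.le⟩, T.cc _⟩
  have hs : t ^ n • x = x := by
    have : t ∈ MulAction.stabilizer G x := ht
    exact pow_mem this n
  by_cases hbx : b ∈ x
  · exact main _ b hs hb hbx
  · refine main (t ^ n)⁻¹ (T.c b) ?_ (T.inv_c_lt hb) (hx.or.not_mem.1 hbx)
    rw [inv_smul_eq_iff, hs]

variable {T}

lemma Coc.phi_trivial {τ : E → G} (hτ : T.Coc τ) {v0 : Set E} (h0 : T.IsV v0) {y : Set E} (hy : T.IsV y)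
    (h : T.P τ v0 y = 1) {x : G} (hx : x • y = y) : hτ.phi h0 x = x := by
  have := hτ.P_smul h0 x hy
  rw [hx, h] at this
  rw [hτ.phi_apply]
  have h2 : T.P τ v0 (x • v0) = 1 := by simpa using this.symm
  rw [h2, one_mul]

variable (T)

/-- composition of twists -/
lemma twist_comp {a : E} {y z : G} (hy : ∀ k : G, k • a = a → k * y = y * k)
    (hz : ∀ k : G, k • a = a → k * z = z * k) (hyz : ∀ k : G, k • a = a → k * (y * z) = (y * z) * k)
    (hfix : (T.tau_coc hz).phi (T.xi_v (T.c a)) y = y) (x : G) :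
    (T.tau_coc hz).phi (T.xi_v (T.c a)) ((T.tau_coc hy).phi (T.xi_v (T.c a)) x) =
      (T.tau_coc hyz).phi (T.xi_v (T.c a)) x := by
  set w := T.xi (T.c a) with hw
  have h0 : T.IsV w := T.xi_v _
  set φ := (T.tau_coc hz).phi h0 with hφ
  have hstep1 : ∀ g : G, φ (T.tau a y (g • a)) * T.P (T.tau a z) w (T.xi (T.c (g • a))) * T.tau a z (g • a) =
      T.P (T.tau a z) w (T.xi (T.c (g • a))) * T.tau a (y * z) (g • a) := by
    intro g
    rw [T.tau_smul hy, T.tau_smul hz, T.tau_smul hyz, map_mul, map_mul, map_inv, hfix, hφ, (T.tau_coc hz).phi_apply,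
      hw, T.smul_xi, T.smul_c]
    group
  have hstep : ∀ d : E, φ (T.tau a y d) * T.P (T.tau a z) w (T.xi (T.c d)) * T.tau a z d =
      T.P (T.tau a z) w (T.xi (T.c d)) * T.tau a (y * z) d := by
    intro d
    by_cases h1 : ∃ g : G, g • a = d
    · obtain ⟨g, rfl⟩ := h1
      exact hstep1 g
    by_cases h2 : ∃ g : G, g • T.c a = d
    · obtain ⟨g, rfl⟩ := h2
      have h3 := hstep1 g
      have h4 := T.P_step (T.tau_coc hz).inv h0 (g • a)
      rw [T.smul_c, (T.tau_coc hy).inv, (T.tau_coc hz).inv, (T.tau_coc hyz).inv, T.cc, map_inv, h4]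
      generalize T.P (T.tau a z) w (T.xi (T.c (g • a))) = p at *
      generalize T.tau a (y * z) (g • a) = A at *
      generalize T.tau a z (g • a) = B at *
      generalize φ (T.tau a y (g • a)) = C at *
      have hA : A = p⁻¹ * (C * p * B) := by rw [h3]; group
      rw [hA]; group
    · push Not at h1 h2
      rw [T.tau_one h1 h2, T.tau_one h1 h2, T.tau_one h1 h2, map_one]; group
  have hP : ∀ u, T.IsV u → φ (T.P (T.tau a y) w u) * T.P (T.tau a z) w u = T.P (T.tau a (y * z)) w u := by
    intro u hu
    refine T.path_ind h0.or hu.or (T.diff_fin h0 hu)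
      (fun u => φ (T.P (T.tau a y) w u) * T.P (T.tau a z) w u = T.P (T.tau a (y * z)) w u) ?_ ?_
    · rw [T.P_base _ h0, T.P_base _ h0, T.P_base _ h0, map_one, one_mul]
    · intro d _ _ ih
      rw [T.P_step (T.tau_coc hz).inv h0 d, T.P_step (T.tau_coc hy).inv h0 d,
        T.P_step (T.tau_coc hyz).inv h0 d, ← ih, mul_assoc, ← hstep, map_mul]
      group
  have hx := hP (x • w) (h0.smul x)
  rw [(T.tau_coc hy).phi_apply, map_mul, (T.tau_coc hyz).phi_apply, ← hx]
  conv_lhs => rw [hφ, (T.tau_coc hz).phi_apply h0 x, ← hφ]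
  group
  rfl

end Poc

end

section

open Pointwise

namespace Poc

variable {G E : Type*} [Group G] [PartialOrder E] [MulAction G E] (T : Poc G E)

/-- both ends of `h` lie in `d` -/
def Ends (h : G) (b d : E) : Prop := En h b d ∧ En h⁻¹ (T.c b) d

lemma twist_one {a : E} (h1 : ∀ k : G, k • a = a → k * 1 = 1 * k) {v0 : Set E} (h0 : T.IsV v0) (x : G) :
    (T.tau_coc h1).phi h0 x = x := by
  rw [Coc.phi_apply]
  have : ∀ d, T.tau a (1 : G) d = 1 := by
    intro d
    by_cases h2 : ∃ g : G, g • a = d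
    · obtain ⟨g, rfl⟩ := h2
      rw [T.tau_smul h1]; group
    by_cases h3 : ∃ g : G, g • T.c a = d
    · obtain ⟨g, rfl⟩ := h3
      rw [T.tau_smul_c h1]; group
    · push Not at h2 h3
      exact T.tau_one h2 h3
  rw [← T.P_const (T.tau_coc h1).inv h0 h0 (h0.smul x) (fun d _ _ => this d), T.P_base _ h0, one_mul]

section core

variable (hG : T.Good) (hco : ∀ φ : G →* G, Function.Injective φ → Function.Surjective φ)
  (hout : ∀ σ : MulAut G, ∃ k : ℕ, 1 ≤ k ∧ ∃ g : G, ∀ x, (σ ^ k) x = g * x * g⁻¹)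

lemma core_axis (hG : T.Good) (hco : ∀ φ : G →* G, Function.Injective φ → Function.Surjective φ)
    {a b : E} {h : G} (hz : ∀ k : G, k • a = a → k * h = h * k) (hb : h • b < b)
    {d : E} (hd : T.PM a d) (h1 : En h b d) (h2 : En h⁻¹ (T.c b) (T.c d)) : False := by
  obtain ⟨N, hN, hlt⟩ := T.axis hb h1 h2
  have hzN : ∀ k : G, k • a = a → k * h ^ N = h ^ N * k := fun k hk =>
    (show Commute k h from hz k hk).pow_right N
  have hfix : ∀ k : G, k • a = a → k • d = d := fun k hk =>
    T.comm_fix hlt (hzN k hk) (fin_order_of_mem (hG.stab a) hk)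
  have hback := T.stab_eq_pm (hG.stab a) hd hfix
  exact T.alpha hco (fun k hk => hzN k (hback k hk)) hlt

lemma core_ends (hG : T.Good) (hco : ∀ φ : G →* G, Function.Injective φ → Function.Surjective φ)
    {a b : E} {h : G} (hz : ∀ k : G, k • a = a → k * h = h * k) (hb : h • b < b)
    {d : E} (hd : T.PM a d) : T.Ends h b d ∨ T.Ends h b (T.c d) := by
  rcases T.en_or hb d with h1 | h1 <;> rcases T.en_or (T.inv_c_lt hb) d with h2 | h2
  · exact Or.inl ⟨h1, h2⟩
  · exact (T.core_axis hG hco hz hb hd h1 h2).elim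
  · exact (T.core_axis hG hco hz hb hd.c h1 (by rwa [T.cc])).elim
  · exact Or.inr ⟨h1, h2⟩

/-- choose the edge closest to the axis -/
lemma core_max (hG : T.Good) (hco : ∀ φ : G →* G, Function.Injective φ → Function.Surjective φ)
    {a b : E} {h : G} (hz : ∀ k : G, k • a = a → k * h = h * k) (hb : h • b < b)
    (he : T.Ends h b (T.c a)) : ∃ a', T.PM a a' ∧ (∀ k : G, k • a' = a' ↔ k • a = a) ∧ T.Ends h b (T.c a') ∧
      ∀ d, T.PM a d → a' ≤ d → T.Ends h b (T.c d) → d = a' := by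
  obtain ⟨k, hk⟩ := he.1
  have hk' := T.le_c hk
  set b1 := h ^ k • b with hb1
  set S : Set E := {d | T.PM a d ∧ a ≤ d ∧ T.Ends h b (T.c d)} with hS
  have hSf : S.Finite := by
    refine (T.fin a (T.c b1)).subset ?_
    rintro d ⟨hd1, hd2, hd3⟩
    refine ⟨hd2, ?_⟩
    rcases T.nested d (T.c b1) with h1 | h1 | h1 | h1
    · exact h1
    · exfalso
      refine T.en_excl (T.inv_c_lt hb) (d := d) ?_ hd3.2
      refine En.mono ⟨0, ?_⟩ h1
      rw [pow_zero, one_smul, T.c_le_c]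
      exact T.pow_le hb k
    · rw [T.cc] at h1
      exact (T.excl (hd2.trans h1) hk').elim
    · exfalso
      refine T.en_excl hb (d := d) ?_ hd3.1
      refine ⟨k, ?_⟩
      have := T.c_le h1
      rwa [T.cc] at this
      
  have hSn : S.Nonempty := ⟨a, PM.refl T a, le_rfl, he⟩
  obtain ⟨a', ha'⟩ := hSf.exists_maximal hSn
  obtain ⟨⟨h1, h2, h3⟩, hm⟩ := ha'
  have hfix : ∀ g : G, g • a = a → g • a' = a' := by
    intro g hg
    have hgf := fin_order_of_mem (hG.stab a) (show g ∈ MulAction.stabilizer G a from hg)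
    rcases T.nested (g • a') a' with h4 | h4 | h4 | h4
    · exact T.eq_of_le_of_fin hgf h4
    · exact T.eq_of_ge_of_fin hgf h4
    · exfalso
      have : a ≤ g • a' := by
        conv_lhs => rw [← hg]
        exact T.mono g h2
      exact T.excl h2 (this.trans h4)
    · exfalso
      have h5 := h3.1.mono (T.c_le h4)
      refine T.en_excl hb (d := g • a') ?_ ?_
      · exact h5
      · obtain ⟨i, hi⟩ := h3.1
        refine ⟨i, ?_⟩
        have h6 := T.mono g hi
        have hgb := T.comm_fix hb (hz g hg) hgf
        rwa [T.smul_c, smul_smul, ((show Commute g h from hz g hg).pow_right i).eq, mul_smul, hgb] at h6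
  refine ⟨a', h1, fun k => ⟨T.stab_eq_pm (hG.stab a) h1 hfix k, hfix k⟩, h3, ?_⟩
  intro d hd had hde
  exact le_antisymm (hm ⟨hd, h2.trans had, hde⟩ had) had

lemma conj_pow_fix {S : Set G} (hS : S.Finite) {g : G} (hg : ∀ x ∈ S, g * x * g⁻¹ ∈ S) :
    ∃ M : ℕ, 1 ≤ M ∧ ∀ x ∈ S, x * g ^ M = g ^ M * x := by
  have : Finite S := hS
  let f : S → S := fun x => ⟨g * x.1 * g⁻¹, hg _ x.2⟩
  have hf : Function.Injective f := by
    intro x y hxy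
    have : g * x.1 * g⁻¹ = g * y.1 * g⁻¹ := congrArg Subtype.val hxy
    exact Subtype.ext (by simpa using this)
  let e : Equiv.Perm S := Equiv.ofBijective f (Finite.injective_iff_bijective.1 hf)
  obtain ⟨M, hM, he⟩ := isOfFinOrder_iff_pow_eq_one.1 (isOfFinOrder_of_finite e)
  refine ⟨M, hM, fun x hx => ?_⟩
  have key : ∀ n : ℕ, ((e ^ n) ⟨x, hx⟩ : S).1 = g ^ n * x * (g ^ n)⁻¹ := by
    intro n
    induction n with
    | zero => simp
    | succ n ih =>
      rw [pow_succ', Equiv.Perm.mul_apply]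
      change g * _ * g⁻¹ = _
      rw [ih, pow_succ']; group
  have := key M
  rw [he] at this
  simp only [Equiv.Perm.coe_one, id_eq] at this
  conv_lhs => rw [this]
  group

lemma core (hG : T.Good) (hco : ∀ φ : G →* G, Function.Injective φ → Function.Surjective φ) (hout : ∀ σ : MulAut G, ∃ k : ℕ, 1 ≤ k ∧ ∃ g : G, ∀ x, (σ ^ k) x = g * x * g⁻¹)
    {a b : E} {h : G} (hz : ∀ k : G, k • a = a → k * h = h * k) (hb : h • b < b)
    (he : T.Ends h b (T.c a)) (hmax : ∀ d, T.PM a d → a ≤ d → T.Ends h b (T.c d) → d = a) : False := by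
  set w := T.xi (T.c a) with hw
  have h0 : T.IsV w := T.xi_v _
  have hends : ∀ d, T.PM a d → T.Ends h b d → T.Ends h b (T.c d) → False := fun d _ h1 h2 =>
    T.en_excl hb h1.1 h2.1
  have hM : ∀ d, T.PM a d → T.Ends h b (T.c d) → d ∉ w := by
    intro d hd hde hdw
    rw [hw, mem_xi, T.c_lt_c] at hdw
    rcases hdw with h1 | h1
    · exact T.en_excl hb (he.1.mono h1) hde.1
    · have := hmax d hd h1.le hde
      rw [this] at h1
      exact lt_irrefl _ h1
  have hM' : ∀ d, T.PM a d → (d ∈ w ↔ T.Ends h b d) := by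
    intro d hd
    constructor
    · intro hdw
      rcases T.core_ends hG hco hz hb hd with h1 | h1
      · exact h1
      · exact absurd hdw (hM d hd h1)
    · intro h1
      have := hM _ hd.c (by rwa [T.cc])
      exact h0.or.c_not_mem.1 this
  have hzpow : ∀ j : ℤ, ∀ k : G, k • a = a → k * h ^ j = h ^ j * k := fun j k hk =>
    ((show Commute k h from hz k hk).zpow_right j)
  have hPh : ∀ j : ℤ, T.P (T.tau a (h ^ j)) w (h • w) = 1 := by
    intro j
    rw [← T.P_const (T.tau_coc (hzpow j)).inv h0 h0 (h0.smul h), T.P_base _ h0]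
    intro d h1 h2
    by_cases hd : T.PM a d
    · exfalso
      rw [Set.mem_smul_set_iff_inv_smul_mem, hM' _ (hd.smul _)] at h1
      apply h2
      rw [hM' d hd]
      refine ⟨?_, ?_⟩
      · rw [← smul_inv_smul h d, T.en_smul hb]; exact h1.1
      · rw [← T.en_smul (T.inv_c_lt hb)]; exact h1.2
    · exact T.tau_eq_one _ hd
  have hPb : ∀ j : ℤ, T.P (T.tau a (h ^ j)) w (T.xi b) = 1 := by
    intro j
    rw [← T.P_const (T.tau_coc (hzpow j)).inv h0 h0 (T.xi_v b), T.P_base _ h0]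
    have key : ∀ d, T.PM a d → d ∈ w → d ∈ T.xi b := by
      intro d hd h1
      by_contra h2
      rw [hM' d hd] at h1
      rw [(T.xi_or b).not_mem, mem_xi, T.cc] at h2
      rcases h2 with h2 | h2
      · exact T.en_excl hb h1.1 ⟨0, by simpa using h2⟩
      · exact T.en_excl (T.inv_c_lt hb) (h1.2.mono h2.le) ⟨0, by simp⟩
    intro d h1 h2
    by_cases hd : T.PM a d
    · exfalso
      have := key _ hd.c (h0.or.not_mem.1 h2)
      exact (T.xi_or b).not_mem.2 this h1
    · exact T.tau_eq_one _ hd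
  have hφh : ∀ j : ℤ, (T.tau_coc (hzpow j)).phi h0 h = h := by
    intro j
    rw [Coc.phi_apply, hPh, one_mul]
  have hcomp : ∀ i j : ℤ, ∀ x, (T.tau_coc (hzpow j)).phi h0 ((T.tau_coc (hzpow i)).phi h0 x) =
      (T.tau_coc (hzpow (i + j))).phi h0 x := by
    intro i j x
    have h1 := T.twist_comp (hzpow i) (hzpow j) (by rw [← zpow_add]; exact hzpow _)
      (by rw [map_zpow]; exact congrArg (· ^ i) (hφh j)) x
    rw [h1]
    congr! 2
    rw [zpow_add]
  have hzero : ∀ x, (T.tau_coc (hzpow 0)).phi h0 x = x := by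
    intro x
    exact T.twist_one (a := a) (by simp) h0 x |> fun e => by
      convert e using 3 <;> simp
  let σ : MulAut G :=
    { toFun := (T.tau_coc (hzpow 1)).phi h0
      invFun := (T.tau_coc (hzpow (-1))).phi h0
      left_inv := fun x => by
        rw [hcomp]; exact hzero x
      right_inv := fun x => by
        rw [hcomp]; exact hzero x
      map_mul' := map_mul _ }
  have hσ : ∀ n : ℕ, ∀ x, (σ ^ n) x = (T.tau_coc (hzpow n)).phi h0 x := by
    intro n
    induction n with
    | zero => intro x; rw [pow_zero]; exact (hzero x).symm
    | succ n ih =>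
      intro x
      rw [pow_succ', MulAut.mul_apply, ih]
      exact hcomp n 1 x
  obtain ⟨k, hk1, g, hg⟩ := hout σ
  have hg' : ∀ x, (T.tau_coc (hzpow k)).phi h0 x = g * x * g⁻¹ := fun x => by rw [← hσ, hg]
  have hgh : g * h = h * g := by
    have := hg' h
    rw [hφh] at this
    rw [eq_mul_inv_iff_mul_eq] at this
    exact this.symm
  have hgb : ∀ x : G, x • b = b → x * g = g * x := by
    intro x hx
    have h1 := Coc.phi_trivial (T.tau_coc (hzpow k)) h0 (T.xi_v b) (hPb k) (x := x) (by rw [T.smul_xi, hx])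
    rw [hg'] at h1
    rw [mul_inv_eq_iff_eq_mul] at h1
    exact h1.symm
  set v := T.xi a with hv
  have hgv : ∀ x : G, x • v = v → x * (g⁻¹ * h ^ k) = (g⁻¹ * h ^ k) * x := by
    intro x hx
    have h1 := (T.tau_coc (hzpow k)).P_smul h0 x (T.xi_v a)
    rw [← hv, hx] at h1
    have h2 : T.P (T.tau a (h ^ (k : ℤ))) w v = h ^ (k : ℤ) := by
      rw [hv, T.P_step (T.tau_coc (hzpow k)).inv h0, ← hw, T.P_base _ h0, one_mul]
      have := T.tau_smul (hzpow k) 1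
      rwa [one_smul, one_mul, inv_one, mul_one] at this
    rw [h2] at h1
    have h3 := hg' x
    rw [Coc.phi_apply] at h3
    have h4 : T.P (T.tau a (h ^ (k : ℤ))) w (x • w) = h ^ (k : ℤ) * (x * (h ^ (k : ℤ))⁻¹ * x⁻¹) := by
      rw [eq_mul_inv_iff_mul_eq.2 h1.symm]; group
    rw [h4, zpow_natCast] at h3
    have h5 : h ^ k * x * (h ^ k)⁻¹ = g * x * g⁻¹ := by rw [← h3]; group
    have h6 : g⁻¹ * (h ^ k * x * (h ^ k)⁻¹) * h ^ k = g⁻¹ * (g * x * g⁻¹) * h ^ k := by rw [h5]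
    have h7 : g⁻¹ * (h ^ k * x * (h ^ k)⁻¹) * h ^ k = g⁻¹ * h ^ k * x := by group
    have h8 : g⁻¹ * (g * x * g⁻¹) * h ^ k = x * (g⁻¹ * h ^ k) := by group
    rw [← h8, ← h6, h7]
  obtain ⟨N, hN, j, hNj⟩ := T.root hb hgh (hG.stab b)
  by_cases hj : j = 0
  · subst hj
    rw [zpow_zero] at hNj
    set m := k * N with hm
    have hm1 : 1 ≤ m := Nat.mul_pos hk1 hN
    have hgv' : ∀ x : G, x • v = v → x * h ^ m = h ^ m * x := by
      intro x hx
      have h1 := (show Commute x (g⁻¹ * h ^ k) from hgv x hx).pow_right N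
      have h2 : (g⁻¹ * h ^ k) ^ N = h ^ m := by
        have : Commute g⁻¹ (h ^ k) := (show Commute g h from hgh).inv_left.pow_right k
        rw [this.mul_pow, inv_pow, hNj, inv_one, one_mul, hm, pow_mul]
      rw [h2] at h1
      exact h1.eq
    have hva : ∀ x : G, x • v = v → x • a = a := by
      intro x hx
      by_contra hne
      have hxf := T.fin_order_of_vertex hG (T.xi_v a) hx
      have hlt : T.c a < x • a := by
        refine T.xi_eq ?_ (Ne.symm hne)
        rw [← T.smul_xi]; exact hx.symm
      have hxb : x • b = b := T.comm_fix (T.pow_lt hb hm1) (hgv' x hx) hxf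
      refine T.en_excl hb (he.1.mono hlt.le) ?_
      obtain ⟨i, hi⟩ := he.1
      have hi' := En.later T hb hi (show i ≤ m * i from Nat.le_mul_of_pos_left _ hm1)
      refine ⟨m * i, ?_⟩
      have h6 := T.mono x hi'
      have hc : Commute x (h ^ m) := hgv' x hx
      rwa [T.smul_c, smul_smul, pow_mul, (hc.pow_right i).eq, mul_smul, hxb, ← pow_mul] at h6
    -- minimality
    obtain ⟨t, b0, n, hn, hlt, hmin⟩ := hG.minl a
    obtain ⟨s, hs, hsm⟩ : ∃ s : G, s • a < a ∧ ∀ d, s • d < d → T.PM a d := by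
      have hpos : ∀ x : G, ∀ d, (x⁻¹ * t ^ n * x) • d < d → T.PM a d := by
        intro x d hd
        have h1 : T.PM a (x • d) := by
          apply hmin
          refine ⟨n, hn, Or.inl ?_⟩
          rw [← T.smul_lt (g := x⁻¹), inv_smul_smul, smul_smul, smul_smul]
          exact hd
        have := h1.smul x⁻¹
        rwa [inv_smul_smul] at this
      have hneg : ∀ x : G, ∀ d, (x⁻¹ * t ^ n * x)⁻¹ • d < d → T.PM a d := by
        intro x d hd
        have h1 : T.PM a (x • d) := by
          apply hmin
          refine ⟨n, hn, Or.inr ?_⟩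
          rw [← T.smul_lt (g := x⁻¹), inv_smul_smul, smul_smul, smul_smul]
          rw [← T.smul_lt (g := (x⁻¹ * t ^ n * x)⁻¹), inv_smul_smul]
          exact hd
        have := h1.smul x⁻¹
        rwa [inv_smul_smul] at this
      obtain ⟨x, hx | hx⟩ := hmin b0 ⟨n, hn, Or.inl hlt⟩
      · refine ⟨x⁻¹ * t ^ n * x, ?_, hpos x⟩
        rw [← T.smul_lt (g := x), smul_smul, mul_assoc, mul_inv_cancel_left, mul_smul, ← hx]
        exact hlt
      · refine ⟨(x⁻¹ * t ^ n * x)⁻¹, ?_, hneg x⟩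
        rw [← T.c_lt_c, ← T.smul_c, ← T.smul_lt (g := x⁻¹ * t ^ n * x), smul_inv_smul,
          ← T.smul_lt (g := x), smul_smul, mul_assoc, mul_inv_cancel_left, mul_smul, ← hx]
        exact hlt
    have hfin : {d | s • a ≤ d ∧ d < a}.Finite := (T.fin (s • a) a).subset fun d hd => ⟨hd.1, hd.2.le⟩
    obtain ⟨c', hc'⟩ := hfin.exists_maximal ⟨s • a, le_rfl, hs⟩
    obtain ⟨⟨hc1, hc2⟩, hc3⟩ := hc'
    have hxi : T.xi (T.c c') = v := by
      refine T.xi_eq_of_covby hc2 fun d hd1 hd2 => ?_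
      exact absurd (hc3 ⟨hc1.trans hd1.le, hd2⟩ hd1.le) (not_le_of_gt hd1)
    have hpm : T.PM a c' := hsm c' ((T.smul_lt.2 hc2).trans_le hc1)
    obtain ⟨y, rfl | rfl⟩ := hpm
    · have hyw : y • w = v := by rw [hw, T.smul_xi, T.smul_c, hxi]
      have hnorm : ∀ x ∈ (MulAction.stabilizer G a : Set G), y * x * y⁻¹ ∈ (MulAction.stabilizer G a : Set G) := by
        intro x hx
        have hx : x • a = a := hx
        apply hva
        have : x • w = w := by rw [hw, T.smul_xi, T.smul_c, hx]
        rw [← hyw, smul_smul, inv_mul_cancel_right, mul_smul, this]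
      obtain ⟨M, hM1, hMc⟩ := conj_pow_fix (hG.stab a) hnorm
      exact T.alpha hco hMc (T.pow_lt hc2 hM1)
    · rw [← T.smul_c, T.cc, ← T.smul_xi] at hxi
      have := hva y hxi
      rw [T.smul_c, this] at hc2
      exact T.nle' a hc2.le
  · obtain ⟨m, hm | hm⟩ := Int.eq_nat_or_neg j
    · subst hm
      rw [zpow_natCast] at hNj
      have hm1 : 1 ≤ m := by
        rcases Nat.eq_zero_or_pos m with h | h
        · exact absurd (by rw [h]; rfl) hj
        · exact h
      refine T.alpha hco (a0 := b) (z := h ^ m) ?_ (T.pow_lt hb hm1)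
      intro x hx
      rw [← hNj]
      exact ((show Commute x g from hgb x hx).pow_right N)
    · subst hm
      rw [zpow_neg, zpow_natCast] at hNj
      have hm1 : 1 ≤ m := by
        rcases Nat.eq_zero_or_pos m with h | h
        · exact absurd (by rw [h]; rfl) hj
        · exact h
      refine T.alpha hco (a0 := b) (z := h ^ m) ?_ (T.pow_lt hb hm1)
      intro x hx
      have := ((show Commute x g from hgb x hx).pow_right N)
      rw [hNj] at this
      exact Commute.inv_right_iff.1 this

lemma exists_inf_order (hG : T.Good) {K : Subgroup G} (hK : (K : Set G).Infinite) : ∃ h ∈ K, ¬ IsOfFinOrder h := by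
  obtain ⟨H, hH, htf⟩ := hG.tf
  by_contra hn
  push Not at hn
  have htriv : ∀ h ∈ K, h ∈ H → h = 1 := by
    intro h h1 h2
    by_contra h3
    exact htf h h2 h3 (hn h h1)
  apply hK
  refine Set.Finite.of_finite_image (f := fun g : G => (g : G ⧸ H)) (Set.toFinite _) ?_
  intro x hx y hy hxy
  have := QuotientGroup.eq.1 hxy
  have := htriv _ (K.mul_mem (K.inv_mem hx) hy) this
  rw [inv_mul_eq_one] at this
  exact this

/-- The `β`-lemma. -/
theorem beta (hG : T.Good) (hco : ∀ φ : G →* G, Function.Injective φ → Function.Surjective φ) (hout : ∀ σ : MulAut G, ∃ k : ℕ, 1 ≤ k ∧ ∃ g : G, ∀ x, (σ ^ k) x = g * x * g⁻¹)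
    (a : E) : {z : G | ∀ k : G, k • a = a → k * z = z * k}.Finite := by
  by_contra hinf
  let K : Subgroup G := Subgroup.centralizer (MulAction.stabilizer G a : Set G)
  have hK : ∀ z, z ∈ K ↔ ∀ k : G, k • a = a → k * z = z * k := by
    intro z
    rw [Subgroup.mem_centralizer_iff]
    rfl
  have hKi : (K : Set G).Infinite := by
    intro hf
    apply hinf
    exact hf.subset fun z hz => (hK z).2 hz
  obtain ⟨h0, h0K, h0o⟩ := T.exists_inf_order hG hKi
  obtain ⟨b, n, hn, hb⟩ := hG.compl h0 h0o
  have hz := (hK _).1 (K.pow_mem h0K n)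
  set h := h0 ^ n
  have main : ∀ a : E, (∀ k : G, k • a = a → k * h = h * k) → T.Ends h b (T.c a) → False := by
    intro a hz he
    obtain ⟨a', h1, h2, h3, h4⟩ := T.core_max hG hco hz hb he
    exact T.core hG hco hout (a := a') (fun k hk => hz k ((h2 k).1 hk)) hb h3
      (fun d hd => h4 d (h1.trans hd))
  rcases T.core_ends hG hco hz hb (PM.refl T a) with h1 | h1
  · exact main (T.c a) (fun k hk => hz k ((T.stab_c k a).1 hk)) (by rwa [T.cc])
  · exact main a hz h1

end core

end Poc

end

section

open Pointwise

namespace Poc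

variable {G E : Type*} [Group G] [PartialOrder E] [MulAction G E] (T : Poc G E)

lemma vstab_fin (hG : T.Good) {x : Set E} (hx : T.IsV x) : (MulAction.stabilizer G x : Set G).Finite := by
  by_contra hinf
  obtain ⟨h, h1, h2⟩ := T.exists_inf_order hG (K := MulAction.stabilizer G x) hinf
  exact h2 (T.fin_order_of_vertex hG hx h1)

/-- Finite subgroups fix a vertex. -/
theorem fix_vertex [Nonempty E] (K : Subgroup G) (hK : (K : Set G).Finite) :
    ∃ x, T.IsV x ∧ ∀ k ∈ K, k • x = x := by
  obtain ⟨e⟩ := ‹Nonempty E›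
  set v0 := T.xi e
  have h0 : T.IsV v0 := T.xi_v e
  set B : Set E := {b | ∃ k ∈ K, ∃ l ∈ K, b ∈ k • v0 ∧ b ∉ l • v0} with hB
  have hBf : B.Finite := by
    have : B ⊆ ⋃ k ∈ (K : Set G), ⋃ l ∈ (K : Set G), (k • v0) \ (l • v0) := by
      rintro b ⟨k, hk, l, hl, h1, h2⟩
      simp only [Set.mem_iUnion]
      exact ⟨k, hk, l, hl, h1, h2⟩
    exact (hK.biUnion fun k _ => hK.biUnion fun l _ => T.diff_fin (h0.smul l) (h0.smul k)).subset this
  have hBc : ∀ b, T.c b ∈ B ↔ b ∈ B := by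
    have h1 : ∀ b, b ∈ B → T.c b ∈ B := by
      rintro b ⟨k, hk, l, hl, h1, h2⟩
      exact ⟨l, hl, k, hk, (h0.smul l).or.not_mem.1 h2, (h0.smul k).or.c_not_mem.2 h1⟩
    intro b
    exact ⟨fun h => by have := h1 _ h; rwa [T.cc] at this, h1 b⟩
  have hBK : ∀ k ∈ K, ∀ b, k • b ∈ B ↔ b ∈ B := by
    have h1 : ∀ k ∈ K, ∀ b, b ∈ B → k • b ∈ B := by
      rintro g hg b ⟨k, hk, l, hl, h1, h2⟩
      refine ⟨g * k, K.mul_mem hg hk, g * l, K.mul_mem hg hl, ?_, ?_⟩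
      · rw [mul_smul]; exact Set.smul_mem_smul_set h1
      · rw [mul_smul, Set.smul_mem_smul_set_iff]; exact h2
    intro k hk b
    exact ⟨fun h => by have := h1 _ (K.inv_mem hk) _ h; rwa [inv_smul_smul] at this, h1 k hk b⟩
  have hBn : ∀ b, b ∉ B → ∀ k ∈ K, (b ∈ k • v0 ↔ b ∈ v0) := by
    intro b hb k hk
    constructor
    · intro h1
      by_contra h2
      exact hb ⟨k, hk, 1, K.one_mem, h1, by rwa [one_smul]⟩
    · intro h1
      by_contra h2
      exact hb ⟨1, K.one_mem, k, hk, by rwa [one_smul], h2⟩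
  set f : E → ℕ := fun b => (B ∩ Set.Iic b).ncard with hf
  have hfm : ∀ a b, a ≤ b → f a ≤ f b := by
    intro a b hab
    refine Set.ncard_le_ncard ?_ (hBf.subset Set.inter_subset_left)
    exact Set.inter_subset_inter_right _ (Set.Iic_subset_Iic.2 hab)
  have hfs : ∀ a b, b ∈ B → a < b → f a < f b := by
    intro a b hb hab
    refine Set.ncard_lt_ncard ?_ (hBf.subset Set.inter_subset_left)
    rw [Set.ssubset_iff_of_subset (Set.inter_subset_inter_right _ (Set.Iic_subset_Iic.2 hab.le))]
    exact ⟨b, ⟨hb, le_rfl⟩, fun h => absurd h.2 (not_le_of_gt hab)⟩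
  have hfk : ∀ k ∈ K, ∀ b, f (k • b) = f b := by
    intro k hk b
    have : B ∩ Set.Iic (k • b) = (fun x => k • x) '' (B ∩ Set.Iic b) := by
      ext d
      constructor
      · rintro ⟨h1, h2⟩
        refine ⟨k⁻¹ • d, ⟨(hBK _ (K.inv_mem hk) d).2 h1, ?_⟩, smul_inv_smul k d⟩
        change k⁻¹ • d ≤ b
        rw [← T.smul_le (g := k), smul_inv_smul]; exact h2
      · rintro ⟨d, ⟨h1, h2⟩, rfl⟩
        exact ⟨(hBK k hk d).2 h1, T.mono k h2⟩
    rw [hf]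
    simp only
    rw [this, Set.ncard_image_of_injective _ (MulAction.injective k)]
  by_cases hex : ∃ b ∈ B, f b = f (T.c b)
  · obtain ⟨b, hb, hbe⟩ := hex
    refine ⟨T.xi b, T.xi_v b, fun k hk => ?_⟩
    rw [T.smul_xi]
    congr 1
    have hkb := hfk k hk b
    have hkB := (hBK k hk b).2 hb
    have hkc : f (T.c (k • b)) = f b := by rw [← T.smul_c, hfk k hk, hbe]
    have strict : ∀ a d, a ≤ d → d ∈ B → f a = f d → a = d := by
      intro a d h1 h2 h3
      by_contra h4
      have := hfs a d h2 (lt_of_le_of_ne h1 h4)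
      omega
    rcases T.nested (k • b) b with h | h | h | h
    · exact strict _ _ h hb hkb
    · exact (strict _ _ h hkB hkb.symm).symm
    · exact absurd (strict _ _ h ((hBc b).2 hb) (by omega)) (T.noinv k b)
    · have := strict _ _ h hb hkc
      exact absurd ((T.eq_c).2 this) (T.noinv k b)
  · push Not at hex
    set o : Set E := {b | (b ∈ B ∧ f (T.c b) < f b) ∨ (b ∉ B ∧ b ∈ v0)} with ho
    have hor : T.IsOr o := by
      constructor
      · intro b d hb hbd
        by_cases hdB : d ∈ B
        · left
          refine ⟨hdB, ?_⟩
          rcases hb with ⟨h1, h2⟩ | ⟨h1, h2⟩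
          · have := hfm _ _ hbd
            have := hfm _ _ (T.anti hbd)
            omega
          · exfalso
            obtain ⟨k, hk, l, hl, h3, h4⟩ := hdB
            exact h4 ((h0.smul l).or.up ((hBn b h1 l hl).2 h2) hbd)
        · right
          refine ⟨hdB, ?_⟩
          rcases hb with ⟨h1, h2⟩ | ⟨h1, h2⟩
          · obtain ⟨k, hk, l, hl, h3, h4⟩ := h1
            exact (hBn d hdB k hk).1 ((h0.smul k).or.up h3 hbd)
          · exact h0.or.up h2 hbd
      · intro b
        simp only [ho, Set.mem_setOf_eq, hBc, T.cc, h0.or.2 b]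
        by_cases hb : b ∈ B
        · have := hex b hb
          simp only [hb, true_and, not_true, false_and, or_false]
          omega
        · simp [hb]
    refine ⟨o, T.isV_of_fin h0 hor ?_, ?_⟩
    · refine hBf.subset ?_
      rintro b ⟨h1 | h1, h2⟩
      · exact h1.1
      · exact absurd h1.2 h2
    · intro k hk
      ext b
      have e1 := hBK _ (K.inv_mem hk) b
      have e2 := hfk _ (K.inv_mem hk) b
      have e3 := hfk _ (K.inv_mem hk) (T.c b)
      rw [T.smul_c] at e3
      rw [Set.mem_smul_set_iff_inv_smul_mem]
      simp only [ho, Set.mem_setOf_eq, e1, e2, e3]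
      by_cases hb : b ∈ B
      · simp [hb]
      · simp only [hb, false_and, not_false_eq_true, true_and, false_or]
        rw [← Set.mem_smul_set_iff_inv_smul_mem]
        exact hBn b hb k hk

/-- Finitely many conjugacy classes of homs from a finite group. -/
theorem homfin (hG : T.Good) [Nonempty E] (K : Subgroup G) (hK : (K : Set G).Finite) :
    ∃ N : Set (K → G), N.Finite ∧ ∀ φ : G →* G, ∃ ν ∈ N, ∃ x : G, ∀ k : K, φ k = x * ν k * x⁻¹ := by
  have : Finite K := hK
  obtain ⟨S, hS⟩ := hG.orb
  set W : Set G := ⋃ s ∈ S, (MulAction.stabilizer G (T.xi s) : Set G) with hW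
  have hWf : W.Finite := S.finite_toSet.biUnion fun s _ => T.vstab_fin hG (T.xi_v s)
  refine ⟨Set.pi Set.univ (fun _ => W), Set.Finite.pi' (fun _ => hWf) |>.subset (fun f hf i => hf i trivial), fun φ => ?_⟩
  obtain ⟨x, ⟨a, rfl⟩, hx⟩ := T.fix_vertex (K.map φ) (by
    rw [Subgroup.coe_map]; exact hK.image _)
  obtain ⟨g, s, hs, rfl⟩ := hS a
  refine ⟨fun k => g⁻¹ * φ k * g, ?_, g, fun k => by group⟩
  intro k _
  simp only [hW, Set.mem_iUnion]
  refine ⟨s, hs, ?_⟩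
  change (g⁻¹ * φ k * g) • T.xi s = T.xi s
  have := hx (φ k) ⟨k, k.2, rfl⟩
  rw [mul_smul, mul_smul, T.smul_xi, this, ← T.smul_xi, inv_smul_smul]

end Poc

end

section

open Pointwise

section Idem
variable {G : Type*} [Group G]

/-- Idempotent ultrafilters of endomorphisms, asymptotically injective. -/
structure IdemUlt (U : Ultrafilter (G →* G)) : Prop where
  inj : ∀ g : G, g ≠ 1 → ∀ᶠ φ : G →* G in U, φ g ≠ 1
  idem : ∀ q : (G →* G) → Prop, (∀ᶠ φ : G →* G in U, q φ) ↔ ∀ᶠ φ : G →* G in U, ∀ᶠ ψ : G →* G in U, q (ψ.comp φ)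

/-- Discriminating property. -/
def DiscP (p : (G →* G) → Prop) : Prop :=
  ∀ F : Finset G, ∃ φ : G →* G, p φ ∧ ∀ f ∈ F, f ≠ 1 → φ f ≠ 1

theorem exists_idemUlt (p : (G →* G) → Prop) (hp : ∀ φ ψ, p φ → p ψ → p (ψ.comp φ)) (hd : DiscP p) :
    ∃ U : Ultrafilter (G →* G), IdemUlt U ∧ ∀ᶠ φ : G →* G in U, p φ := by
  letI : Semigroup (G →* G) := { mul := fun φ ψ => ψ.comp φ, mul_assoc := fun _ _ _ => rfl }
  letI : Semigroup (Ultrafilter (G →* G)) := Ultrafilter.semigroup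
  set S : Set (Ultrafilter (G →* G)) :=
    {U | (∀ g : G, g ≠ 1 → ∀ᶠ φ : G →* G in U, φ g ≠ 1) ∧ ∀ᶠ φ : G →* G in U, p φ} with hS
  have hcl : IsClosed S := by
    have : S = (⋂ g : G, ⋂ _ : g ≠ 1, {U : Ultrafilter (G →* G) | {φ : G →* G | φ g ≠ 1} ∈ U}) ∩
        {U | {φ | p φ} ∈ U} := by
      ext U
      simp only [hS, Set.mem_setOf_eq, Set.mem_inter_iff, Set.mem_iInter]
      rfl
    rw [this]
    exact (isClosed_iInter fun g => isClosed_iInter fun _ => ultrafilter_isClosed_basic _).inter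
      (ultrafilter_isClosed_basic _)
  have hne : S.Nonempty := by
    choose φ h1 h2 using hd
    refine ⟨Ultrafilter.of (Filter.map φ Filter.atTop), fun g hg => ?_, ?_⟩
    · refine Ultrafilter.of_le _ ?_
      rw [Filter.mem_map]
      filter_upwards [Filter.eventually_ge_atTop ({g} : Finset G)] with F hF
      exact h2 F g (hF (by simp)) hg
    · refine Ultrafilter.of_le _ ?_
      rw [Filter.mem_map]
      exact Filter.Eventually.of_forall h1
  have hmul : ∀ m ∈ S, ∀ m' ∈ S, m * m' ∈ S := by
    intro m hm m' hm'
    refine ⟨fun g hg => ?_, ?_⟩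
    · refine (Ultrafilter.eventually_mul m m' (fun φ : G →* G => φ g ≠ 1)).2 ?_
      filter_upwards [hm.1 g hg] with φ hφ
      exact hm'.1 _ hφ
    · refine (Ultrafilter.eventually_mul m m' p).2 ?_
      filter_upwards [hm.2] with φ hφ
      filter_upwards [hm'.2] with ψ hψ
      exact hp φ ψ hφ hψ
  obtain ⟨U, hU, hUU⟩ := exists_idempotent_in_compact_subsemigroup
    (fun r => Ultrafilter.continuous_mul_left r) S hne hcl.isCompact hmul
  refine ⟨U, ⟨hU.1, fun q => ?_⟩, hU.2⟩
  have := Ultrafilter.eventually_mul U U q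
  rw [hUU] at this
  exact this

lemma IdemUlt.const {U : Ultrafilter (G →* G)} (hU : IdemUlt U) {g r : G} (h : ∀ᶠ φ : G →* G in U, φ g = r) : r = g := by
  obtain ⟨φ, h1, h2⟩ := (h.and ((hU.idem _).1 h)).exists
  by_contra hne
  obtain ⟨ψ, h3, h4, h5⟩ := (h.and (h2.and (hU.inj (g⁻¹ * r) (fun e => hne (inv_mul_eq_one.1 e).symm)))).exists
  apply h5
  rw [map_mul, map_inv, h3]
  simp only [MonoidHom.comp_apply, h1] at h4
  rw [h4, inv_mul_cancel]

lemma IdemUlt.fin {U : Ultrafilter (G →* G)} (hU : IdemUlt U) {g : G} {S : Set G} (hS : S.Finite)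
    (h : ∀ᶠ φ : G →* G in U, φ g ∈ S) : ∀ᶠ φ : G →* G in U, φ g = g := by
  have h' : ∀ᶠ φ : G →* G in U, ∃ r ∈ S, φ g = r := by
    filter_upwards [h] with φ hφ using ⟨_, hφ, rfl⟩
  obtain ⟨r, hr, h2⟩ := (Ultrafilter.eventually_exists_mem_iff hS).1 h'
  have := hU.const h2
  rwa [this] at h2

end Idem

namespace Poc

variable {G E : Type*} [Group G] [PartialOrder E] [MulAction G E] (T : Poc G E)

lemma stab_xi {d : E} {g : G} (h : g • d = d) : g • T.xi d = T.xi d := by rw [T.smul_xi, h]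

lemma disc_stab (hG : T.Good) [Nonempty E] (hd : DiscP (fun φ : G →* G => ¬ Function.Injective φ)) :
    ∃ a : E, DiscP (fun φ : G →* G => ¬ Function.Injective φ ∧ ∀ g : G, g • T.xi a = T.xi a → φ g = g) := by
  obtain ⟨U, hU, hUn⟩ := exists_idemUlt (fun φ : G →* G => ¬ Function.Injective φ)
    (fun φ ψ h1 _ h3 => h1 (Function.Injective.of_comp (f := ψ) (by exact h3))) hd
  obtain ⟨S, hS⟩ := hG.orb
  obtain ⟨e⟩ := ‹Nonempty E›
  have : Nonempty E := ⟨e⟩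
  have hSne : S.Nonempty := by
    obtain ⟨g, s, hs, _⟩ := hS e
    exact ⟨s, hs⟩
  obtain ⟨s, hs, hmax⟩ := S.exists_max_image (fun s => Nat.card (MulAction.stabilizer G (T.xi s))) hSne
  have hmax' : ∀ a, Nat.card (MulAction.stabilizer G (T.xi a)) ≤ Nat.card (MulAction.stabilizer G (T.xi s)) := by
    intro a
    obtain ⟨g, s', hs', rfl⟩ := hS a
    rw [← T.smul_xi]
    rw [Nat.card_congr (MulAction.stabilizerEquivStabilizerOfOrbitRel
      (MulAction.orbitRel_apply.2 ⟨g, rfl⟩ : MulAction.orbitRel G (Set E) (g • T.xi s') (T.xi s'))).toEquiv]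
    exact hmax s' hs'
  set K := MulAction.stabilizer G (T.xi s) with hK
  have hKf : (K : Set G).Finite := T.vstab_fin hG (T.xi_v s)
  have : Finite K := hKf
  obtain ⟨N, hN, hN'⟩ := T.homfin hG K hKf
  obtain ⟨ν, hν, h1⟩ := (Ultrafilter.eventually_exists_mem_iff (f := U) hN
    (P := fun ν φ => ∃ x : G, ∀ k : K, φ k = x * ν k * x⁻¹)).1 (Filter.Eventually.of_forall hN')
  have hinj : ∀ᶠ φ : G →* G in U, ∀ k ∈ (K : Set G), k ≠ 1 → φ k ≠ 1 := by
    rw [Filter.eventually_all_finite hKf]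
    intro k _
    by_cases hk : k = 1
    · simp [hk]
    · filter_upwards [hU.inj k hk] with φ hφ _ using hφ
  obtain ⟨φ, ⟨x, hx⟩, h2, h3⟩ := (h1.and (((hU.idem _).1 h1).and hinj)).exists
  have h4 : ∀ᶠ ψ : G →* G in U, ∃ z : G, ∀ k : K, ψ (φ k) = z * φ k * z⁻¹ := by
    filter_upwards [h2] with ψ hψ
    obtain ⟨z, hz⟩ := hψ
    refine ⟨z * x⁻¹, fun k => ?_⟩
    have := hz k
    rw [MonoidHom.comp_apply] at this
    rw [this, hx]; group
  have hK0f : ((K.map φ : Subgroup G) : Set G).Finite := by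
    rw [Subgroup.coe_map]; exact hKf.image _
  obtain ⟨v, ⟨a, rfl⟩, hv⟩ := T.fix_vertex (K.map φ) hK0f
  have hle : K.map φ ≤ MulAction.stabilizer G (T.xi a) := fun k hk => hv k hk
  have hfa : Finite (MulAction.stabilizer G (T.xi a)) := T.vstab_fin hG (T.xi_v a)
  have hcard : Nat.card (K.map φ) = Nat.card K := by
    have hi : Set.InjOn φ K := by
      intro k hk l hl e
      by_contra hne
      exact h3 (k * l⁻¹) (K.mul_mem hk (K.inv_mem hl)) (fun h => hne (mul_inv_eq_one.1 h))
        (by rw [map_mul, map_inv, e, mul_inv_cancel])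
    exact Nat.card_image_of_injOn hi
  have heq : K.map φ = MulAction.stabilizer G (T.xi a) := by
    apply Subgroup.eq_of_le_of_card_ge hle
    rw [hcard]; exact hmax' a
  refine ⟨a, fun F => ?_⟩
  have hF : ∀ᶠ ψ : G →* G in U, ∀ f ∈ (F : Set G), f ≠ 1 → ψ f ≠ 1 := by
    rw [Filter.eventually_all_finite F.finite_toSet]
    intro k _
    by_cases hk : k = 1
    · simp [hk]
    · filter_upwards [hU.inj k hk] with φ hφ _ using hφ
  obtain ⟨ψ, ⟨z, hz⟩, h5, h6⟩ := (h4.and (hF.and hUn)).exists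
  refine ⟨(MulAut.conj z⁻¹).toMonoidHom.comp ψ, ⟨fun hi => h6 (Function.Injective.of_comp (f := (MulAut.conj z⁻¹).toMonoidHom) (by exact hi)), ?_⟩, ?_⟩
  · intro g hg
    have : g ∈ K.map φ := by rw [heq]; exact hg
    obtain ⟨k, hk, rfl⟩ := this
    have := hz ⟨k, hk⟩
    simp only at this
    simp [this, mul_assoc]
  · intro f hf hf1 h
    apply h5 f hf hf1
    exact (MulAut.conj z⁻¹).injective (by rw [map_one]; exact h)

theorem star_aux (hG : T.Good) (hfg : Group.FG G) [Nonempty E]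
    (hβ : ∀ a : E, {z : G | ∀ k : G, k • a = a → k * z = z * k}.Finite) :
    ¬ DiscP (fun φ : G →* G => ¬ Function.Injective φ) := by
  intro hd
  obtain ⟨a, ha⟩ := T.disc_stab hG hd
  obtain ⟨U, hU, hUp⟩ := exists_idemUlt _ (fun φ ψ h1 h2 =>
    ⟨fun h3 => h1.1 (Function.Injective.of_comp (f := ψ) (by exact h3)), fun g hg => by
      rw [MonoidHom.comp_apply, h1.2 g hg, h2.2 g hg]⟩) ha
  have hpath : ∀ x, T.IsV x → ∀ g : G, g • x = x → ∀ᶠ φ : G →* G in U, φ g = g := by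
    intro x hx
    refine T.path_ind (T.xi_or a) hx.or (T.diff_fin (T.xi_v a) hx)
      (fun x => ∀ g : G, g • x = x → ∀ᶠ φ : G →* G in U, φ g = g) ?_ ?_
    · intro g hg
      filter_upwards [hUp] with φ hφ using hφ.2 g hg
    · intro d _ _ hp g hg
      have h1 : ∀ᶠ φ : G →* G in U, ∀ k ∈ (MulAction.stabilizer G d : Set G), φ k = k := by
        rw [Filter.eventually_all_finite (hG.stab d)]
        intro k hk
        apply hp
        apply T.stab_xi
        rw [T.smul_c, show k • d = d from hk]
      obtain ⟨N, hN, hN'⟩ := T.homfin hG _ (T.vstab_fin hG (T.xi_v d))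
      obtain ⟨ν, hν, h2⟩ := (Ultrafilter.eventually_exists_mem_iff (f := U) hN
        (P := fun ν φ => ∃ x : G, ∀ k : MulAction.stabilizer G (T.xi d), φ k = x * ν k * x⁻¹)).1
        (Filter.Eventually.of_forall hN')
      obtain ⟨φ0, h3, x0, h4⟩ := (h1.and h2).exists
      refine hU.fin ((hβ d).image (fun z => z * x0 * ν ⟨g, hg⟩ * x0⁻¹ * z⁻¹)) ?_
      filter_upwards [h1, h2] with φ h5 h6
      obtain ⟨x, h6⟩ := h6
      refine ⟨x * x0⁻¹, ?_, ?_⟩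
      · intro k hk
        have e1 := h6 ⟨k, T.stab_xi hk⟩
        have e2 := h4 ⟨k, T.stab_xi hk⟩
        simp only [h5 k hk, h3 k hk] at e1 e2
        have e3 : ν ⟨k, T.stab_xi hk⟩ = x0⁻¹ * k * x0 := by
          conv_rhs => rw [e2]
          group
        rw [e3] at e1
        conv_lhs => rw [e1]
        group
      · have e1 := h6 ⟨g, hg⟩
        simp only at e1 ⊢
        rw [e1]; group
  have hall : ∀ g : G, ∀ᶠ φ : G →* G in U, φ g = g := by
    intro g
    refine hU.fin ((hβ a).image (fun z => g * z)) ?_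
    have h1 : ∀ᶠ φ : G →* G in U, ∀ k ∈ (MulAction.stabilizer G a : Set G), φ (g * k * g⁻¹) = g * k * g⁻¹ := by
      rw [Filter.eventually_all_finite (hG.stab a)]
      intro k hk
      apply hpath (g • T.xi a) ((T.xi_v a).smul g)
      rw [smul_smul, inv_mul_cancel_right, mul_smul, T.stab_xi hk]
    filter_upwards [h1, hUp] with φ h2 h3
    refine ⟨g⁻¹ * φ g, ?_, by group⟩
    intro k hk
    have e := h2 k hk
    rw [map_mul, map_mul, map_inv, h3.2 k (T.stab_xi hk)] at e
    have : φ g * k = g * k * g⁻¹ * φ g := by rw [← e]; group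
    calc k * (g⁻¹ * φ g) = g⁻¹ * (g * k * g⁻¹ * φ g) := by group
      _ = g⁻¹ * φ g * k := by rw [← this]; group
  obtain ⟨S, hS⟩ := hfg.1
  have hSall : ∀ᶠ φ : G →* G in U, ∀ g ∈ (S : Set G), φ g = g := by
    rw [Filter.eventually_all_finite S.finite_toSet]
    exact fun g _ => hall g
  obtain ⟨φ, h1, h2, _⟩ := (hSall.and hUp).exists
  apply h2
  have : φ = MonoidHom.id G := MonoidHom.eq_of_eqOn_dense hS (fun g hg => h1 g hg)
  rw [this]
  exact Function.injective_id

theorem star (hG : T.Good) (hfg : Group.FG G)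
    (hco : ∀ φ : G →* G, Function.Injective φ → Function.Surjective φ)
    (hout : ∀ σ : MulAut G, ∃ k : ℕ, 1 ≤ k ∧ ∃ g, ∀ x, (σ^k) x = g*x*g⁻¹) :
    ∃ F : Finset G, ∀ φ : G →* G, (∀ f ∈ F, f ≠ 1 → φ f ≠ 1) → Function.Injective φ := by
  rcases finite_or_infinite G with hf | hf
  · have := Fintype.ofFinite G
    refine ⟨Finset.univ, fun φ hφ => ?_⟩
    rw [injective_iff_map_eq_one]
    intro g hg
    by_contra hne
    exact hφ g (Finset.mem_univ g) hne hg
  · obtain ⟨h, _, hh⟩ := T.exists_inf_order hG (K := ⊤) (by simpa using Set.infinite_univ)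
    obtain ⟨b, _⟩ := hG.compl h hh
    have : Nonempty E := ⟨b⟩
    have := T.star_aux hG hfg (T.beta hG hco hout)
    unfold DiscP at this
    push Not at this
    obtain ⟨F, hF⟩ := this
    refine ⟨F, fun φ hφ => ?_⟩
    by_contra hn
    obtain ⟨f, h1, h2, h3⟩ := hF φ hn
    exact hφ f h1 h2 h3

end Poc

end

section

open Pointwise

namespace Cut

variable {G : Type*} [Group G]

/-- Almost invariant sets. -/
def IsCut (C : Set G) : Prop := ∀ y : G, {g : G | ¬ (g ∈ C ↔ g * y ∈ C)}.Finite

/-- The subgroup of elements under which a set is almost invariant. -/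
def ai (C : Set G) : Subgroup G where
  carrier := {y | {g : G | ¬ (g ∈ C ↔ g * y ∈ C)}.Finite}
  one_mem' := by simp
  mul_mem' := by
    intro a b ha hb
    refine (Set.Finite.union ha (hb.preimage (f := fun g => g * a) ((mul_left_injective a).injOn))).subset ?_
    intro g hg
    by_contra h
    simp only [Set.mem_union, Set.mem_preimage, Set.mem_setOf_eq, not_or, not_not] at h hg
    exact hg (h.1.trans (by rw [h.2, mul_assoc]))
  inv_mem' := by
    intro a ha
    refine (Set.Finite.preimage (f := fun g => g * a⁻¹) ((mul_left_injective a⁻¹).injOn) ha).subset ?_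
    intro g hg
    simp only [Set.mem_preimage, Set.mem_setOf_eq, inv_mul_cancel_right] at hg ⊢
    exact fun h => hg h.symm

lemma isCut_of_closure {C : Set G} {S : Set G} (hS : Subgroup.closure S = ⊤)
    (h : ∀ y ∈ S, {g : G | ¬ (g ∈ C ↔ g * y ∈ C)}.Finite) : IsCut C := by
  have : Subgroup.closure S ≤ ai C := (Subgroup.closure_le _).2 h
  intro y
  exact this (by rw [hS]; trivial)

lemma IsCut.compl {C : Set G} (h : IsCut C) : IsCut Cᶜ := by
  intro y
  refine (h y).subset ?_
  intro g hg
  simp only [Set.mem_setOf_eq, Set.mem_compl_iff] at hg ⊢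
  exact fun h => hg (not_congr h)

lemma IsCut.inter {C D : Set G} (h : IsCut C) (h' : IsCut D) : IsCut (C ∩ D) := by
  intro y
  refine ((h y).union (h' y)).subset ?_
  intro g hg
  simp only [Set.mem_setOf_eq, Set.mem_inter_iff, Set.mem_union] at hg ⊢
  tauto

lemma IsCut.smul {C : Set G} (h : IsCut C) (x : G) : IsCut (x • C) := by
  intro y
  refine ((h y).preimage (f := fun g => x⁻¹ * g) ((mul_right_injective x⁻¹).injOn)).subset ?_
  intro g hg
  simp only [Set.mem_setOf_eq, Set.mem_preimage, Set.mem_smul_set_iff_inv_smul_mem, smul_eq_mul] at hg ⊢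
  rwa [← mul_assoc] at hg

/-- The end `h^∞` lies in `C`. -/
def En (h : G) (C : Set G) : Prop := ∀ᶠ n : ℕ in Filter.atTop, h ^ n ∈ C

lemma ev_notin {h : G} (hh : ¬ IsOfFinOrder h) {S : Set G} (hS : S.Finite) :
    ∀ᶠ n : ℕ in Filter.atTop, h ^ n ∉ S := by
  have hi : Function.Injective (fun n : ℕ => h ^ n) := injective_pow_iff_not_isOfFinOrder.2 hh
  have := hS.preimage (f := fun n : ℕ => h ^ n) hi.injOn
  rw [← Nat.cofinite_eq_atTop]
  exact this.compl_mem_cofinite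

lemma En.compl {h : G} {C : Set G} (h1 : En h C) : ¬ En h Cᶜ := by
  intro h2
  obtain ⟨n, h3, h4⟩ := (Filter.Eventually.and h1 h2).exists
  exact h4 h3

lemma en_or {h : G} (hh : ¬ IsOfFinOrder h) {C : Set G} (hC : IsCut C) : En h C ∨ En h Cᶜ := by
  obtain ⟨N, hN⟩ := Filter.eventually_atTop.1 (ev_notin hh (hC h))
  have key : ∀ k, (h ^ N ∈ C ↔ h ^ (N + k) ∈ C) := by
    intro k
    induction k with
    | zero => simp
    | succ k ih =>
      have := hN (N + k) (by omega)
      simp only [Set.mem_setOf_eq, not_not, ← pow_succ] at this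
      rw [ih, this]; rfl
  by_cases hc : h ^ N ∈ C
  · left
    refine Filter.eventually_atTop.2 ⟨N, fun n hn => ?_⟩
    have := (key (n - N)).1 hc
    rwa [Nat.add_sub_cancel' hn] at this
  · right
    refine Filter.eventually_atTop.2 ⟨N, fun n hn => ?_⟩
    have := (not_congr (key (n - N))).1 hc
    rwa [Nat.add_sub_cancel' hn] at this

lemma en_compl {h : G} (hh : ¬ IsOfFinOrder h) {C : Set G} (hC : IsCut C) : En h Cᶜ ↔ ¬ En h C := by
  constructor
  · intro h1 h2; exact h2.compl h1
  · intro h1; exact (en_or hh hC).resolve_left h1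

lemma en_inter {h : G} {C D : Set G} : En h (C ∩ D) ↔ En h C ∧ En h D := Filter.eventually_and

lemma En.mono {h : G} {C D : Set G} (h1 : En h C) (hCD : C ⊆ D) : En h D :=
  Filter.Eventually.mono h1 fun _ hn => hCD hn

lemma fin_conj {h : G} (g : G) : IsOfFinOrder (g * h * g⁻¹) ↔ IsOfFinOrder h := by
  have := (MulAut.conj g).injective.isOfFinOrder_iff (f := (MulAut.conj g).toMonoidHom) (x := h)
  simpa using this

lemma en_right {h : G} (hh : ¬ IsOfFinOrder h) {C : Set G} (hC : IsCut C) (y : G) :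
    (∀ᶠ n : ℕ in Filter.atTop, h ^ n * y ∈ C) ↔ En h C := by
  have := ev_notin hh (hC y)
  constructor
  · intro h1
    filter_upwards [h1, this] with n h2 h3
    simp only [Set.mem_setOf_eq, not_not] at h3
    exact h3.2 h2
  · intro h1
    have h1 : ∀ᶠ n : ℕ in Filter.atTop, h ^ n ∈ C := h1
    filter_upwards [h1, this] with n h2 h3
    simp only [Set.mem_setOf_eq, not_not] at h3
    exact h3.1 h2

lemma en_conj {h : G} (hh : ¬ IsOfFinOrder h) {C : Set G} (hC : IsCut C) (g : G) :
    En (g * h * g⁻¹) (g • C) ↔ En h C := by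
  rw [← en_right hh hC g⁻¹]
  unfold En
  apply Filter.eventually_congr
  refine Filter.Eventually.of_forall fun n => ?_
  rw [conj_pow, Set.mem_smul_set_iff_inv_smul_mem, smul_eq_mul]
  simp only [mul_assoc, inv_mul_cancel_left]

lemma En.pow {h : G} {C : Set G} (h1 : En h C) {k : ℕ} (hk : 1 ≤ k) : En (h ^ k) C := by
  have : Filter.Tendsto (fun n : ℕ => k * n) Filter.atTop Filter.atTop :=
    Filter.tendsto_id.const_mul_atTop' (by omega)
  have := this.eventually h1
  unfold En
  simpa only [pow_mul] using this

lemma fin_pow {h : G} {k : ℕ} (hk : 1 ≤ k) (hh : ¬ IsOfFinOrder h) : ¬ IsOfFinOrder (h ^ k) := by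
  rw [isOfFinOrder_pow]
  push Not
  exact ⟨hh, by omega⟩

lemma en_pow {h : G} (hh : ¬ IsOfFinOrder h) {C : Set G} (hC : IsCut C) {k : ℕ} (hk : 1 ≤ k) :
    En (h ^ k) C ↔ En h C := by
  constructor
  · intro h1
    rcases en_or hh hC with h2 | h2
    · exact h2
    · exact absurd (h2.pow hk) h1.compl
  · intro h1; exact h1.pow hk

/-- `C` separates the two ends of `h`. -/
def Spl (h : G) (C : Set G) : Prop := ¬ (En h C ↔ En h⁻¹ C)

lemma fin_inv {h : G} (hh : ¬ IsOfFinOrder h) : ¬ IsOfFinOrder h⁻¹ := by rwa [isOfFinOrder_inv_iff]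

lemma spl_conj {h : G} (hh : ¬ IsOfFinOrder h) {C : Set G} (hC : IsCut C) (g : G) :
    Spl (g * h * g⁻¹) (g • C) ↔ Spl h C := by
  unfold Spl
  rw [en_conj hh hC, show (g * h * g⁻¹)⁻¹ = g * h⁻¹ * g⁻¹ by group, en_conj (fin_inv hh) hC]

lemma spl_pow {h : G} (hh : ¬ IsOfFinOrder h) {C : Set G} (hC : IsCut C) {k : ℕ} (hk : 1 ≤ k) :
    Spl (h ^ k) C ↔ Spl h C := by
  unfold Spl
  rw [en_pow hh hC hk, ← inv_pow, en_pow (fin_inv hh) hC hk]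

lemma spl_compl {h : G} (hh : ¬ IsOfFinOrder h) {C : Set G} (hC : IsCut C) :
    Spl h Cᶜ ↔ Spl h C := by
  unfold Spl
  rw [en_compl hh hC, en_compl (fin_inv hh) hC]
  tauto

lemma spl_inv {h : G} {C : Set G} : Spl h⁻¹ C ↔ Spl h C := by
  unfold Spl
  rw [inv_inv]
  tauto

/-- Translating strictly inside itself implies splitting. -/
lemma spl_of_lt {h : G} (hh : ¬ IsOfFinOrder h) {C : Set G} (hC : IsCut C) (hne : C.Nonempty) (hnu : C ≠ Set.univ)
    (hlt : h • C ⊆ C) : Spl h C := by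
  have hdec : ∀ n : ℕ, ∀ x, x ∈ C → h ^ n * x ∈ C := by
    intro n
    induction n with
    | zero => intro x hx; simpa using hx
    | succ n ih =>
      intro x hx
      rw [pow_succ', mul_assoc]
      exact hlt (Set.smul_mem_smul_set (ih x hx))
  have h1 : En h C := by
    obtain ⟨x, hx⟩ := hne
    rw [← en_right hh hC x]
    exact Filter.Eventually.of_forall fun n => hdec n x hx
  have h2 : ¬ En h⁻¹ C := by
    intro h3
    apply hnu
    rw [Set.eq_univ_iff_forall]
    intro x
    obtain ⟨n, hn⟩ := ((en_right (fin_inv hh) hC x).2 h3).exists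
    have := hdec n _ hn
    rwa [inv_pow, mul_inv_cancel_left] at this
  unfold Spl
  tauto

end Cut

end

section

open Pointwise

namespace Cut

variable {G : Type*} [Group G] {ι : Type*} (s : ι → G)

/-- The edge boundary. -/
def bd (C : Set G) : Set (G × ι) := {e | ¬ (e.1 ∈ C ↔ e.1 * s e.2 ∈ C)}

/-- The weight. -/
noncomputable def wt (C : Set G) : ℕ := (bd s C).ncard

lemma mem_bd {C : Set G} {e : G × ι} : e ∈ bd s C ↔ ¬ (e.1 ∈ C ↔ e.1 * s e.2 ∈ C) := Iff.rfl

lemma bd_fin [Finite ι] {C : Set G} (hC : IsCut C) : (bd s C).Finite := by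
  have : bd s C ⊆ ⋃ i : ι, (fun g => (g, i)) '' {g | ¬ (g ∈ C ↔ g * s i ∈ C)} := by
    rintro ⟨g, i⟩ h
    simp only [Set.mem_iUnion]
    exact ⟨i, g, h, rfl⟩
  exact (Set.finite_iUnion fun i => (hC (s i)).image _).subset this

lemma cut_of_bd (hs : Subgroup.closure (Set.range s) = ⊤) {C : Set G} (h : (bd s C).Finite) : IsCut C := by
  apply isCut_of_closure hs
  rintro _ ⟨i, rfl⟩
  refine (h.preimage (f := fun g => (g, i)) (fun a _ b _ e => (Prod.ext_iff.1 e).1)).subset ?_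
  intro g hg
  exact hg

lemma bd_compl (C : Set G) : bd s Cᶜ = bd s C := by
  ext e
  simp only [mem_bd, Set.mem_compl_iff]
  tauto

lemma wt_compl (C : Set G) : wt s Cᶜ = wt s C := by rw [wt, bd_compl, wt]

lemma bd_smul (g : G) (C : Set G) : bd s (g • C) = (fun e : G × ι => (g * e.1, e.2)) '' bd s C := by
  ext ⟨x, i⟩
  constructor
  · intro h
    refine ⟨(g⁻¹ * x, i), ?_, by simp⟩
    rw [mem_bd] at h ⊢
    simpa [Set.mem_smul_set_iff_inv_smul_mem, mul_assoc] using h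
  · rintro ⟨⟨y, j⟩, h, e⟩
    simp only [Prod.mk.injEq] at e
    obtain ⟨rfl, rfl⟩ := e
    rw [mem_bd] at h ⊢
    simpa [Set.mem_smul_set_iff_inv_smul_mem, mul_assoc] using h

lemma wt_smul (g : G) (C : Set G) : wt s (g • C) = wt s C := by
  rw [wt, bd_smul, Set.ncard_image_of_injective, wt]
  rintro ⟨a, i⟩ ⟨b, j⟩ h
  simpa using h

lemma wt_submod [Finite ι] {C D : Set G} (hC : IsCut C) (hD : IsCut D) :
    wt s (C ∩ D) + wt s (Cᶜ ∩ Dᶜ) ≤ wt s C + wt s D := by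
  have f1 := bd_fin s hC
  have f2 := bd_fin s hD
  have f3 := bd_fin s (hC.inter hD)
  have f4 := bd_fin s (hC.compl.inter hD.compl)
  unfold wt
  rw [← Set.ncard_union_add_ncard_inter _ _ f1 f2, ← Set.ncard_union_add_ncard_inter _ _ f3 f4]
  refine add_le_add (Set.ncard_le_ncard ?_ (f1.union f2)) (Set.ncard_le_ncard ?_ (f1.inter_of_left _))
  · intro e he
    simp only [Set.mem_union, mem_bd, Set.mem_inter_iff, Set.mem_compl_iff] at he ⊢
    tauto
  · intro e he
    simp only [mem_bd, Set.mem_inter_iff, Set.mem_compl_iff] at he ⊢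
    tauto

lemma trivial_of_wt [Finite ι] (hs : Subgroup.closure (Set.range s) = ⊤) {C : Set G} (hC : IsCut C) (h : wt s C = 0) :
    C = ∅ ∨ C = Set.univ := by
  rw [wt, Set.ncard_eq_zero (bd_fin s hC)] at h
  have h1 : ∀ y : G, ∀ g, g ∈ C ↔ g * y ∈ C := by
    intro y
    have hy : y ∈ Subgroup.closure (Set.range s) := by rw [hs]; trivial
    induction hy using Subgroup.closure_induction with
    | mem y hy =>
      obtain ⟨i, rfl⟩ := hy
      intro g
      by_contra hn
      have : (g, i) ∈ bd s C := hn
      rw [h] at this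
      exact this
    | one => simp
    | mul a b _ _ ha hb => intro g; rw [ha, hb, mul_assoc]
    | inv a _ ha => intro g; rw [ha (g * a⁻¹), inv_mul_cancel_right]
  by_cases hc : (1 : G) ∈ C
  · right
    rw [Set.eq_univ_iff_forall]
    intro x
    simpa using (h1 x 1).1 hc
  · left
    rw [Set.eq_empty_iff_forall_notMem]
    intro x hx
    apply hc
    rw [h1 x 1, one_mul]
    exact hx

/-- Connectedness. -/
def Conn (C : Set G) : Prop :=
  ∀ D ⊆ C, D.Nonempty → (∀ g i, g ∈ C → g * s i ∈ C → (g ∈ D ↔ g * s i ∈ D)) → D = C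

/-- Minimal weight cuts splitting `h`. -/
structure IsMin (h : G) (C : Set G) : Prop where
  inf : ¬ IsOfFinOrder h
  cut : IsCut C
  spl : Spl h C
  min : ∀ D, IsCut D → Spl h D → wt s C ≤ wt s D

lemma IsMin.compl {s : ι → G} {h : G} {C : Set G} (hC : IsMin s h C) : IsMin s h Cᶜ :=
  ⟨hC.inf, hC.cut.compl, (spl_compl hC.inf hC.cut).2 hC.spl, by rw [wt_compl]; exact hC.min⟩

lemma IsMin.smul {s : ι → G} {h : G} {C : Set G} (hC : IsMin s h C) (g : G) : IsMin s (g * h * g⁻¹) (g • C) := by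
  refine ⟨(fin_conj g).not.2 hC.inf, hC.cut.smul g, (spl_conj hC.inf hC.cut g).2 hC.spl, fun D hD hD' => ?_⟩
  rw [wt_smul]
  have := hC.min (g⁻¹ • D) (hD.smul _) ?_
  · rwa [wt_smul] at this
  · have := (spl_conj ((fin_conj g).not.2 hC.inf) hD g⁻¹).2 hD'
    have e : g⁻¹ * (g * h * g⁻¹) * g⁻¹⁻¹ = h := by group
    rwa [e] at this

lemma en_split {h : G} (hh : ¬ IsOfFinOrder h) {C D : Set G} (hD : IsCut D) (hDC : D ⊆ C) :
    En h C ↔ En h D ∨ En h (C ∩ Dᶜ) := by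
  constructor
  · intro h1
    rcases en_or hh hD with h2 | h2
    · exact Or.inl h2
    · exact Or.inr (en_inter.2 ⟨h1, h2⟩)
  · rintro (h1 | h1)
    · exact h1.mono hDC
    · exact h1.mono Set.inter_subset_left

lemma IsMin.conn [Finite ι] {s : ι → G} (hs : Subgroup.closure (Set.range s) = ⊤) {h : G} {C : Set G}
    (hC : IsMin s h C) : Conn s C := by
  intro D hDC hDne hed
  have fC := bd_fin s hC.cut
  have hb1 : bd s D ∪ bd s (C ∩ Dᶜ) ⊆ bd s C := by
    rintro ⟨g, i⟩ he
    simp only [Set.mem_union, mem_bd, Set.mem_inter_iff, Set.mem_compl_iff] at he ⊢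
    have := hed g i
    have := @hDC g
    have := @hDC (g * s i)
    tauto
  have hb2 : Disjoint (bd s D) (bd s (C ∩ Dᶜ)) := by
    rw [Set.disjoint_left]
    rintro ⟨g, i⟩ he he'
    simp only [mem_bd, Set.mem_inter_iff, Set.mem_compl_iff] at he he'
    have := hed g i
    have := @hDC g
    have := @hDC (g * s i)
    tauto
  have f1 := fC.subset (Set.subset_union_left.trans hb1)
  have f2 := fC.subset (Set.subset_union_right.trans hb1)
  have hD : IsCut D := cut_of_bd s hs f1
  have hD' : IsCut (C ∩ Dᶜ) := hC.cut.inter hD.compl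
  have hw : wt s D + wt s (C ∩ Dᶜ) ≤ wt s C := by
    unfold wt
    rw [← Set.ncard_union_eq hb2 f1 f2]
    exact Set.ncard_le_ncard hb1 fC
  have hsp : Spl h D ∨ Spl h (C ∩ Dᶜ) := by
    have := hC.spl
    unfold Spl at this ⊢
    rw [en_split hC.inf hD hDC, en_split (fin_inv hC.inf) hD hDC] at this
    tauto
  obtain ⟨d, hd⟩ := hDne
  rcases hsp with h1 | h1
  · have := hC.min _ hD h1
    rcases trivial_of_wt s hs hD' (by omega) with h2 | h2
    · apply subset_antisymm hDC
      intro x hx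
      by_contra hxD
      have : x ∈ C ∩ Dᶜ := ⟨hx, hxD⟩
      rw [h2] at this
      exact this
    · have : d ∈ C ∩ Dᶜ := by rw [h2]; trivial
      exact absurd hd this.2
  · have := hC.min _ hD' h1
    rcases trivial_of_wt s hs hD (by omega) with h2 | h2
    · rw [h2] at hd
      exact absurd hd (Set.notMem_empty d)
    · apply subset_antisymm hDC
      rw [h2]
      exact Set.subset_univ _

/-- Finitely many tight cuts separate two given points. -/
lemma sep_fin (M : ℕ) (x y : G) :
    {C : Set G | Conn s C ∧ Conn s Cᶜ ∧ (bd s C).Finite ∧ wt s C ≤ M ∧ x ∈ C ∧ y ∉ C}.Finite := by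
  by_contra hinf
  set 𝓕 := {C : Set G | Conn s C ∧ Conn s Cᶜ ∧ (bd s C).Finite ∧ wt s C ≤ M ∧ x ∈ C ∧ y ∉ C} with h𝓕
  have hne : (Filter.cofinite ⊓ Filter.principal 𝓕).NeBot := Set.Infinite.cofinite_inf_principal_neBot hinf
  set U : Ultrafilter (Set G) := Ultrafilter.of (Filter.cofinite ⊓ Filter.principal 𝓕) with hU
  have hU1 : ∀ᶠ C : Set G in U, C ∈ 𝓕 :=
    Ultrafilter.of_le _ (Filter.mem_inf_of_right (Filter.mem_principal_self 𝓕))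
  have hU2 : ∀ D : Set G, ∀ᶠ C : Set G in U, C ≠ D := fun D =>
    Ultrafilter.of_le _ (Filter.mem_inf_of_left (Set.finite_singleton D).compl_mem_cofinite)
  set L : Set G := {g | ∀ᶠ C : Set G in U, g ∈ C} with hL
  have hmem : ∀ g, ∀ᶠ C : Set G in U, (g ∈ C ↔ g ∈ L) := by
    intro g
    by_cases hg : g ∈ L
    · have hg' : ∀ᶠ C : Set G in U, g ∈ C := hg
      filter_upwards [hg'] with C hC
      tauto
    · have hg' : ∀ᶠ C : Set G in U, ¬ g ∈ C := Ultrafilter.eventually_not.2 hg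
      filter_upwards [hg'] with C hC
      tauto
  have hbd : ∀ e ∈ bd s L, ∀ᶠ C : Set G in U, e ∈ bd s C := by
    intro e he
    filter_upwards [hmem e.1, hmem (e.1 * s e.2)] with C h1 h2
    rw [mem_bd] at he ⊢
    rwa [h1, h2]
  have hLf : (bd s L).Finite := by
    by_contra hLi
    obtain ⟨t, ht, htc⟩ := Set.Infinite.exists_subset_card_eq hLi (M + 1)
    have : ∀ᶠ C : Set G in U, ∀ e ∈ (t : Set (G × ι)), e ∈ bd s C := by
      rw [Filter.eventually_all_finite t.finite_toSet]
      exact fun e he => hbd e (ht he)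
    obtain ⟨C, h1, h2⟩ := (this.and hU1).exists
    have h3 := Set.ncard_le_ncard (s := (t : Set (G × ι))) h1 h2.2.2.1
    rw [Set.ncard_coe_finset, htc] at h3
    have h4 : wt s C ≤ M := h2.2.2.2.1
    unfold wt at h4
    omega
  have h1 : ∀ᶠ C : Set G in U, ∀ e ∈ bd s L, e ∈ bd s C := by
    rw [Filter.eventually_all_finite hLf]
    exact hbd
  obtain ⟨C, h2, h3, h4, h5, h6⟩ := (h1.and (hU1.and ((hU2 L).and ((hmem x).and (hmem y))))).exists
  apply h4
  have hC1 := h3.1 (C ∩ L) Set.inter_subset_left ⟨x, h3.2.2.2.2.1, h5.1 h3.2.2.2.2.1⟩ (by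
    intro g i hg hgi
    have := h2 (g, i)
    simp only [mem_bd] at this
    simp only [Set.mem_inter_iff]
    tauto)
  have hC2 := h3.2.1 (Cᶜ ∩ Lᶜ) Set.inter_subset_left ⟨y, h3.2.2.2.2.2, fun h => h3.2.2.2.2.2 (h6.2 h)⟩ (by
    intro g i hg hgi
    have := h2 (g, i)
    simp only [mem_bd] at this
    simp only [Set.mem_inter_iff, Set.mem_compl_iff] at hg hgi ⊢
    tauto)
  apply subset_antisymm
  · exact Set.inter_eq_left.1 hC1
  · exact Set.compl_subset_compl.1 (Set.inter_eq_left.1 hC2)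

end Cut

end

section

open Pointwise

namespace Cut

variable {G : Type*} [Group G] {ι : Type*} (s : ι → G)

/-- Crossing sets. -/
def Cross (C D : Set G) : Prop :=
  (C ∩ D).Nonempty ∧ (C ∩ Dᶜ).Nonempty ∧ (Cᶜ ∩ D).Nonempty ∧ (Cᶜ ∩ Dᶜ).Nonempty

lemma Cross.symm {C D : Set G} (h : Cross C D) : Cross D C := by
  obtain ⟨h1, h2, h3, h4⟩ := h
  refine ⟨?_, ?_, ?_, ?_⟩ <;> rw [Set.inter_comm] <;> assumption

lemma Cross.compl_right {C D : Set G} (h : Cross C D) : Cross C Dᶜ := by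
  obtain ⟨h1, h2, h3, h4⟩ := h
  refine ⟨?_, ?_, ?_, ?_⟩ <;> try rw [_root_.compl_compl]
  all_goals assumption

lemma Cross.compl_left {C D : Set G} (h : Cross C D) : Cross Cᶜ D := h.symm.compl_right.symm

lemma cross_compl_left {C D : Set G} : Cross Cᶜ D ↔ Cross C D :=
  ⟨fun h => by have := h.compl_left; rwa [_root_.compl_compl] at this, Cross.compl_left⟩

lemma Cross.smul {C D : Set G} (h : Cross C D) (g : G) : Cross (g • C) (g • D) := by
  obtain ⟨h1, h2, h3, h4⟩ := h
  refine ⟨?_, ?_, ?_, ?_⟩ <;> simp only [← Set.smul_set_compl, ← Set.smul_set_inter] <;>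
    apply Set.Nonempty.smul_set <;> assumption

lemma not_cross {C D : Set G} : ¬ Cross C D ↔ C ⊆ D ∨ D ⊆ C ∨ C ⊆ Dᶜ ∨ Cᶜ ⊆ D := by
  unfold Cross
  have e1 : (C ∩ D).Nonempty ↔ ¬ C ⊆ Dᶜ := by
    rw [← Set.not_disjoint_iff_nonempty_inter, Set.subset_compl_iff_disjoint_right]
  have e2 : (C ∩ Dᶜ).Nonempty ↔ ¬ C ⊆ D := Set.inter_compl_nonempty_iff
  have e3 : (Cᶜ ∩ D).Nonempty ↔ ¬ D ⊆ C := by rw [Set.inter_comm]; exact Set.inter_compl_nonempty_iff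
  have e4 : (Cᶜ ∩ Dᶜ).Nonempty ↔ ¬ Cᶜ ⊆ D := Set.inter_compl_nonempty_iff
  rw [e1, e2, e3, e4]
  tauto

/-- All minimal cuts. -/
def CMin : Set (Set G) := {C | ∃ h, IsMin s h C}

lemma cmin_compl {C : Set G} (h : C ∈ CMin s) : Cᶜ ∈ CMin s := by
  obtain ⟨a, ha⟩ := h
  exact ⟨a, ha.compl⟩

lemma cmin_smul {C : Set G} (h : C ∈ CMin s) (g : G) : g • C ∈ CMin s := by
  obtain ⟨a, ha⟩ := h
  exact ⟨_, ha.smul g⟩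

/-- Standing hypotheses: generation and boundedness. -/
structure Std (M : ℕ) : Prop where
  gen : Subgroup.closure (Set.range s) = ⊤
  bdd : ∀ h : G, ¬ IsOfFinOrder h → ∃ C, IsCut C ∧ Spl h C ∧ wt s C ≤ M

variable {s} {M : ℕ} [Finite ι]

lemma Std.sep (hs : Std s M) (x y : G) : {C ∈ CMin s | x ∈ C ∧ y ∉ C}.Finite := by
  refine (sep_fin s M x y).subset ?_
  rintro C ⟨⟨h, hC⟩, hx, hy⟩
  refine ⟨hC.conn hs.gen, hC.compl.conn hs.gen, bd_fin s hC.cut, ?_, hx, hy⟩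
  obtain ⟨D, h1, h2, h3⟩ := hs.bdd h hC.inf
  exact (hC.min D h1 h2).trans h3

/-- Endpoints of boundary edges. -/
def Vt (s : ι → G) (C : Set G) : Set G :=
  (fun e : G × ι => e.1) '' bd s C ∪ (fun e : G × ι => e.1 * s e.2) '' bd s C

lemma cross_sep_aux (hs : Std s M) {C D : Set G} (hD : D ∈ CMin s) (hX : Cross C D) :
    ∃ p ∈ Vt s C, p ∈ D := by
  by_contra hn
  push Not at hn
  obtain ⟨h, hD⟩ := hD
  have := hD.conn hs.gen (C ∩ D) Set.inter_subset_right hX.1 (by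
    intro g i hg hgi
    by_contra hne
    have : (g, i) ∈ bd s C := by
      rw [mem_bd]
      simp only [Set.mem_inter_iff] at hne
      simp only
      tauto
    exact hn g (Or.inl ⟨_, this, rfl⟩) hg)
  obtain ⟨x, hx1, hx2⟩ := hX.2.2.1
  rw [← this] at hx2
  exact hx1 hx2.1

lemma Std.cross_fin (hs : Std s M) {C : Set G} (hC : IsCut C) : {D ∈ CMin s | Cross C D}.Finite := by
  have hV : (Vt s C).Finite := ((bd_fin s hC).image _).union ((bd_fin s hC).image _)
  refine (hV.biUnion fun p _ => hV.biUnion fun q _ => hs.sep p q).subset ?_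
  rintro D ⟨hD, hX⟩
  obtain ⟨p, hp, hpD⟩ := cross_sep_aux hs hD hX
  obtain ⟨q, hq, hqD⟩ := cross_sep_aux hs (cmin_compl s hD) hX.compl_right
  simp only [Set.mem_iUnion]
  exact ⟨p, hp, q, hq, hD, hpD, hqD⟩

/-- Number of crossings. -/
noncomputable def mc (s : ι → G) (C : Set G) : ℕ := {D ∈ CMin s | Cross C D}.ncard

lemma mc_compl (C : Set G) : mc s Cᶜ = mc s C := by
  unfold mc
  simp only [cross_compl_left]

lemma mc_smul (g : G) (C : Set G) : mc s (g • C) = mc s C := by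
  unfold mc
  have : {D ∈ CMin s | Cross (g • C) D} = (fun D => g • D) '' {D ∈ CMin s | Cross C D} := by
    ext D
    constructor
    · rintro ⟨h1, h2⟩
      refine ⟨g⁻¹ • D, ⟨cmin_smul s h1 _, ?_⟩, smul_inv_smul g D⟩
      have := h2.smul g⁻¹
      rwa [inv_smul_smul] at this
    · rintro ⟨D, ⟨h1, h2⟩, rfl⟩
      exact ⟨cmin_smul s h1 g, h2.smul g⟩
  rw [this, Set.ncard_image_of_injective _ (MulAction.injective g)]

lemma mc_corner (hs : Std s M) {C D : Set G} (hC : C ∈ CMin s) (hDc : IsCut D) (hX : Cross C D) :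
    mc s (C ∩ D) + mc s (Cᶜ ∩ Dᶜ) < mc s C + mc s D := by
  have hCc : IsCut C := hC.choose_spec.cut
  have f1 := hs.cross_fin hCc
  have f2 := hs.cross_fin hDc
  have f3 := hs.cross_fin (hCc.inter hDc)
  have f4 := hs.cross_fin (hCc.compl.inter hDc.compl)
  unfold mc
  rw [← Set.ncard_union_add_ncard_inter _ _ f1 f2, ← Set.ncard_union_add_ncard_inter _ _ f3 f4]
  refine add_lt_add_of_lt_of_le (Set.ncard_lt_ncard ?_ (f1.union f2)) (Set.ncard_le_ncard ?_ (f1.inter_of_left _))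
  · rw [Set.ssubset_iff_of_subset]
    · refine ⟨C, Or.inr ⟨hC, hX.symm⟩, ?_⟩
      rintro (⟨_, h⟩ | ⟨_, h⟩)
      · obtain ⟨x, hx⟩ := h.2.1
        exact hx.2 hx.1.1
      · obtain ⟨x, hx⟩ := h.1
        exact hx.1.1 hx.2
    · rintro F (⟨hF, h⟩ | ⟨hF, h⟩)
      · by_contra hn
        simp only [Set.mem_union, Set.mem_sep_iff, hF, true_and, not_or, not_cross] at hn
        refine absurd h (not_cross.2 ?_)
        obtain ⟨n1, n2⟩ := hn
        obtain ⟨z, hz1, hz2⟩ := hX.2.2.2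
        simp only [Set.subset_def, Set.mem_inter_iff, Set.mem_compl_iff] at n1 n2 hz1 hz2 ⊢
        have := hX.2.2.2
        rcases n1 with n1 | n1 | n1 | n1 <;> rcases n2 with n2 | n2 | n2 | n2 <;> grind
      · by_contra hn
        simp only [Set.mem_union, Set.mem_sep_iff, hF, true_and, not_or, not_cross] at hn
        refine absurd h (not_cross.2 ?_)
        obtain ⟨n1, n2⟩ := hn
        obtain ⟨z, hz1, hz2⟩ := hX.1
        simp only [Set.subset_def, Set.mem_inter_iff, Set.mem_compl_iff] at n1 n2 hz1 hz2 ⊢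
        rcases n1 with n1 | n1 | n1 | n1 <;> rcases n2 with n2 | n2 | n2 | n2 <;> grind
  · rintro F ⟨⟨hF, h⟩, ⟨_, h'⟩⟩
    have k1 : Cross C F :=
      ⟨h.1.mono (by intro x hx; exact ⟨hx.1.1, hx.2⟩), h.2.1.mono (by intro x hx; exact ⟨hx.1.1, hx.2⟩),
       h'.1.mono (by intro x hx; exact ⟨hx.1.1, hx.2⟩), h'.2.1.mono (by intro x hx; exact ⟨hx.1.1, hx.2⟩)⟩
    have k2 : Cross D F :=
      ⟨h.1.mono (by intro x hx; exact ⟨hx.1.2, hx.2⟩), h.2.1.mono (by intro x hx; exact ⟨hx.1.2, hx.2⟩),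
       h'.1.mono (by intro x hx; exact ⟨hx.1.2, hx.2⟩), h'.2.1.mono (by intro x hx; exact ⟨hx.1.2, hx.2⟩)⟩
    exact ⟨⟨hF, k1⟩, ⟨hF, k2⟩⟩

/-- Optimal cuts splitting `h`. -/
structure IsOpt (s : ι → G) (h : G) (C : Set G) : Prop where
  min : IsMin s h C
  opt : ∀ D, IsMin s h D → mc s C ≤ mc s D

lemma IsOpt.compl {h : G} {C : Set G} (hC : IsOpt s h C) : IsOpt s h Cᶜ :=
  ⟨hC.min.compl, by rw [mc_compl]; exact hC.opt⟩

lemma IsOpt.smul {h : G} {C : Set G} (hC : IsOpt s h C) (g : G) : IsOpt s (g * h * g⁻¹) (g • C) := by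
  refine ⟨hC.min.smul g, fun D hD => ?_⟩
  have h1 := hD.smul g⁻¹
  have e : g⁻¹ * (g * h * g⁻¹) * g⁻¹⁻¹ = h := by group
  rw [e] at h1
  have := hC.opt _ h1
  rwa [mc_smul] at this ⊢

lemma IsOpt.inv {h : G} {C : Set G} (hC : IsOpt s h C) : IsOpt s h⁻¹ C := by
  have key : ∀ {D : Set G} {k : G}, IsMin s k D → IsMin s k⁻¹ D := fun {D k} hD =>
    ⟨fin_inv hD.inf, hD.cut, spl_inv.2 hD.spl, fun D' h1 h2 => hD.min D' h1 (spl_inv.1 h2)⟩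
  refine ⟨key hC.min, fun D hD => hC.opt D ?_⟩
  have := key hD
  rwa [inv_inv] at this

lemma Std.exists_opt (hs : Std s M) {h : G} (hh : ¬ IsOfFinOrder h) : ∃ C, IsOpt s h C := by
  have h1 : ∃ C, IsMin s h C := by
    have hne : {C | IsCut C ∧ Spl h C}.Nonempty := by
      obtain ⟨C, h1, h2, _⟩ := hs.bdd h hh
      exact ⟨C, h1, h2⟩
    refine ⟨Function.argminOn (wt s) _ hne, hh, (Function.argminOn_mem (wt s) _ hne).1,
      (Function.argminOn_mem (wt s) _ hne).2, fun D hD hD' => ?_⟩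
    exact Function.argminOn_le (wt s) {C | IsCut C ∧ Spl h C} (a := D) ⟨hD, hD'⟩
  have h2 : {C | IsMin s h C}.Nonempty := h1
  refine ⟨Function.argminOn (mc s) _ h2, Function.argminOn_mem (mc s) _ h2, fun D hD => ?_⟩
  exact Function.argminOn_le (mc s) _ (a := D) hD

/-- comparison with an optimal cut -/
lemma IsOpt.cmp {h : G} {C X : Set G} (hC : IsOpt s h C) (hX : IsCut X) (hs : Spl h X) :
    wt s C ≤ wt s X ∧ (wt s X = wt s C → mc s C ≤ mc s X) := by
  refine ⟨hC.min.min X hX hs, fun e => hC.opt X ⟨hC.min.inf, hX, hs, ?_⟩⟩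
  rw [e]
  exact hC.min.min

lemma nested_aux (hs : Std s M) {α β : G} {C D : Set G} (hC : IsOpt s α C) (hD : IsOpt s β D)
    (hX : Cross C D) (h1 : En α C) (h2 : En β D) : False := by
  have iα := hC.min.inf
  have iβ := hD.min.inf
  have iα' := fin_inv iα
  have iβ' := fin_inv iβ
  have cC := hC.min.cut
  have cD := hD.min.cut
  have h3 : ¬ En α⁻¹ C := by have := hC.min.spl; unfold Spl at this; tauto
  have h4 : ¬ En β⁻¹ D := by have := hD.min.spl; unfold Spl at this; tauto
  have w1 := wt_submod s cC cD
  have w2 := wt_submod s cC cD.compl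
  have m1 := mc_corner hs ⟨α, hC.min⟩ cD hX
  have m2 := mc_corner hs ⟨α, hC.min⟩ cD.compl hX.compl_right
  rw [wt_compl] at w2
  rw [mc_compl] at m2
  rw [_root_.compl_compl] at w2 m2
  have c11 := cC.inter cD
  have c10 := cC.inter cD.compl
  have c01 := cC.compl.inter cD
  have c00 := cC.compl.inter cD.compl
  have a11 : En α D → Spl α (C ∩ D) := by
    intro h; unfold Spl; rw [en_inter, en_inter]; simp [h, h1, h3]
  have a10 : ¬ En α D → Spl α (C ∩ Dᶜ) := by
    intro h; unfold Spl; rw [en_inter, en_inter, en_compl iα cD]; simp [h, h1, h3]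
  have a01 : En α⁻¹ D → Spl α (Cᶜ ∩ D) := by
    intro h; unfold Spl; rw [en_inter, en_inter, en_compl iα cC, en_compl iα' cC]; simp [h, h1, h3]
  have a00 : ¬ En α⁻¹ D → Spl α (Cᶜ ∩ Dᶜ) := by
    intro h; unfold Spl
    rw [en_inter, en_inter, en_compl iα cC, en_compl iα' cC, en_compl iα cD, en_compl iα' cD]; simp [h, h1, h3]
  have b11 : En β C → Spl β (C ∩ D) := by
    intro h; unfold Spl; rw [en_inter, en_inter]; simp [h, h2, h4]
  have b01 : ¬ En β C → Spl β (Cᶜ ∩ D) := by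
    intro h; unfold Spl; rw [en_inter, en_inter, en_compl iβ cC]; simp [h, h2, h4]
  have b10 : En β⁻¹ C → Spl β (C ∩ Dᶜ) := by
    intro h; unfold Spl; rw [en_inter, en_inter, en_compl iβ cD, en_compl iβ' cD]; simp [h, h2, h4]
  have b00 : ¬ En β⁻¹ C → Spl β (Cᶜ ∩ Dᶜ) := by
    intro h; unfold Spl
    rw [en_inter, en_inter, en_compl iβ cC, en_compl iβ' cC, en_compl iβ cD, en_compl iβ' cD]; simp [h, h2, h4]
  have A11 := fun h => hC.cmp c11 (a11 h)
  have A10 := fun h => hC.cmp c10 (a10 h)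
  have A01 := fun h => hC.cmp c01 (a01 h)
  have A00 := fun h => hC.cmp c00 (a00 h)
  have B11 := fun h => hD.cmp c11 (b11 h)
  have B10 := fun h => hD.cmp c10 (b10 h)
  have B01 := fun h => hD.cmp c01 (b01 h)
  have B00 := fun h => hD.cmp c00 (b00 h)
  clear a11 a10 a01 a00 b11 b10 b01 b00
  by_cases p : En α D <;> by_cases q : En α⁻¹ D <;> by_cases r : En β C <;> by_cases t : En β⁻¹ C <;>
    simp only [p, q, r, t, true_imp_iff, not_true, not_false_iff, false_imp_iff] at A11 A10 A01 A00 B11 B10 B01 B00 <;>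
    omega

lemma Std.nested (hs : Std s M) {α β : G} {C D : Set G} (hC : IsOpt s α C) (hD : IsOpt s β D) :
    ¬ Cross C D := by
  intro hX
  have hC' : En α C ∨ En α⁻¹ C := by have := hC.min.spl; unfold Spl at this; tauto
  have hD' : En β D ∨ En β⁻¹ D := by have := hD.min.spl; unfold Spl at this; tauto
  rcases hC' with h1 | h1 <;> rcases hD' with h2 | h2
  · exact nested_aux hs hC hD hX h1 h2
  · exact nested_aux hs hC hD.inv hX h1 h2
  · exact nested_aux hs hC.inv hD hX h1 h2
  · exact nested_aux hs hC.inv hD.inv hX h1 h2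

end Cut

end

section

open Pointwise

namespace Cut

variable {G : Type*} [Group G]

/-- A discrete nested family of cuts. -/
structure Nest (𝓔 : Set (Set G)) : Prop where
  ne : ∀ C ∈ 𝓔, C.Nonempty
  compl : ∀ C ∈ 𝓔, Cᶜ ∈ 𝓔
  smul : ∀ C ∈ 𝓔, ∀ g : G, g • C ∈ 𝓔
  cut : ∀ C ∈ 𝓔, IsCut C
  cross : ∀ C ∈ 𝓔, ∀ D ∈ 𝓔, ¬ Cross C D
  sep : ∀ x y : G, {C ∈ 𝓔 | x ∈ C ∧ y ∉ C}.Finite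
  stab : ∀ C ∈ 𝓔, {g : G | g • C = C}.Finite
  orb : ∃ S : Finset (Set G), ∀ C ∈ 𝓔, ∃ g : G, ∃ D ∈ S, C = g • D
  comp : ∀ h : G, ¬ IsOfFinOrder h → ∃ C ∈ 𝓔, Spl h C

lemma Std.nest {ι : Type*} [Finite ι] {s : ι → G} {M : ℕ} (hs : Std s M) : Nest {C | ∃ h, IsOpt s h C} := by
  have hne : ∀ C, (∃ h, IsOpt s h C) → C.Nonempty := by
    rintro C ⟨h, hC⟩
    rw [Set.nonempty_iff_ne_empty]
    rintro rfl
    apply hC.min.spl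
    simp [En]
  have hco : ∀ C, (∃ h, IsOpt s h C) → ∃ h, IsOpt s h Cᶜ := by
    rintro C ⟨h, hC⟩
    exact ⟨h, hC.compl⟩
  have hbd : ∀ C, (∃ h, IsOpt s h C) → ∃ e, e ∈ bd s C := by
    intro C hC
    by_contra hn
    push Not at hn
    have h0 : bd s C = ∅ := Set.eq_empty_iff_forall_notMem.2 hn
    obtain ⟨x, hx⟩ := hne C hC
    obtain ⟨y, hy⟩ := hne _ (hco C hC)
    obtain ⟨h, hC⟩ := hC
    rcases trivial_of_wt s hs.gen hC.min.cut (by rw [wt, h0, Set.ncard_empty]) with h1 | h1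
    · rw [h1] at hx; exact hx
    · rw [h1] at hy; exact hy trivial
  refine ⟨hne, hco, ?_, ?_, ?_, ?_, ?_, ?_, ?_⟩
  · rintro C ⟨h, hC⟩ g
    exact ⟨_, hC.smul g⟩
  · rintro C ⟨h, hC⟩
    exact hC.min.cut
  · rintro C ⟨h, hC⟩ D ⟨k, hD⟩
    exact hs.nested hC hD
  · intro x y
    refine (hs.sep x y).subset ?_
    rintro C ⟨⟨h, hC⟩, h1⟩
    exact ⟨⟨h, hC.min⟩, h1⟩
  · intro C hC
    obtain ⟨⟨x, i⟩, he⟩ := hbd C hC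
    obtain ⟨h, hC⟩ := hC
    refine ((bd_fin s hC.min.cut).preimage (f := fun g => (g * x, i)) ?_).subset ?_
    · intro a _ b _ e
      simpa using e
    · intro g hg
      have hg : g • C = C := hg
      change (g * x, i) ∈ bd s C
      rw [← hg, bd_smul]
      exact ⟨(x, i), he, rfl⟩
  · have hf : (⋃ i : ι, ({C ∈ CMin s | 1 ∈ C ∧ s i ∉ C} ∪ {C ∈ CMin s | s i ∈ C ∧ 1 ∉ C})).Finite :=
      Set.finite_iUnion fun i => (hs.sep _ _).union (hs.sep _ _)
    refine ⟨hf.toFinset, fun C hC => ?_⟩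
    obtain ⟨⟨x, i⟩, he⟩ := hbd C hC
    obtain ⟨h, hC⟩ := hC
    refine ⟨x, x⁻¹ • C, ?_, (smul_inv_smul x C).symm⟩
    rw [Set.Finite.mem_toFinset]
    have hm : x⁻¹ • C ∈ CMin s := cmin_smul s ⟨h, hC.min⟩ _
    simp only [Set.mem_iUnion]
    refine ⟨i, ?_⟩
    rw [mem_bd] at he
    simp only [Set.mem_union, Set.mem_sep_iff, hm, true_and, Set.mem_smul_set_iff_inv_smul_mem, inv_inv,
      smul_eq_mul, mul_one]
    tauto
  · intro h hh
    obtain ⟨C, hC⟩ := hs.exists_opt hh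
    exact ⟨C, ⟨h, hC⟩, hC.min.spl⟩

lemma spl_compl' {h : G} (hh : ¬ IsOfFinOrder h) {C : Set G} (hC : IsCut C) (hs : Spl h C) : Spl h Cᶜ :=
  (spl_compl hh hC).2 hs

/-- Minimal complete subfamily. -/
lemma Nest.minimal {𝓔 : Set (Set G)} (h : Nest 𝓔) : ∃ 𝓔' : Set (Set G), Nest 𝓔' ∧
    ∀ A ∈ 𝓔', ∃ t : G, ¬ IsOfFinOrder t ∧ ∀ B ∈ 𝓔', Spl t B → ∃ g : G, B = g • A ∨ B = g • Aᶜ := by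
  classical
  obtain ⟨S, hS⟩ := h.orb
  set F : Finset (Set G) → Set (Set G) := fun J => {C ∈ 𝓔 | ∃ g : G, ∃ D ∈ J, C = g • D ∨ C = g • Dᶜ} with hF
  set P : Set (Finset (Set G)) := {J | ∀ t : G, ¬ IsOfFinOrder t → ∃ C ∈ F J, Spl t C} with hP
  have hPS : S ∈ P := by
    intro t ht
    obtain ⟨C, hC, hs⟩ := h.comp t ht
    obtain ⟨g, D, hD, e⟩ := hS C hC
    exact ⟨C, ⟨hC, g, D, hD, Or.inl e⟩, hs⟩
  obtain ⟨J, hJ, hmin⟩ := WellFounded.has_min (measure (Finset.card (α := Set G))).wf P ⟨S, hPS⟩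
  refine ⟨F J, ?_, ?_⟩
  · refine ⟨fun C hC => h.ne C hC.1, ?_, ?_, fun C hC => h.cut C hC.1, fun C hC D hD => h.cross C hC.1 D hD.1,
      fun x y => (h.sep x y).subset fun C hC => ⟨hC.1.1, hC.2⟩, fun C hC => h.stab C hC.1,
      ⟨S, fun C hC => hS C hC.1⟩, hJ⟩
    · rintro C ⟨hC, g, D, hD, e⟩
      refine ⟨h.compl C hC, g, D, hD, ?_⟩
      rcases e with rfl | rfl
      · right; rw [Set.smul_set_compl]
      · left; rw [Set.smul_set_compl, _root_.compl_compl]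
    · rintro C ⟨hC, g, D, hD, e⟩ g'
      refine ⟨h.smul C hC g', g' * g, D, hD, ?_⟩
      rcases e with rfl | rfl
      · left; rw [mul_smul]
      · right; rw [mul_smul]
  · rintro A ⟨hA, g, D, hD, e⟩
    have hn : J.erase D ∉ P := fun hp => hmin _ hp (Finset.card_erase_lt_of_mem hD)
    simp only [hP, Set.mem_setOf_eq] at hn
    push Not at hn
    obtain ⟨t, ht, hn⟩ := hn
    refine ⟨t, ht, ?_⟩
    rintro B ⟨hB, g', D', hD', e'⟩ hs
    have hDD : D' = D := by
      by_contra hne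
      exact hn B ⟨hB, g', D', Finset.mem_erase.2 ⟨hne, hD'⟩, e'⟩ hs
    subst hDD
    refine ⟨g' * g⁻¹, ?_⟩
    rcases e with rfl | rfl <;> rcases e' with rfl | rfl <;>
      simp [Set.smul_set_compl, smul_smul]

lemma Nest.lt_of_spl {𝓔 : Set (Set G)} (hE : Nest 𝓔) {h : G} (hh : ¬ IsOfFinOrder h) {C : Set G} (hC : C ∈ 𝓔)
    (hs : Spl h C) : ∃ D ∈ 𝓔, h • D ⊂ D := by
  wlog h1 : En h C generalizing C
  · have cC := hE.cut C hC
    exact this (hE.compl C hC) (spl_compl' hh cC hs) ((en_compl hh cC).2 h1)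
  have h2 : ¬ En h⁻¹ C := by unfold Spl at hs; tauto
  have cC := hE.cut C hC
  have e1 : En h (h • C) := by
    have := (en_conj hh cC h).2 h1
    rwa [mul_inv_cancel_right] at this
  have e2 : ¬ En h⁻¹ (h • C) := by
    intro h3
    have := en_conj (fin_inv hh) cC h
    rw [mul_inv_cancel, one_mul] at this
    exact h2 (this.1 h3)
  have hne : h • C ≠ C := by
    intro e
    have : ∀ n : ℕ, h ^ n • C = C := by
      intro n
      induction n with
      | zero => simp
      | succ n ih => rw [pow_succ, mul_smul, e, ih]
    obtain ⟨n, hn⟩ := (ev_notin hh (hE.stab C hC)).exists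
    exact hn (this n)
  rcases not_cross.1 (hE.cross (h • C) (hE.smul C hC h) C hC) with h3 | h3 | h3 | h3
  · exact ⟨C, hC, lt_of_le_of_ne h3 hne⟩
  · exfalso
    have hinv : h⁻¹ • C ⊆ C := by
      have := Set.smul_set_mono (a := h⁻¹) h3
      rwa [inv_smul_smul] at this
    have hdec : ∀ n : ℕ, ∀ x, x ∈ C → h⁻¹ ^ n * x ∈ C := by
      intro n
      induction n with
      | zero => intro x hx; simpa using hx
      | succ n ih =>
        intro x hx
        rw [pow_succ', mul_assoc]
        exact hinv (Set.smul_mem_smul_set (ih x hx))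
    obtain ⟨x, hx⟩ := hE.ne C hC
    apply h2
    rw [← en_right (fin_inv hh) cC x]
    exact Filter.Eventually.of_forall fun n => hdec n x hx
  · exact absurd (e1.mono h3) h1.compl
  · refine absurd (En.mono ((en_compl (fin_inv hh) cC).2 h2) (Set.compl_subset_comm.1 h3)) e2

/-- `C` is inverted. -/
def Inv (C : Set G) : Prop := ∃ g : G, g • C = Cᶜ

lemma Inv.compl {C : Set G} (h : Inv C) : Inv Cᶜ := by
  obtain ⟨g, hg⟩ := h
  exact ⟨g, by rw [Set.smul_set_compl, hg]⟩

lemma inv_compl {C : Set G} : Inv Cᶜ ↔ Inv C :=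
  ⟨fun h => by have := h.compl; rwa [_root_.compl_compl] at this, Inv.compl⟩

lemma Inv.smul {C : Set G} (h : Inv C) (x : G) : Inv (x • C) := by
  obtain ⟨g, hg⟩ := h
  refine ⟨x * g * x⁻¹, ?_⟩
  rw [smul_smul, inv_mul_cancel_right, mul_smul, hg, Set.smul_set_compl]

lemma inv_smul_iff {C : Set G} (x : G) : Inv (x • C) ↔ Inv C :=
  ⟨fun h => by have := h.smul x⁻¹; rwa [inv_smul_smul] at this, fun h => h.smul x⟩

/-- Edges after subdivision of the inverted ones. -/
@[ext] structure Edg (𝓔 : Set (Set G)) where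
  C : Set G
  b : Bool
  mem : C ∈ 𝓔
  inv : b = true → Inv C

instance (𝓔 : Set (Set G)) : PartialOrder (Edg 𝓔) where
  le p q := p.C ⊂ q.C ∨ (p.C = q.C ∧ p.b ≤ q.b)
  le_refl p := Or.inr ⟨rfl, le_rfl⟩
  le_trans p q r := by
    rintro (h1 | ⟨h1, h1'⟩) (h2 | ⟨h2, h2'⟩)
    · exact Or.inl (h1.trans h2)
    · exact Or.inl (h2 ▸ h1)
    · exact Or.inl (h1 ▸ h2)
    · exact Or.inr ⟨h1.trans h2, h1'.trans h2'⟩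
  le_antisymm p q := by
    rintro (h1 | ⟨h1, h1'⟩) (h2 | ⟨h2, h2'⟩)
    · exact absurd h1 (lt_asymm h2)
    · exact absurd h2 h1.ne'
    · exact absurd h1 h2.ne'
    · exact Edg.ext h1 (le_antisymm h1' h2')

lemma Edg.le_def {𝓔 : Set (Set G)} {p q : Edg 𝓔} : p ≤ q ↔ p.C ⊂ q.C ∨ (p.C = q.C ∧ p.b ≤ q.b) := Iff.rfl

open Classical in
theorem Nest.poc {𝓔 : Set (Set G)} (hE : Nest 𝓔)
    (hm : ∀ A ∈ 𝓔, ∃ t : G, ¬ IsOfFinOrder t ∧ ∀ B ∈ 𝓔, Spl t B → ∃ g : G, B = g • A ∨ B = g • Aᶜ)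
    (htf : ∃ H : Subgroup G, H.FiniteIndex ∧ ∀ h ∈ H, h ≠ 1 → ¬ IsOfFinOrder h) :
    ∃ (_ : MulAction G (Edg 𝓔)) (T : Poc G (Edg 𝓔)), T.Good := by
  letI act : MulAction G (Edg 𝓔) :=
    { smul := fun g p => ⟨g • p.C, p.b, hE.smul _ p.mem g, fun h => (p.inv h).smul g⟩
      one_smul := fun p => Edg.ext (one_smul G p.C) rfl
      mul_smul := fun a b p => Edg.ext (mul_smul a b p.C) rfl }
  have sC : ∀ (g : G) (p : Edg 𝓔), (g • p).C = g • p.C := fun _ _ => rfl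
  have sb : ∀ (g : G) (p : Edg 𝓔), (g • p).b = p.b := fun _ _ => rfl
  have hnu : ∀ C ∈ 𝓔, C ≠ Set.univ := by
    rintro C hC rfl
    obtain ⟨x, hx⟩ := hE.ne _ (hE.compl _ hC)
    exact hx trivial
  let cf : Edg 𝓔 → Edg 𝓔 := fun p => ⟨p.Cᶜ, if Inv p.C then !p.b else false, hE.compl _ p.mem, by
    intro h
    by_cases hi : Inv p.C
    · exact hi.compl
    · simp [hi] at h⟩
  have cC : ∀ p, (cf p).C = p.Cᶜ := fun _ => rfl
  have cb : ∀ p, (cf p).b = if Inv p.C then !p.b else false := fun _ => rfl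
  have fb : ∀ p : Edg 𝓔, ¬ Inv p.C → p.b = false := by
    intro p hp
    by_contra h
    exact hp (p.inv (by simpa using h))
  have hcc : ∀ p, cf (cf p) = p := by
    intro p
    apply Edg.ext
    · rw [cC, cC, _root_.compl_compl]
    · rw [cb, cb, cC, inv_compl]
      by_cases hi : Inv p.C
      · simp [hi]
      · simp [hi, fb p hi]
  have hanti : ∀ {p q : Edg 𝓔}, p ≤ q → cf q ≤ cf p := by
    intro p q h
    rw [Edg.le_def] at h ⊢
    rcases h with h | ⟨h, h'⟩
    · left
      exact compl_lt_compl_iff_lt.2 h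
    · right
      rw [cC, cC, cb, cb, h]
      refine ⟨rfl, ?_⟩
      by_cases hi : Inv q.C
      · simp only [hi, if_true]
        revert h'
        cases p.b <;> cases q.b <;> decide
      · simp [hi]
  have htot : ∀ p q : Edg 𝓔, p.C ⊆ q.C → p ≤ q ∨ q ≤ p := by
    intro p q h
    rcases eq_or_lt_of_le (α := Set G) h with h | h
    · rcases le_total p.b q.b with h' | h'
      · exact Or.inl (Or.inr ⟨h, h'⟩)
      · exact Or.inr (Or.inr ⟨h.symm, h'⟩)
    · exact Or.inl (Or.inl h)
  have hlt : ∀ (g : G) (p : Edg 𝓔), g • p < p ↔ g • p.C ⊂ p.C := by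
    intro g p
    rw [lt_iff_le_and_ne, Edg.le_def, sC, sb]
    constructor
    · rintro ⟨h | h, h'⟩
      · exact h
      · exact absurd (Edg.ext h.1 (sb g p)) h'
    · intro h
      refine ⟨Or.inl h, fun e => ?_⟩
      rw [← sC, e] at h
      exact lt_irrefl _ h
  have hlt' : ∀ (g : G) (p : Edg 𝓔), p < g • p ↔ p.C ⊂ g • p.C := by
    intro g p
    rw [lt_iff_le_and_ne, Edg.le_def, sC, sb]
    constructor
    · rintro ⟨h | h, h'⟩
      · exact h
      · exact absurd (Edg.ext h.1 (sb g p).symm) h'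
    · intro h
      refine ⟨Or.inl h, fun e => ?_⟩
      rw [← sC, ← e] at h
      exact lt_irrefl _ h
  let T : Poc G (Edg 𝓔) :=
    { c := cf
      cc := hcc
      anti := hanti
      nested := by
        intro p q
        rcases not_cross.1 (hE.cross _ p.mem _ q.mem) with h | h | h | h
        · have := htot p q h; tauto
        · have := htot q p h; tauto
        · rcases htot p (cf q) h with h | h
          · tauto
          · have := hanti h
            rw [hcc] at this
            tauto
        · rcases htot (cf p) q h with h | h
          · tauto
          · have := hanti h
            rw [hcc] at this
            tauto
      nle := by
        intro p h
        have h1 : p.C ⊆ p.Cᶜ := by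
          rcases h with h | h
          · exact h.subset
          · exact h.1.subset
        obtain ⟨x, hx⟩ := hE.ne _ p.mem
        exact h1 hx hx
      fin := by
        intro p q
        obtain ⟨x, hx⟩ := hE.ne _ p.mem
        obtain ⟨y, hy⟩ := hE.ne _ (hE.compl _ q.mem)
        refine (((hE.sep x y).prod (Set.toFinite (Set.univ : Set Bool))).preimage
          (f := fun r : Edg 𝓔 => (r.C, r.b)) ?_).subset ?_
        · intro r _ r' _ e
          simp only [Prod.mk.injEq] at e
          exact Edg.ext e.1 e.2
        · rintro r ⟨h1, h2⟩
          have h1' : p.C ⊆ r.C := by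
            rcases h1 with h | h
            · exact h.subset
            · exact h.1.subset
          have h2' : r.C ⊆ q.C := by
            rcases h2 with h | h
            · exact h.subset
            · exact h.1.subset
          exact ⟨⟨r.mem, h1' hx, fun h => hy (h2' h)⟩, trivial⟩
      mono := by
        intro g p q h
        rcases h with h | ⟨h, h'⟩
        · exact Or.inl ⟨Set.smul_set_mono h.1, fun h2 => h.2 (Set.smul_set_subset_smul_set_iff.1 h2)⟩
        · exact Or.inr ⟨by rw [sC, sC, h], h'⟩
      smul_c := by
        intro g p
        apply Edg.ext
        · rw [sC, cC, cC, sC, Set.smul_set_compl]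
        · rw [sb, cb, cb, sb, sC, inv_smul_iff]
      noinv := by
        intro g p h
        have h1 : g • p.C = p.Cᶜ := congrArg Edg.C h
        have h2 : p.b = (cf p).b := by rw [← h, sb]
        have h3 : Inv p.C := ⟨g, h1⟩
        rw [cb, if_pos h3] at h2
        revert h2
        cases p.b <;> decide }
  refine ⟨act, T, ?_, ?_, ?_, ?_, htf⟩
  · intro p
    refine (hE.stab _ p.mem).subset ?_
    intro g hg
    have hg : g • p = p := hg
    exact congrArg Edg.C hg
  · obtain ⟨S, hS⟩ := hE.orb
    have hfin : {p : Edg 𝓔 | p.C ∈ S}.Finite := by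
      refine ((S.finite_toSet.prod (Set.toFinite (Set.univ : Set Bool))).preimage
          (f := fun r : Edg 𝓔 => (r.C, r.b)) ?_).subset ?_
      · intro r _ r' _ e
        simp only [Prod.mk.injEq] at e
        exact Edg.ext e.1 e.2
      · intro r hr
        exact ⟨hr, trivial⟩
    refine ⟨hfin.toFinset, fun p => ?_⟩
    obtain ⟨g, D, hD, e⟩ := hS _ p.mem
    refine ⟨g, g⁻¹ • p, ?_, (smul_inv_smul g p).symm⟩
    rw [Set.Finite.mem_toFinset]
    change g⁻¹ • p.C ∈ S
    rw [e, inv_smul_smul]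
    exact hD
  · intro h hh
    obtain ⟨C, hC, hs⟩ := hE.comp h hh
    obtain ⟨D, hD, hs⟩ := hE.lt_of_spl hh hC hs
    refine ⟨⟨D, false, hD, by simp⟩, 1, le_rfl, ?_⟩
    rw [pow_one, hlt]
    exact hs
  · intro p
    obtain ⟨t, ht, htm⟩ := hm _ p.mem
    obtain ⟨C, hC, hs⟩ := hE.comp t ht
    obtain ⟨D, hD, hs⟩ := hE.lt_of_spl ht hC hs
    refine ⟨t, ⟨D, false, hD, by simp⟩, 1, le_rfl, ?_, ?_⟩
    · rw [pow_one, hlt]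
      exact hs
    · rintro q ⟨N, hN, hq⟩
      rw [hlt, hlt'] at hq
      have cq := hE.cut _ q.mem
      have hsp : Spl t q.C := by
        rw [← spl_pow ht cq hN]
        rcases hq with hq | hq
        · exact spl_of_lt (fin_pow hN ht) cq (hE.ne _ q.mem) (hnu _ q.mem) hq.subset
        · rw [← spl_inv]
          refine spl_of_lt (fin_inv (fin_pow hN ht)) cq (hE.ne _ q.mem) (hnu _ q.mem) ?_
          have := Set.smul_set_mono (a := (t ^ N)⁻¹) hq.subset
          rwa [inv_smul_smul] at this
      obtain ⟨g, hg⟩ := htm _ q.mem hsp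
      by_cases hi : Inv p.C
      · have hi' := hi
        obtain ⟨k, hk⟩ := hi'
        have hk' : k⁻¹ • p.Cᶜ = p.C := by rw [← hk, inv_smul_smul]
        have hcpb : (cf p).b = !p.b := by rw [cb, if_pos hi]
        by_cases hb : q.b = p.b
        · rcases hg with hg | hg
          · exact ⟨g, Or.inl (Edg.ext hg hb)⟩
          · exact ⟨g * k, Or.inl (Edg.ext (by rw [sC, mul_smul, hk, hg]) hb)⟩
        · have hb' : q.b = !p.b := by
            revert hb
            cases q.b <;> cases p.b <;> decide
          rcases hg with hg | hg
          · exact ⟨g * k⁻¹, Or.inr (Edg.ext (by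
              rw [sC]; change q.C = (g * k⁻¹) • p.Cᶜ; rw [mul_smul, hk', hg]) (by rw [sb]; exact hb'.trans hcpb.symm))⟩
          · exact ⟨g, Or.inr (Edg.ext hg (by rw [sb]; exact hb'.trans hcpb.symm))⟩
      · have hiq : ¬ Inv q.C := by
          rcases hg with hg | hg
          · rwa [hg, inv_smul_iff]
          · rwa [hg, inv_smul_iff, inv_compl]
        rcases hg with hg | hg
        · exact ⟨g, Or.inl (Edg.ext hg (by rw [sb, fb p hi, fb q hiq]))⟩
        · exact ⟨g, Or.inr (Edg.ext hg (by
            rw [sb, fb q hiq]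
            change false = (cf p).b
            rw [cb, if_neg hi]))⟩

end Cut

end

section

open Pointwise

namespace Cut

section free
variable {X : Type*} [DecidableEq X]

/-- Elements of the free group whose inverse ends with a given letter. -/
def lastCut (l : X × Bool) : Set (FreeGroup X) := {w | (w⁻¹).toWord.getLast? = some l}

lemma getLast_reduce_cons (x : X × Bool) (M : List (X × Bool)) (hM : FreeGroup.reduce M = M)
    (h : 1 < M.length) : (FreeGroup.reduce (x :: M)).getLast? = M.getLast? := by
  rw [FreeGroup.reduce.cons, hM]
  match M, h with
  | [a], h => simp at h
  | a :: b :: N, _ =>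
    simp only
    split <;> simp [List.getLast?_cons_cons]

lemma isCut_lastCut [Finite X] (l : X × Bool) : IsCut (lastCut l) := by
  refine isCut_of_closure (FreeGroup.closure_range_of X) ?_
  rintro _ ⟨x, rfl⟩
  have hf : {L : List (X × Bool) | L.length ≤ 1}.Finite := List.finite_length_le _ _
  refine (hf.image (fun L => (FreeGroup.mk L)⁻¹)).subset ?_
  intro w hw
  refine ⟨(w⁻¹).toWord, ?_, by simp [FreeGroup.mk_toWord]⟩
  by_contra hlt
  simp only [Set.mem_setOf_eq, not_le] at hlt
  apply hw
  have : ((w * FreeGroup.of x)⁻¹).toWord = FreeGroup.reduce ((x, false) :: (w⁻¹).toWord) := by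
    rw [mul_inv_rev, FreeGroup.toWord_mul]
    rfl
  unfold lastCut
  rw [Set.mem_setOf_eq, Set.mem_setOf_eq, this,
    getLast_reduce_cons _ _ (FreeGroup.reduce_toWord _) hlt]

lemma spl_lastCut (f : FreeGroup X) (hf : f ≠ 1) :
    ∃ (u c : FreeGroup X) (l : X × Bool), f = u * c * u⁻¹ ∧ Spl c (lastCut l) := by
  set L := FreeGroup.reduceCyclically f.toWord with hL
  have hcr : FreeGroup.IsCyclicallyReduced L :=
    FreeGroup.reduceCyclically.isCyclicallyReduced FreeGroup.isReduced_toWord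
  have hcj := FreeGroup.reduceCyclically.conj_conjugator_reduceCyclically f.toWord
  have hfe : f = FreeGroup.mk (FreeGroup.reduceCyclically.conjugator f.toWord) * FreeGroup.mk L *
      (FreeGroup.mk (FreeGroup.reduceCyclically.conjugator f.toWord))⁻¹ := by
    rw [FreeGroup.inv_mk, FreeGroup.mul_mk, FreeGroup.mul_mk, hcj, FreeGroup.mk_toWord]
  have hne : L ≠ [] := by
    intro h
    rw [h] at hfe
    exact hf (hfe.trans (by rw [← FreeGroup.one_eq_mk, mul_one, mul_inv_cancel]))
  have hw : ∀ n : ℕ, ((FreeGroup.mk L) ^ n).toWord = (List.replicate n L).flatten := by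
    intro n
    rw [FreeGroup.pow_mk, FreeGroup.toWord_mk]
    exact FreeGroup.isReduced_iff_reduce_eq.1 (hcr.flatten_replicate n).isReduced
  refine ⟨_, FreeGroup.mk L, L.getLast hne, hfe, ?_⟩
  intro hiff
  have h1 : En (FreeGroup.mk L)⁻¹ (lastCut (L.getLast hne)) := by
    refine Filter.eventually_atTop.2 ⟨1, fun n hn => ?_⟩
    unfold lastCut
    rw [Set.mem_setOf_eq, inv_pow, inv_inv, hw, List.getLast?_flatten_replicate (by omega),
      List.getLast?_eq_some_getLast hne]
  obtain ⟨n, hn, hn1⟩ := ((hiff.2 h1).and (Filter.eventually_ge_atTop 1)).exists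
  unfold lastCut at hn
  rw [Set.mem_setOf_eq, FreeGroup.toWord_inv, hw, FreeGroup.invRev, List.getLast?_reverse,
    List.head?_map, List.head?_flatten_replicate (by omega), List.head?_eq_some_head hne] at hn
  simp only [Option.map_some, Option.some.injEq] at hn
  have h2 := hcr.2 (L.getLast hne) (by simp [List.getLast?_eq_some_getLast hne]) (L.head hne)
    (by simp [List.head?_eq_some_head hne])
  rw [← hn] at h2
  simp at h2

lemma lift_eq_one {K : Type*} [Group K] (f : X → K) (w : FreeGroup X)
    (h : ∀ p ∈ w.toWord, f p.1 = 1) : FreeGroup.lift f w = 1 := by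
  rw [← FreeGroup.mk_toWord (x := w), FreeGroup.lift_mk]
  apply List.prod_eq_one
  intro k hk
  obtain ⟨p, hp, rfl⟩ := List.mem_map.1 hk
  rw [h p hp]
  cases p.2 <;> simp

lemma finite_of_fg (h : Group.FG (FreeGroup X)) : Finite X := by
  obtain ⟨S, hS⟩ := Group.fg_iff.1 h
  obtain ⟨hS, hSf⟩ := hS
  let A : Set X := ⋃ s ∈ S, {x | x ∈ s.toWord.map Prod.fst}
  have hA : A.Finite := hSf.biUnion fun s _ => List.finite_toSet _
  have : A = Set.univ := by
    by_contra hne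
    obtain ⟨x, hx⟩ := (Set.ne_univ_iff_exists_notMem _).1 hne
    classical
    let f : X → Multiplicative ℤ := fun y => if y = x then Multiplicative.ofAdd 1 else 1
    have hle : Subgroup.closure S ≤ (FreeGroup.lift f).ker := by
      rw [Subgroup.closure_le]
      intro s hs
      apply lift_eq_one
      intro p hp
      have : p.1 ≠ x := by
        rintro rfl
        exact hx (Set.mem_biUnion hs (List.mem_map.2 ⟨p, hp, rfl⟩))
      simp [f, this]
    have := hle (hS ▸ Subgroup.mem_top (FreeGroup.of x))
    rw [MonoidHom.mem_ker, FreeGroup.lift_apply_of] at this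
    simp [f] at this
  exact Set.finite_univ_iff.1 (this ▸ hA)

end free

/-- A finite index inclusion with a choice of coset representatives. -/
structure Tr (F G : Type*) [Group F] [Group G] where
  i : F →* G
  inj : Function.Injective i
  r : G → F
  q : G → G
  qfin : (Set.range q).Finite
  rmul : ∀ f g, r (i f * g) = f * r g
  qmul : ∀ f g, q (i f * g) = q g
  eq : ∀ g, g = i (r g) * q g

lemma exists_tr {F G : Type*} [Group F] [Group G] (H : Subgroup G) (hH : H.FiniteIndex)
    (e : F ≃* H) : ∃ t : Tr F G, ∀ f, t.i f = (e f : G) := by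
  have hfin : Finite (Quotient (QuotientGroup.rightRel H)) :=
    Finite.of_equiv _ (QuotientGroup.quotientRightRelEquivQuotientLeftRel H).symm
  let q : G → G := fun g => (Quotient.mk (QuotientGroup.rightRel H) g).out
  have hq : ∀ g, g * (q g)⁻¹ ∈ H := fun g => by
    have : (QuotientGroup.rightRel H) (q g) g := Quotient.mk_out (s := QuotientGroup.rightRel H) g
    exact QuotientGroup.rightRel_apply.1 this
  have hqm : ∀ (f : F) g, q (e f * g) = q g := by
    intro f g
    have : Quotient.mk (QuotientGroup.rightRel H) ((e f : G) * g) =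
        Quotient.mk (QuotientGroup.rightRel H) g := by
      apply Quotient.sound
      apply QuotientGroup.rightRel_apply.2
      rw [mul_inv_rev, mul_inv_cancel_left]
      exact H.inv_mem (e f).2
    simp only [q, this]
  refine ⟨⟨H.subtype.comp e.toMonoidHom, ?_, fun g => e.symm ⟨_, hq g⟩, q, ?_, ?_, ?_, ?_⟩,
    fun f => rfl⟩
  · exact Subtype.val_injective.comp e.injective
  · exact (Set.finite_range (fun x : Quotient (QuotientGroup.rightRel H) => x.out)).subset
      (Set.range_subset_iff.2 fun g => ⟨_, rfl⟩)
  · intro f g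
    apply e.injective
    apply Subtype.ext
    have := hqm f g
    simp [this, mul_assoc]
  · intro f g
    exact hqm f g
  · intro g
    simp

section tr
variable {F G : Type*} [Group F] [Group G] (t : Tr F G)

lemma Tr.isCut {C : Set F} (hC : IsCut C) : IsCut {g : G | t.r g ∈ C} := by
  intro y
  refine (t.qfin.biUnion (t := fun a => (fun f => t.i f * a) ''
    {f | ¬ (f ∈ C ↔ f * t.r (a * y) ∈ C)}) fun a _ => (hC _).image _).subset ?_
  intro g hg
  refine Set.mem_biUnion ⟨g, rfl⟩ ⟨t.r g, ?_, (t.eq g).symm⟩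
  have : t.r (g * y) = t.r g * t.r (t.q g * y) := by
    conv_lhs => rw [t.eq g, mul_assoc, t.rmul]
  simp only [Set.mem_ofPred_eq] at hg ⊢
  rwa [this] at hg

lemma Tr.en {C : Set F} (hC : IsCut C) {f : F} (hf : ¬ IsOfFinOrder f) :
    En (t.i f) {g : G | t.r g ∈ C} ↔ En f C := by
  rw [← en_right hf hC (t.r 1)]
  unfold En
  apply Filter.eventually_congr
  filter_upwards with n
  rw [← map_pow, ← t.rmul, mul_one]

lemma Tr.spl {C : Set F} (hC : IsCut C) {f : F} (hf : ¬ IsOfFinOrder f) :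
    Spl (t.i f) {g : G | t.r g ∈ C} ↔ Spl f C := by
  unfold Spl
  rw [t.en hC hf, ← map_inv, t.en hC (fin_inv hf)]

end tr

theorem exists_std {X G : Type*} [Group G] [Finite X] (t : Tr (FreeGroup X) G)
    (hpow : ∀ g : G, ∃ k, 1 ≤ k ∧ ∃ f, g ^ k = t.i f)
    {ι : Type*} [Finite ι] (s : ι → G) (hs : Subgroup.closure (Set.range s) = ⊤) :
    ∃ M, Std s M := by
  classical
  have := Fintype.ofFinite X
  let D : X × Bool → Set G := fun l => {g : G | t.r g ∈ lastCut l}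
  refine ⟨∑ l, wt s (D l), hs, ?_⟩
  intro h hh
  obtain ⟨k, hk, f, hf⟩ := hpow h
  have hfi : ¬ IsOfFinOrder f := by
    rw [← t.inj.isOfFinOrder_iff (f := t.i), ← hf]
    exact fin_pow hk hh
  obtain ⟨u, c, l, hfe, hspl⟩ := spl_lastCut f (by rintro rfl; exact hfi IsOfFinOrder.one)
  have hc : ¬ IsOfFinOrder c := by
    rw [hfe] at hfi
    rwa [fin_conj] at hfi
  have hic : ¬ IsOfFinOrder (t.i c) := by rwa [t.inj.isOfFinOrder_iff (f := t.i)]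
  have hD : IsCut (D l) := t.isCut (isCut_lastCut l)
  refine ⟨t.i u • D l, hD.smul _, ?_, ?_⟩
  · rw [← spl_pow hh (hD.smul _) hk, hf, hfe, map_mul, map_mul, map_inv, spl_conj hic hD]
    exact (t.spl (isCut_lastCut l) hc).2 hspl
  · rw [wt_smul]
    exact Finset.single_le_sum (f := fun l => wt s (D l)) (fun _ _ => Nat.zero_le _)
      (Finset.mem_univ l)

end Cut

end

section final
open FirstOrder Language

lemma word_term {α : Type*} (w : FreeGroup α) : ∃ t : groupLang.Term α,
    ∀ (K : Type*) [Group K] (x : α → K), t.realize x = FreeGroup.lift x w := by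
  induction w using FreeGroup.induction_on with
  | C1 => exact ⟨FirstOrder.Language.Term.func (L := groupLang) (l := 0) GroupFunc.one ![], fun K _ x => by
      simp only [FirstOrder.Language.Term.realize_func, map_one]; rfl⟩
  | of a => exact ⟨FirstOrder.Language.Term.var a, fun K _ x => by simp⟩
  | inv_of a _ => exact ⟨FirstOrder.Language.Term.func (L := groupLang) (l := 1) GroupFunc.inv ![FirstOrder.Language.Term.var a], fun K _ x => by
      simp only [FirstOrder.Language.Term.realize_func, map_inv, FreeGroup.lift_apply_of]; rfl⟩
  | mul a b ha hb =>
    obtain ⟨s, hs⟩ := ha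
    obtain ⟨t, ht⟩ := hb
    refine ⟨FirstOrder.Language.Term.func (L := groupLang) (l := 2) GroupFunc.mul ![s, t], fun K _ x => ?_⟩
    rw [map_mul, ← hs, ← ht]; rfl

lemma qf_conj {α : Type*} {k : ℕ} (P : List (FreeGroup (α ⊕ Fin k) × Prop)) :
    ∃ φ : groupLang.BoundedFormula α k, φ.IsQF ∧ ∀ (K : Type*) [Group K] (x : α → K) (y : Fin k → K),
      φ.Realize x y ↔ ∀ p ∈ P, (FreeGroup.lift (Sum.elim x y) p.1 = 1 ↔ p.2) := by
  induction P with
  | nil => exact ⟨⊤, FirstOrder.Language.BoundedFormula.IsQF.top, fun K _ x y => by simp⟩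
  | cons p P ih =>
    obtain ⟨φ, hφ, h⟩ := ih
    obtain ⟨t, ht⟩ := word_term p.1
    obtain ⟨t1, ht1⟩ := word_term (1 : FreeGroup (α ⊕ Fin k))
    have hq : (t.bdEqual t1).IsQF := (FirstOrder.Language.BoundedFormula.IsAtomic.equal t t1).isQF
    by_cases hp : p.2
    · refine ⟨t.bdEqual t1 ⊓ φ, hq.inf hφ, fun K _ x y => ?_⟩
      rw [FirstOrder.Language.BoundedFormula.realize_inf, h,
        FirstOrder.Language.BoundedFormula.realize_bdEqual, ht, ht1, List.forall_mem_cons, map_one]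
      simp [hp]
    · refine ⟨(t.bdEqual t1).not ⊓ φ, hq.not.inf hφ, fun K _ x y => ?_⟩
      rw [FirstOrder.Language.BoundedFormula.realize_inf, h,
        FirstOrder.Language.BoundedFormula.realize_not,
        FirstOrder.Language.BoundedFormula.realize_bdEqual, ht, ht1, List.forall_mem_cons, map_one]
      simp [hp]

lemma isEx_exs {α : Type*} {k : ℕ} (φ : groupLang.BoundedFormula α k) (h : IsExistentialQF φ) :
    IsExistentialQF φ.exs := by
  induction k with
  | zero => exact h
  | succ k ih => exact ih _ h.ex

/-- Finite presentability of virtually free groups. -/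
lemma Cut.Tr.fp {X G : Type*} [Group G] [Finite X] (t : Cut.Tr (FreeGroup X) G) (hfg : Group.FG G) :
    ∃ (k : ℕ) (W : G → FreeGroup (Fin k)) (y0 : Fin k → G) (P : Finset (G × G)),
      (∀ g, FreeGroup.lift y0 (W g) = g) ∧
      ∀ y : Fin k → G, (∀ p ∈ P, FreeGroup.lift y (W (p.1 * p.2)) =
        FreeGroup.lift y (W p.1) * FreeGroup.lift y (W p.2)) →
        ∃ φ : G →* G, ∀ g, φ g = FreeGroup.lift y (W g) := by
  classical
  have := t.qfin.to_subtype
  obtain ⟨k, ⟨e⟩⟩ := Finite.exists_equiv_fin (X ⊕ Set.range t.q)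
  obtain ⟨S, hS⟩ := Monoid.fg_def.1 (Group.fg_iff_monoid_fg.1 hfg)
  let W : G → FreeGroup (Fin k) := fun g =>
    FreeGroup.map (fun x => e (Sum.inl x)) (t.r g) * FreeGroup.of (e (Sum.inr ⟨t.q g, g, rfl⟩))
  have hW : ∀ f g, W (t.i f * g) = FreeGroup.map (fun x => e (Sum.inl x)) f * W g := by
    intro f g
    simp only [W]
    simp only [t.rmul, t.qmul, map_mul, mul_assoc]
  refine ⟨k, W, (fun j => Sum.elim (fun x => t.i (FreeGroup.of x)) Subtype.val (e.symm j)),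
    t.qfin.toFinset ×ˢ (insert 1 S), ?_, ?_⟩
  · intro g
    conv_rhs => rw [t.eq g]
    simp only [W, map_mul, FreeGroup.lift_apply_of, Equiv.symm_apply_apply, Sum.elim_inr]
    congr 1
    rw [← MonoidHom.comp_apply]
    congr 1
    ext x
    simp
  · intro y hy
    have key : ∀ g, ∀ s ∈ insert 1 S, FreeGroup.lift y (W (g * s)) =
        FreeGroup.lift y (W g) * FreeGroup.lift y (W s) := by
      intro g s hs
      have h1 := hy (t.q g, s) (by simpa using hs)
      simp only at h1
      conv_lhs => rw [t.eq g, mul_assoc, hW, map_mul, h1, ← mul_assoc, ← map_mul, ← hW, ← t.eq g]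
    have key2 : ∀ w g, FreeGroup.lift y (W (g * w)) =
        FreeGroup.lift y (W g) * FreeGroup.lift y (W w) := by
      intro w
      have hw : w ∈ Submonoid.closure (S : Set G) := by rw [hS]; trivial
      induction hw using Submonoid.closure_induction with
      | mem s hs => exact fun g => key g s (Finset.mem_insert_of_mem hs)
      | one => exact fun g => key g 1 (Finset.mem_insert_self _ _)
      | mul a b _ _ ha hb =>
        intro g
        rw [← mul_assoc, hb, ha, hb, mul_assoc]
    exact ⟨MonoidHom.mk' (fun g => FreeGroup.lift y (W g)) fun a b => key2 b a, fun g => rfl⟩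

theorem homog_aux {X G : Type*} [Group G] [Finite X] (t : Cut.Tr (FreeGroup X) G) (hfg : Group.FG G)
    (F : Finset G) (hF : ∀ φ : G →* G, (∀ f ∈ F, f ≠ 1 → φ f ≠ 1) → Function.Injective φ)
    (n : ℕ) (u v : Fin n → G)
    (htype : ∀ φ : groupLang.Formula (Fin n), IsExistentialQF φ → (φ.Realize u ↔ φ.Realize v)) :
    ∃ φ : G →* G, Function.Injective φ ∧ ∀ i, φ (u i) = v i := by
  classical
  obtain ⟨k, W, y0, P, h0, hP⟩ := t.fp hfg
  let V : G → FreeGroup (Fin n ⊕ Fin k) := fun g => FreeGroup.map Sum.inr (W g)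
  have hV : ∀ (x : Fin n → G) (y : Fin k → G) g,
      FreeGroup.lift (Sum.elim x y) (V g) = FreeGroup.lift y (W g) := by
    intro x y g
    simp only [V]
    rw [← MonoidHom.comp_apply]
    congr 1
    ext x
    simp
  obtain ⟨φ, hφ, hr⟩ := qf_conj (α := Fin n) (k := k)
    (P.toList.map (fun p => ((V (p.1 * p.2))⁻¹ * (V p.1 * V p.2), True)) ++
      (List.finRange n).map (fun i => ((FreeGroup.of (Sum.inl i))⁻¹ * V (u i), True)) ++
      (F.filter (· ≠ 1)).toList.map (fun f => (V f, False)))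
  have hr2 : ∀ (x : Fin n → G) (y : Fin k → G), φ.Realize x y ↔
      ((∀ p ∈ P, FreeGroup.lift y (W (p.1 * p.2)) =
        FreeGroup.lift y (W p.1) * FreeGroup.lift y (W p.2)) ∧
      (∀ i, x i = FreeGroup.lift y (W (u i))) ∧ ∀ f ∈ F, f ≠ 1 → FreeGroup.lift y (W f) ≠ 1) := by
    intro x y
    rw [hr]
    simp only [List.forall_mem_append, List.forall_mem_map, map_mul, map_inv, hV, iff_true,
      iff_false, inv_mul_eq_one, Finset.mem_toList, Finset.mem_filter, List.mem_finRange,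
      FreeGroup.lift_apply_of, Sum.elim_inl, forall_const, and_assoc, and_imp, ne_eq]
  have hu : φ.exs.Realize u := by
    rw [FirstOrder.Language.BoundedFormula.realize_exs]
    refine ⟨y0, (hr2 _ _).2 ⟨?_, ?_, ?_⟩⟩
    · intro p _; simp only [h0]
    · intro i; rw [h0]
    · intro f _ hf; rwa [h0]
  have hv := (htype _ (isEx_exs φ (.of_isQF hφ))).1 hu
  rw [FirstOrder.Language.BoundedFormula.realize_exs] at hv
  obtain ⟨y, hy⟩ := hv
  obtain ⟨h1, h2, h3⟩ := (hr2 _ _).1 hy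
  obtain ⟨ψ, hψ⟩ := hP y h1
  exact ⟨ψ, hF ψ fun f hf hf1 => by rw [hψ]; exact h3 f hf hf1, fun i => by rw [hψ, ← h2]⟩

end final

/-- A finitely generated co-Hopfian virtually free group with finite outer
automorphism group is ∃-homogeneous. -/
theorem coHopfian_outFinite_existHomogeneous
    (G : Type*) [Group G] (hfg : Group.FG G) (hvf : VirtuallyFree G)
    (hco : CoHopfian G) (hout : OutFinite G)
    (n : ℕ) (u v : Fin n → G)
    (htype : ∀ φ : groupLang.Formula (Fin n), IsExistentialQF φ →
      (φ.Realize u ↔ φ.Realize v)) :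
    ∃ σ : G ≃* G, ∀ i, σ (u i) = v i := by
  classical
  obtain ⟨H, hH, ⟨hfree⟩⟩ := hvf
  let e := IsFreeGroup.mulEquiv H
  have hHfg : Group.FG H := by
    have := hfg
    exact Subgroup.fg_of_index_ne_zero H
  have hX : Finite (IsFreeGroup.Generators H) :=
    Cut.finite_of_fg (Group.fg_of_surjective (hG := hHfg) (f := e.symm.toMonoidHom) e.symm.surjective)
  obtain ⟨t, ht⟩ := Cut.exists_tr H hH e
  have hpow : ∀ g : G, ∃ k, 1 ≤ k ∧ ∃ f, g ^ k = t.i f := by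
    intro g
    obtain ⟨k, hk, -, hm⟩ := Subgroup.exists_pow_mem_of_index_ne_zero hH.index_ne_zero g
    exact ⟨k, hk, e.symm ⟨_, hm⟩, by rw [ht]; simp⟩
  have htf : ∃ H : Subgroup G, H.FiniteIndex ∧ ∀ h ∈ H, h ≠ 1 → ¬ IsOfFinOrder h := by
    refine ⟨H, hH, fun h hh h1 => ?_⟩
    have h2 : e.symm ⟨h, hh⟩ ≠ 1 := by
      intro h3
      rw [EmbeddingLike.map_eq_one_iff] at h3
      exact h1 (congrArg Subtype.val h3)
    have h4 : ¬ IsOfFinOrder (e.symm ⟨h, hh⟩) := not_isOfFinOrder_of_isMulTorsionFree h2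
    have h5 : t.i (e.symm ⟨h, hh⟩) = h := by rw [ht]; simp
    rwa [← h5, t.inj.isOfFinOrder_iff (f := t.i)]
  obtain ⟨S, hS, hSf⟩ := Group.fg_iff.1 hfg
  have hfin : Finite S := hSf.to_subtype
  obtain ⟨M, hM⟩ := Cut.exists_std t hpow (fun x : S => (x : G)) (by rw [Subtype.range_coe]; exact hS)
  obtain ⟨E, hE, hm⟩ := hM.nest.minimal
  obtain ⟨_, T, hT⟩ := hE.poc hm htf
  obtain ⟨F, hF⟩ := T.star hT hfg hco (by
    intro σ
    obtain ⟨k, hk, -, g, hg⟩ := Subgroup.exists_pow_mem_of_index_ne_zero hout.index_ne_zero σ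
    exact ⟨k, hk, g, fun x => by rw [← hg]; rfl⟩)
  obtain ⟨φ, hφ, hφu⟩ := homog_aux t hfg F hF n u v htype
  exact ⟨MulEquiv.ofBijective φ ⟨hφ, hco φ hφ⟩, hφu⟩
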